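/- arXiv:1311.3887 — 2 statements merged into one kernel-verified Lean document; each statement's English description precedes it below -/
import Mathlib

section
/- New entropic uncertainty relation: Let ρ_ABC be a density matrix on ℂ^(A×B×C), let {M_x}_{x∈X} and {N_y}_{y∈Y} be POVMs on the A-system, and let c := max_{x,y} ‖ M_x^{1/2} N_y^{1/2} ‖ where ‖·‖ is the operator norm. Define the classical-quantum post-measurement states ρ_XB on ℂ^(X×B) by ρ_XB (x,b)(x',b') = (if x = x' then (tr_{AC}((M_x ⊗ 1_{BC}) ρ_ABC)) b b' else 0), and ρ_YC on ℂ^(Y×C) analogously with N_y and tr_{AB}. Then for all α ∈ (0,2), β ∈ (1/2,∞) with α·β = 1 and α ≠ 1: H_α^↑(X|B)_ρ + H̃_β^↓(Y|C)_ρ ≥ log(1/c), where H_α^↑(X|B)_ρ is the supremum over density matrices σ_B of −D_α(ρ_XB ‖ 1_X ⊗ σ_B) (for α > 1 over σ_B whose kernel is contained in that of tr_X ρ_XB) and H̃_β^↓(Y|C)_ρ := −D̃_β(ρ_YC ‖ 1_Y ⊗ ρ_C) with ρ_C = tr_Y ρ_YC. -/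
open scoped Kronecker ComplexOrder
open Matrix

/-- Real power of a matrix via the functional calculus on the eigenvalues,
with the convention `0 ^ t = 0` (powers taken on the support). -/
noncomputable def matRpow {n : Type*} [Fintype n] [DecidableEq n]
    (A : Matrix n n ℂ) (t : ℝ) : Matrix n n ℂ :=
  if hA : A.IsHermitian then
    (hA.eigenvectorUnitary : Matrix n n ℂ) *
      Matrix.diagonal (fun i =>
        ((if hA.eigenvalues i = 0 then (0 : ℝ) else (hA.eigenvalues i) ^ t : ℝ) : ℂ)) *
      star (hA.eigenvectorUnitary : Matrix n n ℂ)
  else 0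

/-- Matrix logarithm on the support. -/
noncomputable def matLog {n : Type*} [Fintype n] [DecidableEq n]
    (A : Matrix n n ℂ) : Matrix n n ℂ :=
  if hA : A.IsHermitian then
    (hA.eigenvectorUnitary : Matrix n n ℂ) *
      Matrix.diagonal (fun i => ((Real.log (hA.eigenvalues i) : ℝ) : ℂ)) *
      star (hA.eigenvectorUnitary : Matrix n n ℂ)
  else 0

/-- Partial trace over the first tensor factor. -/
noncomputable def trFst {a b : Type*} [Fintype a] (M : Matrix (a × b) (a × b) ℂ) :
    Matrix b b ℂ :=
  Matrix.of fun j j' => ∑ i, M (i, j) (i, j')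

/-- Partial trace over the second tensor factor. -/
noncomputable def trSnd {a b : Type*} [Fintype b] (M : Matrix (a × b) (a × b) ℂ) :
    Matrix a a ℂ :=
  Matrix.of fun i i' => ∑ j, M (i, j) (i', j)

/-- Partial trace over the third factor of a tripartite system. -/
noncomputable def trThird {a b c : Type*} [Fintype c]
    (M : Matrix (a × b × c) (a × b × c) ℂ) : Matrix (a × b) (a × b) ℂ :=
  Matrix.of fun p p' => ∑ k, M (p.1, p.2, k) (p'.1, p'.2, k)

/-- Partial trace over the second factor of a tripartite system. -/
noncomputable def trSecond {a b c : Type*} [Fintype b]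
    (M : Matrix (a × b × c) (a × b × c) ℂ) : Matrix (a × c) (a × c) ℂ :=
  Matrix.of fun p p' => ∑ j, M (p.1, j, p.2) (p'.1, j, p'.2)

/-- Partial trace over the first two factors of a tripartite system. -/
noncomputable def trFstSnd {a b c : Type*} [Fintype a] [Fintype b]
    (M : Matrix (a × b × c) (a × b × c) ℂ) : Matrix c c ℂ :=
  Matrix.of fun k k' => ∑ i, ∑ j, M (i, j, k) (i, j, k')

/-- Partial trace over the first and third factors of a tripartite system. -/
noncomputable def trFstThird {a b c : Type*} [Fintype a] [Fintype c]
    (M : Matrix (a × b × c) (a × b × c) ℂ) : Matrix b b ℂ :=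
  Matrix.of fun j j' => ∑ i, ∑ k, M (i, j, k) (i, j', k)

/-- Quantum Rényi relative entropy `D_α(ρ‖σ)`. -/
noncomputable def renyiDiv {n : Type*} [Fintype n] [DecidableEq n]
    (α : ℝ) (ρ σ : Matrix n n ℂ) : ℝ :=
  (α - 1)⁻¹ * Real.log ((matRpow ρ α * matRpow σ (1 - α)).trace.re)

/-- Sandwiched quantum Rényi divergence `D̃_α(ρ‖σ)`. -/
noncomputable def sandwichedRenyiDiv {n : Type*} [Fintype n] [DecidableEq n]
    (α : ℝ) (ρ σ : Matrix n n ℂ) : ℝ :=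
  (α - 1)⁻¹ * Real.log
    ((matRpow (matRpow σ ((1 - α) / (2 * α)) * ρ * matRpow σ ((1 - α) / (2 * α))) α).trace.re)

/-- Quantum relative entropy `D(ρ‖σ)`. -/
noncomputable def relEntropy {n : Type*} [Fintype n] [DecidableEq n]
    (ρ σ : Matrix n n ℂ) : ℝ :=
  (ρ * (matLog ρ - matLog σ)).trace.re

/-- `H_γ^↑(A|B)_ρ`: supremum over density matrices `σ_B` of `−D_γ(ρ_AB ‖ 1_A ⊗ σ_B)`
(for `γ > 1` over those `σ_B` whose kernel is contained in that of `ρ_B`). -/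
noncomputable def condRenyiUp {a b : Type*} [Fintype a] [DecidableEq a] [Fintype b] [DecidableEq b]
    (gamma : ℝ) (ρ : Matrix (a × b) (a × b) ℂ) : ℝ :=
  sSup {x : ℝ | ∃ σ : Matrix b b ℂ, σ.PosSemidef ∧ σ.trace = 1 ∧
    (1 < gamma → LinearMap.ker σ.mulVecLin ≤ LinearMap.ker (trFst ρ).mulVecLin) ∧
    x = -renyiDiv gamma ρ ((1 : Matrix a a ℂ) ⊗ₖ σ)}

/-! ### Functional calculus helpers -/

/-- Functional calculus of a matrix along its eigenvalues. -/
noncomputable def mfun {n : Type*} [Fintype n] [DecidableEq n]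
    (f : ℝ → ℝ) (A : Matrix n n ℂ) : Matrix n n ℂ :=
  if hA : A.IsHermitian then
    (hA.eigenvectorUnitary : Matrix n n ℂ) *
      Matrix.diagonal (fun i => ((f (hA.eigenvalues i) : ℝ) : ℂ)) *
      star (hA.eigenvectorUnitary : Matrix n n ℂ)
  else 0

/-- Power with the convention `0 ^ t = 0`. -/
noncomputable def fpow (t x : ℝ) : ℝ := if x = 0 then 0 else x ^ t

section FC
variable {n m k : Type*} [Fintype n] [DecidableEq n] [Fintype m] [DecidableEq m]
  [Fintype k] [DecidableEq k]

lemma matRpow_eq (A : Matrix n n ℂ) (t : ℝ) : matRpow A t = mfun (fpow t) A := rfl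

lemma star_eU {A : Matrix n n ℂ} (hA : A.IsHermitian) :
    star (hA.eigenvectorUnitary : Matrix n n ℂ) * (hA.eigenvectorUnitary : Matrix n n ℂ) = 1 :=
  Unitary.coe_star_mul_self _

lemma eU_star {A : Matrix n n ℂ} (hA : A.IsHermitian) :
    (hA.eigenvectorUnitary : Matrix n n ℂ) * star (hA.eigenvectorUnitary : Matrix n n ℂ) = 1 :=
  Unitary.coe_mul_star_self _

lemma eU_spec {A : Matrix n n ℂ} (hA : A.IsHermitian) :
    A = (hA.eigenvectorUnitary : Matrix n n ℂ) *
      Matrix.diagonal (fun i => ((hA.eigenvalues i : ℝ) : ℂ)) *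
      star (hA.eigenvectorUnitary : Matrix n n ℂ) := by
  have := hA.spectral_theorem
  rw [Unitary.conjStarAlgAut_apply] at this
  exact this

lemma mul_eU {A : Matrix n n ℂ} (hA : A.IsHermitian) :
    A * (hA.eigenvectorUnitary : Matrix n n ℂ) = (hA.eigenvectorUnitary : Matrix n n ℂ) *
      Matrix.diagonal (fun i => ((hA.eigenvalues i : ℝ) : ℂ)) := by
  have := congrArg (fun Z => Z * (hA.eigenvectorUnitary : Matrix n n ℂ)) (eU_spec hA)
  rw [this, Matrix.mul_assoc, star_eU, Matrix.mul_one]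

lemma eU_mul {A : Matrix n n ℂ} (hA : A.IsHermitian) :
    star (hA.eigenvectorUnitary : Matrix n n ℂ) * A =
      Matrix.diagonal (fun i => ((hA.eigenvalues i : ℝ) : ℂ)) *
        star (hA.eigenvectorUnitary : Matrix n n ℂ) := by
  have := congrArg (fun Z => star (hA.eigenvectorUnitary : Matrix n n ℂ) * Z) (eU_spec hA)
  rw [this, Matrix.mul_assoc, ← Matrix.mul_assoc (star _), star_eU, Matrix.one_mul]

lemma mfun_of {A : Matrix n n ℂ} (hA : A.IsHermitian) (f : ℝ → ℝ) : mfun f A =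
    (hA.eigenvectorUnitary : Matrix n n ℂ) *
      Matrix.diagonal (fun i => ((f (hA.eigenvalues i) : ℝ) : ℂ)) *
      star (hA.eigenvectorUnitary : Matrix n n ℂ) := by
  simp [mfun, hA]

/-- Master lemma: the functional calculus acts on any family of eigenvectors. -/
lemma mfun_mul_eig {A : Matrix n n ℂ} (hA : A.IsHermitian) (f : ℝ → ℝ) (T : Matrix n k ℂ)
    (d : k → ℝ) (h : A * T = T * Matrix.diagonal (fun i => (d i : ℂ))) :
    mfun f A * T = T * Matrix.diagonal (fun i => (f (d i) : ℂ)) := by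
  rw [mfun_of hA]
  set U := (hA.eigenvectorUnitary : Matrix n n ℂ) with hU
  have h1 : Matrix.diagonal (fun i => ((hA.eigenvalues i : ℝ) : ℂ)) * (star U * T) =
      (star U * T) * Matrix.diagonal (fun i => (d i : ℂ)) := by
    rw [Matrix.mul_assoc, ← h, ← Matrix.mul_assoc, ← Matrix.mul_assoc, eU_mul hA]
  have h3 : Matrix.diagonal (fun i => ((f (hA.eigenvalues i) : ℝ) : ℂ)) * (star U * T) =
      (star U * T) * Matrix.diagonal (fun i => (f (d i) : ℂ)) := by
    ext i j
    have := congrFun (congrFun h1 i) j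
    rw [Matrix.diagonal_mul, Matrix.mul_diagonal] at this ⊢
    by_cases hz : (star U * T) i j = 0
    · simp [hz]
    · have : (hA.eigenvalues i : ℂ) = d j := by
        rw [mul_comm] at this; exact mul_left_cancel₀ hz this
      have : hA.eigenvalues i = d j := by exact_mod_cast this
      rw [this, mul_comm]
  rw [Matrix.mul_assoc, Matrix.mul_assoc, h3, ← Matrix.mul_assoc, ← Matrix.mul_assoc, eU_star hA,
    Matrix.one_mul]

lemma mfun_intertwine {A : Matrix n n ℂ} (hA : A.IsHermitian) {B : Matrix k k ℂ}
    (hB : B.IsHermitian) (f : ℝ → ℝ) (T : Matrix n k ℂ)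
    (h : A * T = T * B) : mfun f A * T = T * mfun f B := by
  have := mfun_mul_eig hA f (T * (hB.eigenvectorUnitary : Matrix k k ℂ)) hB.eigenvalues (by
    rw [← Matrix.mul_assoc, h, Matrix.mul_assoc, mul_eU, ← Matrix.mul_assoc])
  rw [mfun_of hB, ← Matrix.mul_assoc, ← Matrix.mul_assoc, ← this, Matrix.mul_assoc,
    Matrix.mul_assoc, eU_star, Matrix.mul_one]

lemma mfun_herm (f : ℝ → ℝ) (A : Matrix n n ℂ) : (mfun f A).IsHermitian := by
  by_cases hA : A.IsHermitian
  · rw [mfun_of hA]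
    unfold Matrix.IsHermitian
    simp only [Matrix.star_eq_conjTranspose, Matrix.conjTranspose_mul, Matrix.conjTranspose_conjTranspose,
      Matrix.diagonal_conjTranspose, Matrix.mul_assoc]
    congr 3
    ext i
    simp
  · simp [mfun, hA]

lemma mfun_psd {f : ℝ → ℝ} {A : Matrix n n ℂ} (hA : A.IsHermitian)
    (h : ∀ i, 0 ≤ f (hA.eigenvalues i)) : (mfun f A).PosSemidef := by
  rw [mfun_of hA, Matrix.star_eq_conjTranspose]
  apply Matrix.PosSemidef.mul_mul_conjTranspose_same
  apply Matrix.PosSemidef.diagonal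
  intro i
  simpa using h i

lemma mfun_psd' {f : ℝ → ℝ} {A : Matrix n n ℂ} (hA : A.PosSemidef)
    (h : ∀ x, 0 ≤ x → 0 ≤ f x) : (mfun f A).PosSemidef :=
  mfun_psd hA.1 (fun i => h _ (hA.eigenvalues_nonneg i))

lemma mfun_mul {A : Matrix n n ℂ} (hA : A.IsHermitian) (f g : ℝ → ℝ) :
    mfun f A * mfun g A = mfun (fun x => f x * g x) A := by
  rw [mfun_of hA g, mfun_of hA (fun x => f x * g x), ← Matrix.mul_assoc, ← Matrix.mul_assoc,
    mfun_mul_eig hA f _ _ (mul_eU hA)]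
  rw [Matrix.mul_assoc (hA.eigenvectorUnitary : Matrix n n ℂ), Matrix.diagonal_mul_diagonal]
  simp

lemma mfun_id {A : Matrix n n ℂ} (hA : A.IsHermitian) : mfun (fun x => x) A = A := by
  rw [mfun_of hA]; exact (eU_spec hA).symm

lemma mfun_congr {A : Matrix n n ℂ} (hA : A.IsHermitian) {f g : ℝ → ℝ}
    (h : ∀ i, f (hA.eigenvalues i) = g (hA.eigenvalues i)) : mfun f A = mfun g A := by
  rw [mfun_of hA, mfun_of hA]; simp [h]

lemma mfun_congr' {A : Matrix n n ℂ} (hA : A.PosSemidef) {f g : ℝ → ℝ}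
    (h : ∀ x, 0 ≤ x → f x = g x) : mfun f A = mfun g A :=
  mfun_congr hA.1 (fun i => h _ (hA.eigenvalues_nonneg i))

lemma mfun_comp {A : Matrix n n ℂ} (hA : A.IsHermitian) (f g : ℝ → ℝ) :
    mfun g (mfun f A) = mfun (fun x => g (f x)) A := by
  have := mfun_mul_eig (mfun_herm f A) g (hA.eigenvectorUnitary : Matrix n n ℂ)
    (fun i => f (hA.eigenvalues i)) (mfun_mul_eig hA f _ _ (mul_eU hA))
  rw [mfun_of hA (fun x => g (f x)), ← this, Matrix.mul_assoc, eU_star, Matrix.mul_one]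

lemma fpow_nonneg {t x : ℝ} (hx : 0 ≤ x) : 0 ≤ fpow t x := by
  unfold fpow; split_ifs <;> positivity

lemma fpow_pos {t x : ℝ} (hx : 0 < x) : 0 < fpow t x := by
  unfold fpow; rw [if_neg hx.ne']; positivity

@[simp] lemma fpow_zero' (t : ℝ) : fpow t 0 = 0 := by simp [fpow]

lemma fpow_add {s t x : ℝ} (hx : 0 ≤ x) : fpow s x * fpow t x = fpow (s + t) x := by
  rcases hx.eq_or_lt with rfl | h
  · simp
  · simp [fpow, h.ne', Real.rpow_add h]

lemma fpow_fpow {s t x : ℝ} (hx : 0 ≤ x) : fpow s (fpow t x) = fpow (t * s) x := by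
  rcases hx.eq_or_lt with rfl | h
  · simp
  · have := (Real.rpow_pos_of_pos h t).ne'
    simp [fpow, h.ne', this, Real.rpow_mul hx]

lemma fpow_one {x : ℝ} : fpow 1 x = x := by
  unfold fpow; split_ifs with h <;> simp [h]

lemma fpow_mul' {t x y : ℝ} (hx : 0 ≤ x) (hy : 0 ≤ y) : fpow t (x * y) = fpow t x * fpow t y := by
  rcases hx.eq_or_lt with rfl | h
  · simp
  rcases hy.eq_or_lt with rfl | h'
  · simp
  simp [fpow, h.ne', h'.ne', Real.mul_rpow hx hy]

lemma mfun_one_pow {A : Matrix n n ℂ} (hA : A.IsHermitian) : mfun (fpow 1) A = A := by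
  conv_rhs => rw [← mfun_id hA]
  congr 1; ext x; exact fpow_one

lemma mfun_pow_mul {A : Matrix n n ℂ} (hA : A.PosSemidef) (s t : ℝ) :
    mfun (fpow s) A * mfun (fpow t) A = mfun (fpow (s + t)) A := by
  rw [mfun_mul hA.1]; exact mfun_congr' hA fun x hx => fpow_add hx

/-- trace of `f` of `T Tᴴ` and `Tᴴ T` agree when `f 0 = 0`. -/
lemma trace_mfun_swap (T : Matrix n k ℂ) {f : ℝ → ℝ} (f0 : f 0 = 0) :
    (mfun f (T * Tᴴ)).trace = (mfun f (Tᴴ * T)).trace := by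
  have h1 := Matrix.isHermitian_mul_conjTranspose_self T
  have h2 := Matrix.isHermitian_conjTranspose_mul_self T
  have key : ∀ x, f x = f x / x * x := by
    intro x; by_cases hx : x = 0
    · simp [hx, f0]
    · field_simp
  have e1 : mfun f (T * Tᴴ) = mfun (fun x => f x / x) (T * Tᴴ) * (T * Tᴴ) := by
    conv_rhs => rw [← mfun_id h1, mfun_comp h1, mfun_mul h1]
    congr 1; ext x; exact key x
  have e2 : mfun f (Tᴴ * T) = mfun (fun x => f x / x) (Tᴴ * T) * (Tᴴ * T) := by
    conv_rhs => rw [← mfun_id h2, mfun_comp h2, mfun_mul h2]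
    congr 1; ext x; exact key x
  rw [e1, e2, ← Matrix.mul_assoc, mfun_intertwine h1 h2 _ T (Matrix.mul_assoc _ _ _),
    Matrix.mul_assoc, Matrix.trace_mul_comm, Matrix.mul_assoc]

end FC
/-! ### Scalar integral representations -/

section Scalar
open MeasureTheory Set Real

lemma termGt {r p q w : ℝ} (hr : r ∈ Ioo (0:ℝ) 1) (hp : 0 ≤ p) (hq : 0 ≤ q)
    (h : q = 0 → p = 0 ∨ w = 0) :
    IntegrableOn (fun t : ℝ => t ^ (r - 1) * (p ^ 2 / (p + t * q) * w)) (Ioi 0) ∧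
    ∫ t in Ioi (0:ℝ), t ^ (r - 1) * (p ^ 2 / (p + t * q) * w) =
      (∫ t in Ioi (0:ℝ), rpowIntegrand₀₁ r t 1) * (fpow (1 + r) p * fpow (-r) q * w) := by
  by_cases hw : w = 0
  · subst hw; simp
  rcases hp.eq_or_lt with rfl | hp'
  · simp
  have hq' : 0 < q := by
    rcases hq.eq_or_lt with h0 | h0
    · rcases h h0.symm with h1 | h1
      · exact absurd h1 hp'.ne'
      · exact absurd h1 hw
    · exact h0
  have hx : 0 ≤ p / q := by positivity
  have heq : EqOn (fun t : ℝ => t ^ (r - 1) * (p ^ 2 / (p + t * q) * w))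
      (fun t => (p * w) * rpowIntegrand₀₁ r t (p / q)) (Ioi 0) := by
    intro t ht
    have ht : 0 < t := ht
    simp only
    rw [rpowIntegrand₀₁_eq_pow_div hr ht.le hx]
    field_simp
    ring
  constructor
  · rw [integrableOn_congr_fun heq measurableSet_Ioi]
    exact (integrableOn_rpowIntegrand₀₁_Ioi hr hx).const_mul _
  · rw [setIntegral_congr_fun measurableSet_Ioi heq, integral_const_mul,
      integral_rpowIntegrand₀₁_eq_rpow_mul_const hr hx]
    simp only [fpow, hp'.ne', hq'.ne', if_false]
    rw [Real.rpow_add hp', Real.rpow_one, Real.rpow_neg hq, Real.div_rpow hp hq]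
    field_simp

lemma termLt {a p q w : ℝ} (ha : a ∈ Ioo (0:ℝ) 1) (hp : 0 ≤ p) (hq : 0 ≤ q) :
    IntegrableOn (fun t : ℝ => t ^ (a - 2) * ((p - p ^ 2 / (p + t * q)) * w)) (Ioi 0) ∧
    ∫ t in Ioi (0:ℝ), t ^ (a - 2) * ((p - p ^ 2 / (p + t * q)) * w) =
      (∫ t in Ioi (0:ℝ), rpowIntegrand₀₁ a t 1) * (fpow a p * fpow (1 - a) q * w) := by
  rcases hp.eq_or_lt with rfl | hp'
  · simp
  rcases hq.eq_or_lt with rfl | hq'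
  · have : p ^ 2 / p = p := by field_simp
    simp [this]
  have hx : 0 ≤ p / q := by positivity
  have heq : EqOn (fun t : ℝ => t ^ (a - 2) * ((p - p ^ 2 / (p + t * q)) * w))
      (fun t => (q * w) * rpowIntegrand₀₁ a t (p / q)) (Ioi 0) := by
    intro t ht
    have ht : 0 < t := ht
    simp only
    rw [rpowIntegrand₀₁_eq_pow_div ha ht.le hx]
    have : t ^ (a - 1) = t ^ (a - 2) * t := by
      rw [← Real.rpow_add_one ht.ne']; congr 1; ring
    rw [this]
    field_simp
    ring
  constructor
  · rw [integrableOn_congr_fun heq measurableSet_Ioi]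
    exact (integrableOn_rpowIntegrand₀₁_Ioi ha hx).const_mul _
  · rw [setIntegral_congr_fun measurableSet_Ioi heq, integral_const_mul,
      integral_rpowIntegrand₀₁_eq_rpow_mul_const ha hx]
    simp only [fpow, hp'.ne', hq'.ne', if_false]
    rw [Real.rpow_sub hq', Real.rpow_one, Real.div_rpow hp hq]
    field_simp

lemma scalarGt {ι κ : Type*} [Fintype ι] [Fintype κ] {r : ℝ} (hr : r ∈ Ioo (0:ℝ) 1)
    (p q w : ι → ℝ) (p' q' w' : κ → ℝ) (hp : ∀ i, 0 ≤ p i) (hq : ∀ i, 0 ≤ q i)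
    (hp' : ∀ i, 0 ≤ p' i) (hq' : ∀ i, 0 ≤ q' i)
    (h : ∀ i, q i = 0 → p i = 0 ∨ w i = 0) (h' : ∀ i, q' i = 0 → p' i = 0 ∨ w' i = 0)
    (hle : ∀ t : ℝ, 0 < t → ∑ i, p' i ^ 2 / (p' i + t * q' i) * w' i ≤
      ∑ i, p i ^ 2 / (p i + t * q i) * w i) :
    ∑ i, fpow (1 + r) (p' i) * fpow (-r) (q' i) * w' i ≤
      ∑ i, fpow (1 + r) (p i) * fpow (-r) (q i) * w i := by
  refine le_of_mul_le_mul_left ?_ (integral_rpowIntegrand₀₁_one_pos hr)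
  rw [Finset.mul_sum, Finset.mul_sum]
  have e := fun i => (termGt hr (hp i) (hq i) (h i))
  have e' := fun i => (termGt hr (hp' i) (hq' i) (h' i))
  rw [← Finset.sum_congr rfl (fun i _ => (e i).2), ← Finset.sum_congr rfl (fun i _ => (e' i).2),
    ← integral_finsetSum _ (fun i _ => (e i).1), ← integral_finsetSum _ (fun i _ => (e' i).1)]
  refine setIntegral_mono_on (integrable_finsetSum _ (fun i _ => (e' i).1))
    (integrable_finsetSum _ (fun i _ => (e i).1)) measurableSet_Ioi ?_
  intro t ht
  rw [← Finset.mul_sum, ← Finset.mul_sum]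
  exact mul_le_mul_of_nonneg_left (hle t ht) (Real.rpow_nonneg (le_of_lt ht) _)

lemma scalarLt {ι κ : Type*} [Fintype ι] [Fintype κ] {a : ℝ} (ha : a ∈ Ioo (0:ℝ) 1)
    (p q w : ι → ℝ) (p' q' w' : κ → ℝ) (hp : ∀ i, 0 ≤ p i) (hq : ∀ i, 0 ≤ q i)
    (hp' : ∀ i, 0 ≤ p' i) (hq' : ∀ i, 0 ≤ q' i)
    (htr : ∑ i, p i * w i = ∑ i, p' i * w' i)
    (hle : ∀ t : ℝ, 0 < t → ∑ i, p' i ^ 2 / (p' i + t * q' i) * w' i ≤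
      ∑ i, p i ^ 2 / (p i + t * q i) * w i) :
    ∑ i, fpow a (p i) * fpow (1 - a) (q i) * w i ≤
      ∑ i, fpow a (p' i) * fpow (1 - a) (q' i) * w' i := by
  refine le_of_mul_le_mul_left ?_ (integral_rpowIntegrand₀₁_one_pos ha)
  rw [Finset.mul_sum, Finset.mul_sum]
  have e := fun i => (termLt (w := w i) ha (hp i) (hq i))
  have e' := fun i => (termLt (w := w' i) ha (hp' i) (hq' i))
  rw [← Finset.sum_congr rfl (fun i _ => (e i).2), ← Finset.sum_congr rfl (fun i _ => (e' i).2),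
    ← integral_finsetSum _ (fun i _ => (e i).1), ← integral_finsetSum _ (fun i _ => (e' i).1)]
  refine setIntegral_mono_on (integrable_finsetSum _ (fun i _ => (e i).1))
    (integrable_finsetSum _ (fun i _ => (e' i).1)) measurableSet_Ioi ?_
  intro t ht
  rw [← Finset.mul_sum, ← Finset.mul_sum]
  refine mul_le_mul_of_nonneg_left ?_ (Real.rpow_nonneg (le_of_lt ht) _)
  simp only [sub_mul, Finset.sum_sub_distrib]
  have := hle t ht
  linarith

end Scalar
/-! ### Quadratic-form variational formula and monotonicity -/

section Mono
variable {n m : Type*} [Fintype n] [DecidableEq n] [Fintype m] [DecidableEq m]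

/-- Overlap matrix of two eigenbases. -/
noncomputable def ovl {ρ σ : Matrix n n ℂ} (hρ : ρ.IsHermitian) (hσ : σ.IsHermitian) :
    Matrix n n ℂ :=
  star (hρ.eigenvectorUnitary : Matrix n n ℂ) * (hσ.eigenvectorUnitary : Matrix n n ℂ)

lemma trace_mfun_mul {ρ σ : Matrix n n ℂ} (hρ : ρ.IsHermitian) (hσ : σ.IsHermitian)
    (f g : ℝ → ℝ) : (mfun f ρ * mfun g σ).trace.re =
      ∑ i : n × n, f (hρ.eigenvalues i.1) * g (hσ.eigenvalues i.2) *
        Complex.normSq (ovl hρ hσ i.1 i.2) := by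
  have e : (mfun f ρ * mfun g σ).trace =
      (Matrix.diagonal (fun i => ((f (hρ.eigenvalues i) : ℝ) : ℂ)) * ovl hρ hσ *
        (Matrix.diagonal (fun i => ((g (hσ.eigenvalues i) : ℝ) : ℂ)) * (ovl hρ hσ)ᴴ)).trace := by
    rw [mfun_of hρ, mfun_of hσ, Matrix.trace_mul_comm, Matrix.mul_assoc, Matrix.trace_mul_comm]
    simp only [ovl, Matrix.star_eq_conjTranspose, Matrix.conjTranspose_mul,
      Matrix.conjTranspose_conjTranspose, Matrix.mul_assoc]
    rw [Matrix.trace_mul_comm]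
    simp only [Matrix.mul_assoc]
    rw [Matrix.trace_mul_comm]
    simp only [Matrix.mul_assoc]
  rw [e, Matrix.trace, Complex.re_sum, Fintype.sum_prod_type]
  refine Finset.sum_congr rfl fun i _ => ?_
  rw [Matrix.diag_apply, Matrix.mul_apply, Complex.re_sum]
  refine Finset.sum_congr rfl fun j _ => ?_
  rw [Matrix.diagonal_mul, Matrix.diagonal_mul, Matrix.conjTranspose_apply]
  simp [Complex.normSq_apply]
  ring

lemma mfun_const_one {σ : Matrix n n ℂ} (hσ : σ.IsHermitian) : mfun (fun _ => 1) σ = 1 := by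
  rw [mfun_of hσ]; simp [eU_star]

lemma trace_eq_ovl {ρ σ : Matrix n n ℂ} (hρ : ρ.IsHermitian) (hσ : σ.IsHermitian) :
    ρ.trace.re = ∑ i : n × n, hρ.eigenvalues i.1 * Complex.normSq (ovl hρ hσ i.1 i.2) := by
  have := trace_mfun_mul hρ hσ (fun x => x) (fun _ => 1)
  rw [mfun_id hρ, mfun_const_one hσ, Matrix.mul_one] at this
  simpa using this

/-- The quadratic functional. -/
noncomputable def Jf (ρ σ : Matrix n n ℂ) (t : ℝ) (X : Matrix n n ℂ) : ℝ :=
  2 * (ρ * X).trace.re - (X * ρ * Xᴴ).trace.re - t * (Xᴴ * σ * X).trace.re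

lemma Jf_form {ρ σ : Matrix n n ℂ} (hρ : ρ.IsHermitian) (hσ : σ.IsHermitian) (t : ℝ)
    (x : Matrix n n ℂ) :
    Jf ρ σ t ((hσ.eigenvectorUnitary : Matrix n n ℂ) * x *
        star (hρ.eigenvectorUnitary : Matrix n n ℂ)) =
      ∑ i : n × n, (2 * (hρ.eigenvalues i.1 * (ovl hρ hσ i.1 i.2 * x i.2 i.1).re) -
        (hρ.eigenvalues i.1 + t * hσ.eigenvalues i.2) * Complex.normSq (x i.2 i.1)) := by
  set U := (hρ.eigenvectorUnitary : Matrix n n ℂ) with hU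
  set V := (hσ.eigenvectorUnitary : Matrix n n ℂ) with hV
  set D := Matrix.diagonal (fun i => ((hρ.eigenvalues i : ℝ) : ℂ)) with hD
  set E := Matrix.diagonal (fun i => ((hσ.eigenvalues i : ℝ) : ℂ)) with hE
  have hUU : Uᴴ * U = 1 := star_eU hρ
  have hVV : Vᴴ * V = 1 := star_eU hσ
  have h1 : ρ = U * D * Uᴴ := eU_spec hρ
  have h2 : σ = V * E * Vᴴ := eU_spec hσ
  have hO : ovl hρ hσ = Uᴴ * V := rfl
  have hUU' : ∀ Z : Matrix n n ℂ, Uᴴ * (U * Z) = Z := fun Z => by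
    rw [← Matrix.mul_assoc, hUU, Matrix.one_mul]
  have hVV' : ∀ Z : Matrix n n ℂ, Vᴴ * (V * Z) = Z := fun Z => by
    rw [← Matrix.mul_assoc, hVV, Matrix.one_mul]
  have e1 : (ρ * (V * x * star U)).trace = (D * (ovl hρ hσ * x)).trace := by
    have : ρ * (V * x * star U) = U * (D * (Uᴴ * V * x) * Uᴴ) := by
      rw [Matrix.star_eq_conjTranspose]
      conv_lhs => rw [h1]
      simp only [Matrix.mul_assoc]
    rw [this, Matrix.trace_mul_comm, Matrix.mul_assoc, hUU, Matrix.mul_one, hO]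
  have e2 : ((V * x * star U) * ρ * (V * x * star U)ᴴ).trace = (x * (D * xᴴ)).trace := by
    have : (V * x * star U) * ρ * (V * x * star U)ᴴ = V * (x * (D * xᴴ) * Vᴴ) := by
      rw [Matrix.star_eq_conjTranspose]
      conv_lhs => rw [h1]
      simp only [Matrix.mul_assoc, Matrix.conjTranspose_mul, Matrix.conjTranspose_conjTranspose,
        hUU']
    rw [this, Matrix.trace_mul_comm, Matrix.mul_assoc, hVV, Matrix.mul_one]
  have e3 : ((V * x * star U)ᴴ * σ * (V * x * star U)).trace = (xᴴ * (E * x)).trace := by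
    have : (V * x * star U)ᴴ * σ * (V * x * star U) = U * (xᴴ * (E * x) * Uᴴ) := by
      rw [Matrix.star_eq_conjTranspose]
      conv_lhs => rw [h2]
      simp only [Matrix.mul_assoc, Matrix.conjTranspose_mul, Matrix.conjTranspose_conjTranspose,
        hVV']
    rw [this, Matrix.trace_mul_comm, Matrix.mul_assoc, hUU, Matrix.mul_one]
  unfold Jf
  rw [e1, e2, e3]
  have f1 : (D * (ovl hρ hσ * x)).trace.re =
      ∑ i, ∑ j, hρ.eigenvalues i * (ovl hρ hσ i j * x j i).re := by
    rw [Matrix.trace, Complex.re_sum]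
    refine Finset.sum_congr rfl fun i _ => ?_
    rw [Matrix.diag_apply, hD, Matrix.diagonal_mul, Complex.re_ofReal_mul, Matrix.mul_apply,
      Complex.re_sum, Finset.mul_sum]
  have f2 : (x * (D * xᴴ)).trace.re =
      ∑ i, ∑ j, hρ.eigenvalues i * Complex.normSq (x j i) := by
    rw [Finset.sum_comm, Matrix.trace, Complex.re_sum]
    refine Finset.sum_congr rfl fun i _ => ?_
    rw [Matrix.diag_apply, Matrix.mul_apply, Complex.re_sum]
    refine Finset.sum_congr rfl fun j _ => ?_
    rw [hD, Matrix.diagonal_mul, Matrix.conjTranspose_apply]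
    simp [Complex.normSq_apply]
    ring
  have f3 : (xᴴ * (E * x)).trace.re =
      ∑ i, ∑ j, hσ.eigenvalues j * Complex.normSq (x j i) := by
    rw [Matrix.trace, Complex.re_sum]
    refine Finset.sum_congr rfl fun i _ => ?_
    rw [Matrix.diag_apply, Matrix.mul_apply, Complex.re_sum]
    refine Finset.sum_congr rfl fun j _ => ?_
    rw [hE, Matrix.diagonal_mul, Matrix.conjTranspose_apply]
    simp [Complex.normSq_apply]
    ring
  rw [f1, f2, f3, Fintype.sum_prod_type]
  simp only [Finset.mul_sum, ← Finset.sum_sub_distrib]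
  refine Finset.sum_congr rfl fun i _ => Finset.sum_congr rfl fun j _ => ?_
  ring

/-- The maximal value of `Jf`. -/
noncomputable def Sf {ρ σ : Matrix n n ℂ} (hρ : ρ.IsHermitian) (hσ : σ.IsHermitian) (t : ℝ) : ℝ :=
  ∑ i : n × n, hρ.eigenvalues i.1 ^ 2 / (hρ.eigenvalues i.1 + t * hσ.eigenvalues i.2) *
    Complex.normSq (ovl hρ hσ i.1 i.2)

lemma Jf_le {ρ σ : Matrix n n ℂ} (hρ : ρ.PosSemidef) (hσ : σ.PosSemidef) {t : ℝ} (ht : 0 < t)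
    (X : Matrix n n ℂ) : Jf ρ σ t X ≤ Sf hρ.1 hσ.1 t := by
  have hX : X = (hσ.1.eigenvectorUnitary : Matrix n n ℂ) *
      (star (hσ.1.eigenvectorUnitary : Matrix n n ℂ) * X *
        (hρ.1.eigenvectorUnitary : Matrix n n ℂ)) *
        star (hρ.1.eigenvectorUnitary : Matrix n n ℂ) := by
    rw [Matrix.mul_assoc, Matrix.mul_assoc _ _ (star _), eU_star, Matrix.mul_one,
      ← Matrix.mul_assoc, eU_star, Matrix.one_mul]
  rw [hX, Jf_form]
  unfold Sf
  refine Finset.sum_le_sum fun i _ => ?_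
  have hp := hρ.eigenvalues_nonneg i.1
  have hq := hσ.eigenvalues_nonneg i.2
  generalize hρ.1.eigenvalues i.1 = p at *
  generalize hσ.1.eigenvalues i.2 = q at *
  generalize ovl hρ.1 hσ.1 i.1 i.2 = O
  generalize (star (hσ.1.eigenvectorUnitary : Matrix n n ℂ) * X *
        (hρ.1.eigenvectorUnitary : Matrix n n ℂ)) i.2 i.1 = x
  have hs : 0 ≤ p + t * q := by positivity
  rcases hs.eq_or_lt with h0 | h0
  · have : p = 0 := by nlinarith [mul_nonneg ht.le hq]
    rw [← h0]; simp [this]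
  · have key : 0 ≤ Complex.normSq ((p : ℂ) * (starRingEnd ℂ) O - ((p + t * q : ℝ) : ℂ) * x) :=
      Complex.normSq_nonneg _
    have expand : Complex.normSq ((p : ℂ) * (starRingEnd ℂ) O - ((p + t * q : ℝ) : ℂ) * x) =
        p ^ 2 * Complex.normSq O - 2 * (p + t * q) * p * (O * x).re +
          (p + t * q) ^ 2 * Complex.normSq x := by
      simp only [Complex.normSq_apply, Complex.sub_re, Complex.sub_im, Complex.mul_re,
        Complex.mul_im, Complex.ofReal_re, Complex.ofReal_im, Complex.conj_re, Complex.conj_im]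
      ring
    rw [expand] at key
    rw [div_mul_eq_mul_div, le_div_iff₀ h0]
    nlinarith

lemma Jf_eq {ρ σ : Matrix n n ℂ} (hρ : ρ.PosSemidef) (hσ : σ.PosSemidef) {t : ℝ} (ht : 0 < t) :
    ∃ X : Matrix n n ℂ, Jf ρ σ t X = Sf hρ.1 hσ.1 t := by
  refine ⟨_, (Jf_form hρ.1 hσ.1 t (Matrix.of fun j i =>
    ((hρ.1.eigenvalues i / (hρ.1.eigenvalues i + t * hσ.1.eigenvalues j) : ℝ) : ℂ) *
      (starRingEnd ℂ) (ovl hρ.1 hσ.1 i j))).trans ?_⟩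
  unfold Sf
  refine Finset.sum_congr rfl fun i _ => ?_
  simp only [Matrix.of_apply]
  have hp := hρ.eigenvalues_nonneg i.1
  have hq := hσ.eigenvalues_nonneg i.2
  generalize hρ.1.eigenvalues i.1 = p at *
  generalize hσ.1.eigenvalues i.2 = q at *
  generalize ovl hρ.1 hσ.1 i.1 i.2 = O
  have hs : 0 ≤ p + t * q := by positivity
  have e1 : (O * (((p / (p + t * q) : ℝ) : ℂ) * (starRingEnd ℂ) O)).re =
      p / (p + t * q) * Complex.normSq O := by
    simp only [Complex.normSq_apply, Complex.mul_re,
        Complex.mul_im, Complex.ofReal_re, Complex.ofReal_im, Complex.conj_re, Complex.conj_im]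
    ring
  rw [e1, Complex.normSq_mul, Complex.normSq_ofReal, Complex.normSq_conj]
  rcases hs.eq_or_lt with h0 | h0
  · rw [← h0]; simp
  · field_simp
    ring

/-- Hypotheses for monotonicity: `Ψ` maps test operators to test operators. -/
structure Dominates (ρ σ : Matrix n n ℂ) (ρ' σ' : Matrix m m ℂ) (k : ℝ)
    (Ψ : Matrix m m ℂ → Matrix n n ℂ) : Prop where
  h1 : ∀ X, (ρ * Ψ X).trace.re = (ρ' * X).trace.re
  h2 : ∀ X, (Ψ X * ρ * (Ψ X)ᴴ).trace.re ≤ (X * ρ' * Xᴴ).trace.re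
  h3 : ∀ X, ((Ψ X)ᴴ * σ * Ψ X).trace.re ≤ k * (Xᴴ * σ' * X).trace.re

lemma Dominates.J_le {ρ σ : Matrix n n ℂ} {ρ' σ' : Matrix m m ℂ} {k : ℝ}
    {Ψ : Matrix m m ℂ → Matrix n n ℂ} (h : Dominates ρ σ ρ' σ' k Ψ) {t : ℝ} (ht : 0 < t)
    (X : Matrix m m ℂ) : Jf ρ' σ' (t * k) X ≤ Jf ρ σ t (Ψ X) := by
  unfold Jf
  rw [h.h1 X]
  have := h.h2 X
  have := mul_le_mul_of_nonneg_left (h.h3 X) ht.le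
  linarith

lemma Dominates.S_le {ρ σ : Matrix n n ℂ} {ρ' σ' : Matrix m m ℂ} {k : ℝ} (hk : 0 < k)
    {Ψ : Matrix m m ℂ → Matrix n n ℂ} (h : Dominates ρ σ ρ' σ' k Ψ)
    (hρ : ρ.PosSemidef) (hσ : σ.PosSemidef) (hρ' : ρ'.PosSemidef) (hσ' : σ'.PosSemidef)
    {t : ℝ} (ht : 0 < t) : Sf hρ'.1 hσ'.1 (t * k) ≤ Sf hρ.1 hσ.1 t := by
  obtain ⟨X, hX⟩ := Jf_eq hρ' hσ' (mul_pos ht hk)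
  rw [← hX]
  exact (h.J_le ht X).trans (Jf_le hρ hσ ht _)

lemma ovl_zero {ρ σ : Matrix n n ℂ} (hρ : ρ.IsHermitian) (hσ : σ.IsHermitian)
    (hker : ∀ v : n → ℂ, σ *ᵥ v = 0 → ρ *ᵥ v = 0) (i j : n) (hj : hσ.eigenvalues j = 0) :
    hρ.eigenvalues i = 0 ∨ Complex.normSq (ovl hρ hσ i j) = 0 := by
  have h1 : σ *ᵥ ((hσ.eigenvectorUnitary : Matrix n n ℂ).col j) = 0 := by
    ext a
    have := congrFun (congrFun (mul_eU hσ) a) j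
    rw [Matrix.mul_diagonal, hj] at this
    exact this.trans (by simp)
  have h2 := hker _ h1
  have h3 : (Matrix.diagonal (fun i => ((hρ.eigenvalues i : ℝ) : ℂ)) * ovl hρ hσ) i j = 0 := by
    rw [ovl, ← Matrix.mul_assoc, ← eU_mul, Matrix.mul_assoc, Matrix.mul_apply]
    refine Finset.sum_eq_zero fun a _ => ?_
    have := congrFun h2 a
    have e : (ρ * (hσ.eigenvectorUnitary : Matrix n n ℂ)) a j = 0 := this
    rw [e, mul_zero]
  rw [Matrix.diagonal_mul] at h3
  rcases mul_eq_zero.mp h3 with h | h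
  · left; exact_mod_cast h
  · right; simp [h]

lemma Dominates.lt {ρ σ : Matrix n n ℂ} {ρ' σ' : Matrix m m ℂ} {k : ℝ} (hk : 0 < k)
    {Ψ : Matrix m m ℂ → Matrix n n ℂ} (h : Dominates ρ σ ρ' σ' k Ψ)
    (hρ : ρ.PosSemidef) (hσ : σ.PosSemidef) (hρ' : ρ'.PosSemidef) (hσ' : σ'.PosSemidef)
    (htr : ρ.trace.re = ρ'.trace.re) {a : ℝ} (ha : a ∈ Set.Ioo (0:ℝ) 1) :
    (mfun (fpow a) ρ * mfun (fpow (1 - a)) σ).trace.re ≤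
      k ^ (1 - a) * (mfun (fpow a) ρ' * mfun (fpow (1 - a)) σ').trace.re := by
  have := scalarLt ha (fun i : n × n => hρ.1.eigenvalues i.1) (fun i => hσ.1.eigenvalues i.2)
    (fun i => Complex.normSq (ovl hρ.1 hσ.1 i.1 i.2)) (fun i : m × m => hρ'.1.eigenvalues i.1)
    (fun i => k * hσ'.1.eigenvalues i.2)
    (fun i => Complex.normSq (ovl hρ'.1 hσ'.1 i.1 i.2))
    (fun i => hρ.eigenvalues_nonneg _) (fun i => hσ.eigenvalues_nonneg _)
    (fun i => hρ'.eigenvalues_nonneg _) (fun i => mul_nonneg hk.le (hσ'.eigenvalues_nonneg _))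
    (by rw [← trace_eq_ovl, ← trace_eq_ovl, htr])
    (fun t ht => by
      have := h.S_le hk hρ hσ hρ' hσ' ht
      unfold Sf at this
      simpa only [← mul_assoc] using this)
  rw [trace_mfun_mul hρ.1 hσ.1, trace_mfun_mul hρ'.1 hσ'.1, Finset.mul_sum]
  refine this.trans (le_of_eq ?_)
  refine Finset.sum_congr rfl fun i _ => ?_
  rw [fpow_mul' hk.le (hσ'.eigenvalues_nonneg _)]
  have : fpow (1 - a) k = k ^ (1 - a) := by simp [fpow, hk.ne']
  rw [this]; ring

lemma Sf_bound {ρ σ : Matrix n n ℂ} (hρ : ρ.PosSemidef) (hσ : σ.PosSemidef)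
    (hker : ∀ v : n → ℂ, σ *ᵥ v = 0 → ρ *ᵥ v = 0) :
    ∃ K : ℝ, ∀ t : ℝ, 0 < t → Sf hρ.1 hσ.1 t ≤ K / t := by
  refine ⟨∑ i : n × n, hρ.1.eigenvalues i.1 ^ 2 / hσ.1.eigenvalues i.2 *
    Complex.normSq (ovl hρ.1 hσ.1 i.1 i.2), fun t ht => ?_⟩
  unfold Sf
  rw [Finset.sum_div]
  refine Finset.sum_le_sum fun i _ => ?_
  have hp := hρ.eigenvalues_nonneg i.1
  have hq := hσ.eigenvalues_nonneg i.2
  have h0 := ovl_zero hρ.1 hσ.1 hker i.1 i.2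
  have hw := Complex.normSq_nonneg (ovl hρ.1 hσ.1 i.1 i.2)
  generalize hρ.1.eigenvalues i.1 = p at *
  generalize hσ.1.eigenvalues i.2 = q at *
  generalize Complex.normSq (ovl hρ.1 hσ.1 i.1 i.2) = w at *
  rcases hq.eq_or_lt with hq0 | hq0
  · rcases h0 hq0.symm with h | h <;> simp [h]
  · rw [div_mul_eq_mul_div, div_mul_eq_mul_div, div_div]
    apply div_le_div_of_nonneg_left (by positivity) (by positivity)
    nlinarith

lemma psd_mulVec_zero {ρ : Matrix n n ℂ} (hρ : ρ.PosSemidef) (v : n → ℂ)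
    (h : (star v ⬝ᵥ (ρ *ᵥ v)).re ≤ 0) : ρ *ᵥ v = 0 := by
  have h1 := hρ.dotProduct_mulVec_nonneg v
  have h2 : star v ⬝ᵥ (ρ *ᵥ v) = 0 := by
    rw [Complex.le_def] at h1
    apply Complex.ext
    · simp at h1 ⊢; linarith [h1.1]
    · simpa using h1.2.symm
  exact (hρ.dotProduct_mulVec_zero_iff v).1 h2

lemma Dominates.ker {ρ σ : Matrix n n ℂ} {ρ' σ' : Matrix m m ℂ} {k : ℝ}
    {Ψ : Matrix m m ℂ → Matrix n n ℂ} (h : Dominates ρ σ ρ' σ' k Ψ)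
    (hρ : ρ.PosSemidef) (hσ : σ.PosSemidef) (hρ' : ρ'.PosSemidef)
    (hker : ∀ v : n → ℂ, σ *ᵥ v = 0 → ρ *ᵥ v = 0) :
    ∀ v : m → ℂ, σ' *ᵥ v = 0 → ρ' *ᵥ v = 0 := by
  intro v hv
  obtain ⟨K, hK⟩ := Sf_bound hρ hσ hker
  by_contra hne
  have hpos : 0 < (star v ⬝ᵥ (ρ' *ᵥ v)).re := by
    by_contra hc
    exact hne (psd_mulVec_zero hρ' v (not_lt.mp hc))
  set y := (star v ⬝ᵥ (ρ' *ᵥ v)).re with hy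
  set z := (star v ⬝ᵥ v).re with hz
  have hzim : (star v ⬝ᵥ v) = (z : ℂ) := by
    have : 0 ≤ star v ⬝ᵥ v := dotProduct_star_self_nonneg v
    rw [Complex.le_def] at this
    apply Complex.ext
    · simp [hz]
    · simpa using this.2.symm
  have hz0 : 0 ≤ z := by
    have : 0 ≤ star v ⬝ᵥ v := dotProduct_star_self_nonneg v
    rw [Complex.le_def] at this; simpa using this.1
  have hJ : ∀ s t : ℝ, Jf ρ' σ' (t * k) ((s : ℂ) • vecMulVec v (star v)) =
      2 * (s * y) - s ^ 2 * (z * y) := by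
    intro s t
    have e3 : σ' * vecMulVec v (star v) = 0 := by
      rw [Matrix.mul_vecMulVec, hv]; simp
    have hH : (vecMulVec v (star v))ᴴ = vecMulVec v (star v) := by
      rw [Matrix.conjTranspose_vecMulVec]; simp
    have e1 : (ρ' * vecMulVec v (star v)).trace = star v ⬝ᵥ (ρ' *ᵥ v) := by
      rw [Matrix.mul_vecMulVec, Matrix.trace_vecMulVec, dotProduct_comm]
    have e2 : (vecMulVec v (star v) * ρ' * vecMulVec v (star v)).trace =
        z * (star v ⬝ᵥ (ρ' *ᵥ v)) := by
      rw [Matrix.trace_mul_comm, ← Matrix.mul_assoc, Matrix.vecMulVec_mul_vecMulVec, hzim,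
        Matrix.trace_mul_comm, Matrix.mul_vecMulVec, Matrix.trace_vecMulVec]
      simp [dotProduct_comm, mulVec_smul]
    unfold Jf
    rw [Matrix.conjTranspose_smul, hH]
    simp only [Matrix.smul_mul, Matrix.mul_smul, Matrix.mul_assoc, e3, Matrix.mul_zero, smul_zero,
      Matrix.trace_zero, Matrix.trace_smul, e1, smul_eq_mul]
    rw [← Matrix.mul_assoc, e2]
    have hyc : star v ⬝ᵥ (ρ' *ᵥ v) = (y : ℂ) := by
      have := hρ'.dotProduct_mulVec_nonneg v
      rw [Complex.le_def] at this
      apply Complex.ext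
      · simp [hy]
      · simpa using this.2.symm
    rw [hyc]
    simp [← Complex.ofReal_mul, -Complex.ofReal_mul]
    ring
  have hfin : ∀ s t : ℝ, 0 < t → 2 * (s * y) - s ^ 2 * (z * y) ≤ K / t := by
    intro s t ht
    rw [← hJ s t]
    exact ((h.J_le ht _).trans (Jf_le hρ hσ ht _)).trans (hK t ht)
  have hs : 0 < 2 * (1 / (z + 1) * y) - (1 / (z + 1)) ^ 2 * (z * y) := by
    have : 2 * (1 / (z + 1) * y) - (1 / (z + 1)) ^ 2 * (z * y) = (z + 2) * y / (z + 1) ^ 2 := by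
      field_simp; ring
    rw [this]; positivity
  set e := 2 * (1 / (z + 1) * y) - (1 / (z + 1)) ^ 2 * (z * y) with he
  have hT := hfin (1 / (z + 1)) ((|K| + 1) / e) (by positivity)
  rw [← he, div_div_eq_mul_div, le_div_iff₀ (by positivity)] at hT
  have : K ≤ |K| := le_abs_self K
  nlinarith

lemma Dominates.gt {ρ σ : Matrix n n ℂ} {ρ' σ' : Matrix m m ℂ} {k : ℝ} (hk : 0 < k)
    {Ψ : Matrix m m ℂ → Matrix n n ℂ} (h : Dominates ρ σ ρ' σ' k Ψ)
    (hρ : ρ.PosSemidef) (hσ : σ.PosSemidef) (hρ' : ρ'.PosSemidef) (hσ' : σ'.PosSemidef)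
    (hker : ∀ v : n → ℂ, σ *ᵥ v = 0 → ρ *ᵥ v = 0) {a : ℝ} (ha : a ∈ Set.Ioo (1:ℝ) 2) :
    k ^ (1 - a) * (mfun (fpow a) ρ' * mfun (fpow (1 - a)) σ').trace.re ≤
      (mfun (fpow a) ρ * mfun (fpow (1 - a)) σ).trace.re := by
  have hr : a - 1 ∈ Set.Ioo (0:ℝ) 1 := ⟨by linarith [ha.1], by linarith [ha.2]⟩
  have := scalarGt hr (fun i : n × n => hρ.1.eigenvalues i.1) (fun i => hσ.1.eigenvalues i.2)
    (fun i => Complex.normSq (ovl hρ.1 hσ.1 i.1 i.2)) (fun i : m × m => hρ'.1.eigenvalues i.1)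
    (fun i => k * hσ'.1.eigenvalues i.2)
    (fun i => Complex.normSq (ovl hρ'.1 hσ'.1 i.1 i.2))
    (fun i => hρ.eigenvalues_nonneg _) (fun i => hσ.eigenvalues_nonneg _)
    (fun i => hρ'.eigenvalues_nonneg _) (fun i => mul_nonneg hk.le (hσ'.eigenvalues_nonneg _))
    (fun i hi => ovl_zero hρ.1 hσ.1 hker i.1 i.2 hi)
    (fun i hi => ovl_zero hρ'.1 hσ'.1 (h.ker hρ hσ hρ' hker) i.1 i.2
      ((mul_eq_zero.mp hi).resolve_left hk.ne'))
    (fun t ht => by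
      have := h.S_le hk hρ hσ hρ' hσ' ht
      unfold Sf at this
      simpa only [← mul_assoc] using this)
  have e1 : 1 + (a - 1) = a := by ring
  have e2 : -(a - 1) = 1 - a := by ring
  rw [e1, e2] at this
  rw [trace_mfun_mul hρ.1 hσ.1, trace_mfun_mul hρ'.1 hσ'.1, Finset.mul_sum]
  refine le_trans (le_of_eq ?_) this
  refine Finset.sum_congr rfl fun i _ => ?_
  rw [fpow_mul' hk.le (hσ'.eigenvalues_nonneg _)]
  have : fpow (1 - a) k = k ^ (1 - a) := by simp [fpow, hk.ne']
  rw [this]; ring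

end Mono
/-! ### The dual (C-side) construction -/

section Dual
variable {K C Y : Type*} [Fintype K] [DecidableEq K] [Fintype C] [DecidableEq C]
  [Fintype Y] [DecidableEq Y]

lemma mfun_smul_fun {n : Type*} [Fintype n] [DecidableEq n] (c : ℝ) (f : ℝ → ℝ)
    (A : Matrix n n ℂ) : mfun (fun x => c * f x) A = (c : ℂ) • mfun f A := by
  by_cases hA : A.IsHermitian
  · rw [mfun_of hA, mfun_of hA]
    have : Matrix.diagonal (fun i => ((c * f (hA.eigenvalues i) : ℝ) : ℂ)) =
        (c : ℂ) • Matrix.diagonal (fun i => ((f (hA.eigenvalues i) : ℝ) : ℂ)) := by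
      rw [← Matrix.diagonal_smul]; congr 1; ext i; simp
    rw [this, Matrix.mul_smul, Matrix.smul_mul]
  · simp [mfun, hA]

lemma one_kron_herm {r : Matrix C C ℂ} (hr : r.IsHermitian) :
    ((1 : Matrix Y Y ℂ) ⊗ₖ r).IsHermitian := by
  unfold Matrix.IsHermitian
  rw [Matrix.conjTranspose_kronecker, hr.eq, Matrix.conjTranspose_one]

lemma mfun_one_kron {r : Matrix C C ℂ} (hr : r.IsHermitian) (f : ℝ → ℝ) :
    mfun f ((1 : Matrix Y Y ℂ) ⊗ₖ r) = (1 : Matrix Y Y ℂ) ⊗ₖ mfun f r := by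
  have hd : ∀ g : ℝ → ℝ, (1 : Matrix Y Y ℂ) ⊗ₖ
      Matrix.diagonal (fun i => ((g (hr.eigenvalues i) : ℝ) : ℂ)) =
      Matrix.diagonal (fun i : Y × C => ((g (hr.eigenvalues i.2) : ℝ) : ℂ)) := by
    intro g
    rw [← Matrix.diagonal_one, Matrix.diagonal_kronecker_diagonal]
    simp
  have := mfun_mul_eig (one_kron_herm (Y := Y) hr) f
    ((1 : Matrix Y Y ℂ) ⊗ₖ (hr.eigenvectorUnitary : Matrix C C ℂ))
    (fun i => hr.eigenvalues i.2) (by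
      rw [← hd (fun x => x), ← Matrix.mul_kronecker_mul, ← Matrix.mul_kronecker_mul, mul_eU])
  rw [← hd f] at this
  rw [mfun_of hr, ← Matrix.mul_one (1 : Matrix Y Y ℂ), Matrix.mul_kronecker_mul,
    ← Matrix.mul_one (1 : Matrix Y Y ℂ), Matrix.mul_kronecker_mul, Matrix.mul_one, ← this,
    Matrix.mul_assoc, ← Matrix.mul_kronecker_mul, eU_star]
  simp

/-- Block-diagonal copy of `L`. -/
def blk (L : Matrix (Y × K) C ℂ) : Matrix (Y × K) (Y × C) ℂ :=
  Matrix.of fun p q => if p.1 = q.1 then L p q.2 else 0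

/-- The matrix `T` of the sandwiched quantity. -/
noncomputable def Tm (L : Matrix (Y × K) C ℂ) (s : ℝ) : Matrix (Y × K) (Y × C) ℂ :=
  blk L * mfun (fpow (s / 2)) ((1 : Matrix Y Y ℂ) ⊗ₖ (Lᴴ * L))

lemma kron_psd {r : Matrix C C ℂ} (hr : r.PosSemidef) :
    ((1 : Matrix Y Y ℂ) ⊗ₖ r).PosSemidef := Matrix.PosSemidef.kronecker Matrix.PosSemidef.one hr

lemma TTH (L : Matrix (Y × K) C ℂ) (s : ℝ) : Tm L s * (Tm L s)ᴴ =
    blk L * ((1 : Matrix Y Y ℂ) ⊗ₖ mfun (fpow s) (Lᴴ * L)) * (blk L)ᴴ := by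
  have hr := Matrix.posSemidef_conjTranspose_mul_self L
  unfold Tm
  rw [Matrix.conjTranspose_mul, (mfun_herm _ _).eq, Matrix.mul_assoc, ← Matrix.mul_assoc (mfun _ _),
    mfun_pow_mul (kron_psd hr), mfun_one_kron hr.1, ← Matrix.mul_assoc]
  simp

lemma mfun_pow_LLH (L : Matrix (Y × K) C ℂ) (a : ℝ) : mfun (fpow a) (L * Lᴴ) =
    L * mfun (fpow (a - 1)) (Lᴴ * L) * Lᴴ := by
  have h1 := Matrix.posSemidef_self_mul_conjTranspose L
  have h2 := Matrix.posSemidef_conjTranspose_mul_self L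
  rw [← mfun_intertwine h1.1 h2.1 _ L (Matrix.mul_assoc _ _ _), Matrix.mul_assoc]
  conv_rhs => rw [← mfun_one_pow h1.1, mfun_comp h1.1, mfun_mul h1.1]
  refine mfun_congr' h1 fun x hx => ?_
  rw [fpow_one, ← fpow_one (x := x), fpow_fpow hx, fpow_fpow hx, fpow_add hx]
  simp

lemma TTH_apply (L : Matrix (Y × K) C ℂ) (a : ℝ) (p q : Y × K) :
    (Tm L (a - 1) * (Tm L (a - 1))ᴴ) p q =
      if p.1 = q.1 then mfun (fpow a) (L * Lᴴ) p q else 0 := by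
  rw [TTH, mfun_pow_LLH]
  generalize mfun (fpow (a - 1)) (Lᴴ * L) = h
  obtain ⟨y, k⟩ := p
  obtain ⟨y', k'⟩ := q
  simp only [Matrix.mul_apply, Fintype.sum_prod_type, blk, Matrix.of_apply,
    Matrix.kroneckerMap_apply, Matrix.conjTranspose_apply, Matrix.one_apply]
  by_cases hy : y = y'
  · subst hy
    simp [ite_mul, mul_ite, apply_ite, Finset.sum_ite_eq, Finset.sum_ite_irrel]
  · have hy' : ¬ y' = y := fun h => hy h.symm
    simp [hy, ite_mul, mul_ite, apply_ite, Finset.sum_ite_irrel, Finset.sum_ite_eq, hy']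

lemma blockdiag_of {Z : Matrix (Y × K) (Y × K) ℂ} (hZ : Z.IsHermitian)
    (h : ∀ p q, p.1 ≠ q.1 → Z p q = 0) (g : ℝ → ℝ) :
    ∀ p q, p.1 ≠ q.1 → mfun g Z p q = 0 := by
  intro p q hpq
  have hc : ∀ W : Matrix (Y × K) (Y × K) ℂ, ∀ p' q',
      (W * Matrix.diagonal (fun j : Y × K => if j.1 = q.1 then (1:ℂ) else 0)) p' q' =
        if q'.1 = q.1 then W p' q' else 0 := by
    intro W p' q'; rw [Matrix.mul_diagonal]; simp
  have hc' : ∀ W : Matrix (Y × K) (Y × K) ℂ, ∀ p' q',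
      (Matrix.diagonal (fun j : Y × K => if j.1 = q.1 then (1:ℂ) else 0) * W) p' q' =
        if p'.1 = q.1 then W p' q' else 0 := by
    intro W p' q'; rw [Matrix.diagonal_mul]; simp
  have := mfun_intertwine hZ hZ g
    (Matrix.diagonal (fun j : Y × K => if j.1 = q.1 then (1:ℂ) else 0)) (by
      ext p' q'
      rw [hc, hc']
      by_cases h1 : p'.1 = q'.1
      · rw [h1]
      · rw [h _ _ h1]; simp)
  have := congrFun (congrFun this p) q
  rw [hc, hc', if_pos rfl, if_neg hpq] at this
  exact this

lemma TTH_block (L : Matrix (Y × K) C ℂ) (a : ℝ) (p q : Y × K) (h : p.1 ≠ q.1) :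
    (Tm L (a - 1) * (Tm L (a - 1))ᴴ) p q = 0 := by
  rw [TTH_apply, if_neg h]

lemma trace_pinch (L : Matrix (Y × K) C ℂ) (a : ℝ) (g : ℝ → ℝ) :
    (mfun (fpow a) (L * Lᴴ) * mfun g (Tm L (a - 1) * (Tm L (a - 1))ᴴ)).trace =
    ((Tm L (a - 1) * (Tm L (a - 1))ᴴ) * mfun g (Tm L (a - 1) * (Tm L (a - 1))ᴴ)).trace := by
  have hb := blockdiag_of (Matrix.isHermitian_mul_conjTranspose_self (Tm L (a - 1)))
    (TTH_block L a) g
  rw [Matrix.trace, Matrix.trace]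
  refine Finset.sum_congr rfl fun p _ => ?_
  rw [Matrix.diag_apply, Matrix.diag_apply, Matrix.mul_apply, Matrix.mul_apply]
  refine Finset.sum_congr rfl fun q _ => ?_
  by_cases h : p.1 = q.1
  · rw [TTH_apply, if_pos h]
  · rw [hb q p (fun h' => h h'.symm)]; simp

lemma ker_TTH (L : Matrix (Y × K) C ℂ) (s : ℝ) (v : Y × K → ℂ)
    (hv : (Tm L s * (Tm L s)ᴴ) *ᵥ v = 0) : (L * Lᴴ) *ᵥ v = 0 := by
  have hr := Matrix.posSemidef_conjTranspose_mul_self L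
  rw [Matrix.self_mul_conjTranspose_mulVec_eq_zero] at hv
  set u := (blk L)ᴴ *ᵥ v with hu
  have h1 : mfun (fpow (s / 2)) ((1 : Matrix Y Y ℂ) ⊗ₖ (Lᴴ * L)) *ᵥ u = 0 := by
    rw [Tm, Matrix.conjTranspose_mul, (mfun_herm _ _).eq, ← Matrix.mulVec_mulVec] at hv
    exact hv
  have h2 : ((1 : Matrix Y Y ℂ) ⊗ₖ (Lᴴ * L)) *ᵥ u = 0 := by
    have hk := kron_psd (Y := Y) hr
    have e := mfun_pow_mul hk (1 - s / 2) (s / 2)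
    rw [sub_add_cancel, mfun_one_pow hk.1] at e
    rw [← e, ← Matrix.mulVec_mulVec, h1, Matrix.mulVec_zero]
  have h3 : ∀ y, (Lᴴ * L) *ᵥ (fun c => u (y, c)) = 0 := by
    intro y
    ext c
    have := congrFun h2 (y, c)
    simp only [Matrix.mulVec, dotProduct, Fintype.sum_prod_type, Matrix.kroneckerMap_apply,
      Matrix.one_apply, ite_mul, one_mul, zero_mul, Finset.sum_ite_irrel, Finset.sum_const_zero,
      Finset.sum_ite_eq, Finset.mem_univ, if_true] at this
    exact this
  have h4 : blk L *ᵥ u = 0 := by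
    ext p
    have h5 := h3 p.1
    rw [Matrix.conjTranspose_mul_self_mulVec_eq_zero] at h5
    have := congrFun h5 p
    simp only [Matrix.mulVec, dotProduct, Fintype.sum_prod_type, blk, Matrix.of_apply, ite_mul,
      zero_mul, Finset.sum_ite_irrel, Finset.sum_const_zero,
      Finset.sum_ite_eq, Finset.mem_univ, if_true] at this ⊢
    exact this
  have h5 : u = 0 := by
    rw [hu, Matrix.mulVec_mulVec, Matrix.self_mul_conjTranspose_mulVec_eq_zero] at h4
    rw [hu, h4]
  rw [Matrix.self_mul_conjTranspose_mulVec_eq_zero]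
  ext c
  have h6 : ∑ y, u (y, c) = 0 := by simp [h5]
  rw [hu] at h6
  simp only [Matrix.mulVec, dotProduct, Fintype.sum_prod_type, Matrix.conjTranspose_apply, blk,
    Matrix.of_apply, apply_ite, star_zero, ite_mul, zero_mul, Finset.sum_ite_irrel,
    Finset.sum_const_zero, Finset.sum_ite_eq', Finset.mem_univ, if_true] at h6 ⊢
  simpa using h6

lemma trace_pow_pos {n : Type*} [Fintype n] [DecidableEq n] {Z : Matrix n n ℂ}
    (hZ : Z.PosSemidef) (h0 : Z ≠ 0) (b : ℝ) : 0 < (mfun (fpow b) Z).trace.re := by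
  have h1 : (mfun (fpow b) Z).PosSemidef := mfun_psd' hZ fun x hx => fpow_nonneg hx
  have h2 := h1.trace_nonneg
  rw [Complex.le_def] at h2
  refine lt_of_le_of_ne (by simpa using h2.1) fun h => h0 ?_
  have h3 : (mfun (fpow b) Z).trace = 0 := by
    apply Complex.ext
    · simpa using h.symm
    · simpa using h2.2.symm
  rw [h1.trace_eq_zero_iff] at h3
  have e := mfun_pow_mul hZ (1 - b) b
  rw [sub_add_cancel, mfun_one_pow hZ.1, h3, Matrix.mul_zero] at e
  exact e.symm

lemma trace_mfun_psd_im {n : Type*} [Fintype n] {Z : Matrix n n ℂ}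
    (hZ : Z.PosSemidef) : Z.trace = (Z.trace.re : ℂ) := by
  have h2 := hZ.trace_nonneg
  rw [Complex.le_def] at h2
  apply Complex.ext
  · simp
  · simpa using h2.2.symm

/-- Summary of the dual construction. -/
lemma dual_construction (L : Matrix (Y × K) C ℂ) (hL : L * Lᴴ ≠ 0) {a b : ℝ} (hab : a * b = 1) :
    ∃ Q : ℝ, 0 < Q ∧
      (mfun (fpow b) (mfun (fpow ((a - 1) / 2)) ((1 : Matrix Y Y ℂ) ⊗ₖ (Lᴴ * L)) *
        ((blk L)ᴴ * blk L) * mfun (fpow ((a - 1) / 2)) ((1 : Matrix Y Y ℂ) ⊗ₖ (Lᴴ * L)))).trace.re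
          = Q ∧
      ∃ ω : Matrix (Y × K) (Y × K) ℂ, ω.PosSemidef ∧ ω.trace = 1 ∧
        (∀ p q, p.1 ≠ q.1 → ω p q = 0) ∧
        (mfun (fpow a) (L * Lᴴ) * mfun (fpow (1 - a)) ω).trace.re = Q ^ a ∧
        (∀ v, ω *ᵥ v = 0 → (L * Lᴴ) *ᵥ v = 0) := by
  have hb0 : b ≠ 0 := by rintro rfl; simp at hab
  set Z := Tm L (a - 1) * (Tm L (a - 1))ᴴ with hZdef
  have hZ : Z.PosSemidef := Matrix.posSemidef_self_mul_conjTranspose _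
  have hZ0 : Z ≠ 0 := by
    intro h
    apply hL
    ext i j
    have := ker_TTH L (a - 1) (Pi.single j 1) (by rw [← hZdef, h, Matrix.zero_mulVec])
    have := congrFun this i
    simpa using this
  set Q := (mfun (fpow b) Z).trace.re with hQ
  have hQ0 : 0 < Q := trace_pow_pos hZ hZ0 b
  have hpsd : (mfun (fpow b) Z).PosSemidef := mfun_psd' hZ fun x hx => fpow_nonneg hx
  have hQtr : (mfun (fpow b) Z).trace = (Q : ℂ) := trace_mfun_psd_im hpsd
  refine ⟨Q, hQ0, ?_, mfun (fun x => Q⁻¹ * fpow b x) Z, ?_, ?_, ?_, ?_, ?_⟩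
  · rw [hQ, hZdef, trace_mfun_swap _ (fpow_zero' b)]
    congr 4
    rw [Tm, Matrix.conjTranspose_mul, (mfun_herm _ _).eq]
    simp only [Matrix.mul_assoc]
  · exact mfun_psd' hZ fun x hx => mul_nonneg (inv_nonneg.2 hQ0.le) (fpow_nonneg hx)
  · rw [mfun_smul_fun, Matrix.trace_smul, hQtr]
    have : (Q : ℂ) ≠ 0 := by exact_mod_cast hQ0.ne'
    simp [this]
  · exact blockdiag_of hZ.1 (TTH_block L a) _
  · rw [mfun_comp hZ.1, hZdef, trace_pinch, ← hZdef]
    conv_lhs => rw [← mfun_id hZ.1, mfun_comp hZ.1, mfun_mul hZ.1]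
    have : mfun (fun x => x * fpow (1 - a) (Q⁻¹ * fpow b x)) Z =
        mfun (fun x => Q ^ (a - 1) * fpow b x) Z := by
      refine mfun_congr' hZ fun x hx => ?_
      rw [fpow_mul' (inv_nonneg.2 hQ0.le) (fpow_nonneg hx), fpow_fpow hx]
      have e1 : fpow (1 - a) Q⁻¹ = Q ^ (a - 1) := by
        rw [fpow, if_neg (inv_ne_zero hQ0.ne'), Real.inv_rpow hQ0.le, ← Real.rpow_neg hQ0.le]
        congr 1; ring
      have e2 : x * fpow (b * (1 - a)) x = fpow b x := by
        nth_rw 1 [← fpow_one (x := x)]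
        rw [fpow_add hx]; congr 1; linear_combination -hab
      rw [e1, ← e2]; ring
    rw [this, mfun_smul_fun, Matrix.trace_smul, hQtr, smul_eq_mul, ← Complex.ofReal_mul,
      Complex.ofReal_re]
    nth_rw 2 [← Real.rpow_one Q]
    rw [← Real.rpow_add hQ0]; simp
  · intro v hv
    apply ker_TTH L (a - 1)
    rw [mfun_smul_fun, Matrix.smul_mulVec] at hv
    have hQi : ((Q⁻¹ : ℝ) : ℂ) ≠ 0 := by exact_mod_cast inv_ne_zero hQ0.ne'
    have hv' := (smul_eq_zero.mp hv).resolve_left hQi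
    have e := mfun_pow_mul hZ (1 - b) b
    rw [sub_add_cancel, mfun_one_pow hZ.1] at e
    rw [← hZdef, ← e, ← Matrix.mulVec_mulVec, hv', Matrix.mulVec_zero]

end Dual
/-! ### The abstract measurement map -/
set_option linter.unusedSectionVars false
set_option linter.unusedSimpArgs false

section Meas
variable {K C X Y B : Type*} [Fintype K] [DecidableEq K] [Fintype C] [DecidableEq C]
  [Fintype X] [DecidableEq X] [Fintype Y] [DecidableEq Y] [Fintype B] [DecidableEq B]

lemma half_sq {Q : Matrix K K ℂ} (hQ : Q.PosSemidef) :
    mfun (fpow (1 / 2)) Q * mfun (fpow (1 / 2)) Q = Q := by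
  rw [mfun_pow_mul hQ]
  norm_num
  exact mfun_one_pow hQ.1

lemma psd_factor {Q : Matrix K K ℂ} (hQ : Q.PosSemidef) : ∃ R : Matrix K K ℂ, Q = Rᴴ * R :=
  ⟨mfun (fpow (1 / 2)) Q, by rw [(mfun_herm _ Q).eq, half_sq hQ]⟩

lemma trace_mul_psd {P Q : Matrix K K ℂ} (hP : P.PosSemidef) (hQ : Q.PosSemidef) :
    0 ≤ (P * Q).trace.re := by
  obtain ⟨R, rfl⟩ := psd_factor hQ
  rw [← Matrix.mul_assoc, Matrix.trace_mul_comm, ← Matrix.mul_assoc]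
  exact (Complex.le_def.1 (hP.mul_mul_conjTranspose_same R).trace_nonneg).1

lemma schwarz_psd (E Z : X → Matrix K K ℂ) (hE : ∀ x, (E x).PosSemidef) (hs : ∑ x, E x = 1) :
    (∑ x, (Z x)ᴴ * E x * Z x - (∑ x, E x * Z x)ᴴ * (∑ x, E x * Z x)).PosSemidef := by
  set S := ∑ x, E x * Z x with hS
  have hSH : Sᴴ = ∑ x, (Z x)ᴴ * E x := by
    rw [hS, Matrix.conjTranspose_sum]
    exact Finset.sum_congr rfl fun x _ => by rw [Matrix.conjTranspose_mul, (hE x).1.eq]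
  have e : ∑ x, (Z x)ᴴ * E x * Z x - Sᴴ * S = ∑ x, (Z x - S)ᴴ * E x * (Z x - S) := by
    have : ∀ x, (Z x - S)ᴴ * E x * (Z x - S) = (Z x)ᴴ * E x * Z x - (Z x)ᴴ * E x * S
        - Sᴴ * (E x * Z x) + Sᴴ * E x * S := by
      intro x; rw [Matrix.conjTranspose_sub]; noncomm_ring
    simp only [this, Finset.sum_add_distrib, Finset.sum_sub_distrib, ← Finset.sum_mul,
      ← Finset.mul_sum, hs, ← hS, ← hSH]
    simp
  rw [e]
  exact Matrix.posSemidef_sum _ fun x _ => (hE x).conjTranspose_mul_mul_same _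

/-- Block of a matrix. -/
def bk (Z : Matrix (X × B) (X × B) ℂ) (x x' : X) : Matrix B B ℂ :=
  Matrix.of fun b b' => Z (x, b) (x', b')

def stk (F : Y → Matrix K K ℂ) : Matrix (Y × K) K ℂ := Matrix.of fun p k => F p.1 p.2 k

lemma stk_isom (F : Y → Matrix K K ℂ) : (stk F)ᴴ * stk F = ∑ y, (F y)ᴴ * F y := by
  ext k k'
  simp [Matrix.mul_apply, Matrix.sum_apply, stk, Fintype.sum_prod_type]

lemma bk_trace (Z : Matrix (X × B) (X × B) ℂ) : Z.trace = ∑ x, (bk Z x x).trace := by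
  simp [Matrix.trace, bk, Fintype.sum_prod_type]

lemma bk_mul (Z W : Matrix (X × B) (X × B) ℂ) (x x' : X) :
    bk (Z * W) x x' = ∑ u, bk Z x u * bk W u x' := by
  ext b b'
  simp [Matrix.mul_apply, Matrix.sum_apply, bk, Fintype.sum_prod_type]

lemma bk_conjTranspose (Z : Matrix (X × B) (X × B) ℂ) (x x' : X) :
    bk Zᴴ x x' = (bk Z x' x)ᴴ := by
  ext b b'; simp [bk]

lemma bk_psd {Z : Matrix (X × B) (X × B) ℂ} (hZ : Z.PosSemidef) (x : X) :
    (bk Z x x).PosSemidef := hZ.submatrix (fun b => (x, b))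

lemma stk_block (F : Y → Matrix K K ℂ) (ω : Matrix (Y × K) (Y × K) ℂ)
    (hω : ∀ p q : Y × K, p.1 ≠ q.1 → ω p q = 0) :
    (stk F)ᴴ * ω * stk F = ∑ y, (F y)ᴴ * bk ω y y * F y := by
  ext k k'
  simp only [Matrix.mul_apply, Matrix.sum_apply, stk, Fintype.sum_prod_type, bk,
    Matrix.conjTranspose_apply, Matrix.of_apply]
  refine Finset.sum_congr rfl fun y _ => Finset.sum_congr rfl fun j _ => ?_
  congr 1
  rw [Finset.sum_eq_single y]
  · intro u _ hu
    exact Finset.sum_eq_zero fun i _ => by rw [hω _ _ hu, mul_zero]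
  · simp

/-- The operator on the purifying side. -/
noncomputable def Xi (E : X → Matrix K K ℂ) (J : Matrix B B ℂ → Matrix K K ℂ)
    (Z : Matrix (X × B) (X × B) ℂ) : Matrix K K ℂ := ∑ x, E x * J (bk Z x x)

theorem meas_dominates (E : X → Matrix K K ℂ) (J : Matrix B B ℂ → Matrix K K ℂ)
    (F : Y → Matrix K K ℂ) (G : Matrix K C ℂ) (ω : Matrix (Y × K) (Y × K) ℂ)
    (ρB : X → Matrix B B ℂ) (σ : Matrix B B ℂ) (ρXB : Matrix (X × B) (X × B) ℂ) (k : ℝ)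
    (hρB : ∀ x, (ρB x).PosSemidef) (hσp : σ.PosSemidef)
    (hρXB : ∀ x x', bk ρXB x x' = if x = x' then ρB x else 0)
    (hE : ∀ x, (E x).PosSemidef) (hEs : ∑ x, E x = 1)
    (hJm : ∀ P Q, J (P * Q) = J P * J Q) (hJs : ∀ P, J Pᴴ = (J P)ᴴ)
    (hEJ : ∀ x P, E x * J P = J P * E x) (hFJ : ∀ y P, F y * J P = J P * F y)
    (hF : ∑ y, (F y)ᴴ * F y = 1)
    (hFE : ∀ x y, ((k : ℂ) • (1 : Matrix K K ℂ) - F y * E x * (F y)ᴴ).PosSemidef)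
    (hω : ω.PosSemidef) (hω0 : ∀ p q : Y × K, p.1 ≠ q.1 → ω p q = 0)
    (hk : 0 ≤ k)
    (hG : ∀ x P, (Gᴴ * (E x * J P) * G).trace.re = (ρB x * P).trace.re)
    (hσ : ∀ P, ∑ y, (bk ω y y * J P).trace.re = (σ * P).trace.re) :
    Dominates ((stk F * G) * (stk F * G)ᴴ) ω ρXB ((1 : Matrix X X ℂ) ⊗ₖ σ) k
      (fun Z => stk F * Xi E J Z * (stk F)ᴴ) := by
  have hV : (stk F)ᴴ * stk F = 1 := by rw [stk_isom, hF]
  set V := stk F with hVdef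
  have hXiH : ∀ Z, (Xi E J Z)ᴴ = ∑ x, E x * (J (bk Z x x))ᴴ := by
    intro Z
    rw [Xi, Matrix.conjTranspose_sum]
    refine Finset.sum_congr rfl fun x _ => ?_
    rw [Matrix.conjTranspose_mul, (hE x).1.eq, ← hJs, hEJ]
  have hσbk : ∀ x x', bk ((1 : Matrix X X ℂ) ⊗ₖ σ) x x' = if x = x' then σ else 0 := by
    intro x x'
    ext b b'
    by_cases h : x = x' <;> simp [bk, Matrix.kroneckerMap_apply, h, Matrix.one_apply]
  constructor
  · intro Z
    have e : (V * G * (V * G)ᴴ * (V * Xi E J Z * Vᴴ)).trace = (Gᴴ * Xi E J Z * G).trace := by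
      rw [Matrix.trace_mul_comm]
      have : V * Xi E J Z * Vᴴ * (V * G * (V * G)ᴴ) = V * Xi E J Z * (Vᴴ * V) * G * Gᴴ * Vᴴ := by
        rw [Matrix.conjTranspose_mul]; simp only [Matrix.mul_assoc]
      rw [this, hV, Matrix.mul_one, Matrix.trace_mul_comm]
      have : Vᴴ * (V * Xi E J Z * G * Gᴴ) = (Vᴴ * V) * (Xi E J Z * G) * Gᴴ := by
        simp only [Matrix.mul_assoc]
      rw [this, hV, Matrix.one_mul, Matrix.trace_mul_comm, ← Matrix.mul_assoc]
    rw [e, Xi, Matrix.mul_sum, Matrix.sum_mul, Matrix.trace_sum, Complex.re_sum]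
    simp only [hG]
    rw [bk_trace, Complex.re_sum]
    refine Finset.sum_congr rfl fun x _ => ?_
    rw [bk_mul]
    simp [hρXB]
  · intro Z
    have e : (V * Xi E J Z * Vᴴ * (V * G * (V * G)ᴴ) * (V * Xi E J Z * Vᴴ)ᴴ).trace =
        (Gᴴ * ((Xi E J Z)ᴴ * Xi E J Z) * G).trace := by
      have : V * Xi E J Z * Vᴴ * (V * G * (V * G)ᴴ) * (V * Xi E J Z * Vᴴ)ᴴ =
          V * Xi E J Z * (Vᴴ * V) * G * Gᴴ * (Vᴴ * V) * (Xi E J Z)ᴴ * Vᴴ := by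
        simp only [Matrix.conjTranspose_mul, Matrix.conjTranspose_conjTranspose, Matrix.mul_assoc]
      rw [this, hV, Matrix.mul_one, Matrix.mul_one, Matrix.trace_mul_comm]
      have : Vᴴ * (V * Xi E J Z * G * Gᴴ * (Xi E J Z)ᴴ) =
          (Vᴴ * V) * (Xi E J Z * G) * (Gᴴ * (Xi E J Z)ᴴ) := by
        simp only [Matrix.mul_assoc]
      rw [this, hV, Matrix.one_mul, Matrix.trace_mul_comm]
      simp only [Matrix.mul_assoc]
    try dsimp only
    rw [e]
    have s := (Complex.le_def.1 ((schwarz_psd E (fun x => J (bk Z x x)) hE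
      hEs).conjTranspose_mul_mul_same G).trace_nonneg).1
    rw [Matrix.mul_sub, Matrix.sub_mul, Matrix.trace_sub, Complex.sub_re, Matrix.mul_sum,
      Matrix.sum_mul, Matrix.trace_sum, Complex.re_sum, Complex.zero_re, sub_nonneg] at s
    refine s.trans ?_
    rw [bk_trace, Complex.re_sum]
    refine Finset.sum_le_sum fun x _ => ?_
    rw [← hJs, ← hEJ, Matrix.mul_assoc (E x), ← hJm, hG, bk_mul, Matrix.trace_sum, Complex.re_sum]
    have hb : ∀ u, bk (Z * ρXB) x u = bk Z x u * ρB u := by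
      intro u
      rw [bk_mul, Finset.sum_eq_single u]
      · simp [hρXB]
      · intro v _ hv; simp [hρXB, hv]
      · simp
    simp only [hb, bk_conjTranspose]
    refine le_trans (le_of_eq ?_) (Finset.single_le_sum (f := fun u =>
      ((bk Z x u * ρB u * (bk Z x u)ᴴ).trace.re)) (fun u _ => ?_) (Finset.mem_univ x))
    · rw [Matrix.trace_mul_comm, Matrix.mul_assoc, Matrix.trace_mul_comm, Matrix.mul_assoc]
    · exact (Complex.le_def.1 ((hρB u).mul_mul_conjTranspose_same _).trace_nonneg).1
  · intro Z
    have e : ((V * Xi E J Z * Vᴴ)ᴴ * ω * (V * Xi E J Z * Vᴴ)).trace =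
        ((Vᴴ * ω * V) * (Xi E J Z * (Xi E J Z)ᴴ)).trace := by
      have : (V * Xi E J Z * Vᴴ)ᴴ * ω * (V * Xi E J Z * Vᴴ) =
          V * ((Xi E J Z)ᴴ * (Vᴴ * ω * V) * Xi E J Z * Vᴴ) := by
        simp only [Matrix.conjTranspose_mul, Matrix.conjTranspose_conjTranspose, Matrix.mul_assoc]
      rw [this, Matrix.trace_mul_comm, Matrix.mul_assoc _ Vᴴ, hV, Matrix.mul_one, Matrix.mul_assoc,
        Matrix.trace_mul_comm]
      simp only [Matrix.mul_assoc]
    try dsimp only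
    rw [e, stk_block F ω hω0, Matrix.sum_mul, Matrix.trace_sum, Complex.re_sum]
    have step : ∀ y, ((F y)ᴴ * bk ω y y * F y * (Xi E J Z * (Xi E J Z)ᴴ)).trace.re ≤
        k * ∑ x, (bk ω y y * J (bk Z x x * (bk Z x x)ᴴ)).trace.re := by
      intro y
      have s := trace_mul_psd ((bk_psd hω y).conjTranspose_mul_mul_same (F y))
        (schwarz_psd E (fun x => (J (bk Z x x))ᴴ) hE hEs)
      rw [← hXiH, Matrix.conjTranspose_conjTranspose, Matrix.mul_sub, Matrix.trace_sub,
        Complex.sub_re, Matrix.mul_sum, Matrix.trace_sum, Complex.re_sum, sub_nonneg] at s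
      refine s.trans ?_
      rw [Finset.mul_sum]
      refine Finset.sum_le_sum fun x _ => ?_
      rw [Matrix.conjTranspose_conjTranspose]
      set P := bk Z x x with hP
      have t := trace_mul_psd (bk_psd hω y) ((hFE x y).mul_mul_conjTranspose_same (J P))
      have e1 : J P * ((k : ℂ) • (1 : Matrix K K ℂ) - F y * E x * (F y)ᴴ) * (J P)ᴴ =
          (k : ℂ) • J (P * Pᴴ) - F y * (J P * E x * (J P)ᴴ) * (F y)ᴴ := by
        rw [Matrix.mul_sub, Matrix.sub_mul, Matrix.mul_smul, Matrix.mul_one, Matrix.smul_mul,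
          hJm, hJs]
        congr 1
        have h2 : (F y)ᴴ * (J P)ᴴ = (J P)ᴴ * (F y)ᴴ := by
          rw [← Matrix.conjTranspose_mul, ← Matrix.conjTranspose_mul, hFJ]
        calc J P * (F y * E x * (F y)ᴴ) * (J P)ᴴ
            = (J P * F y) * E x * ((F y)ᴴ * (J P)ᴴ) := by simp only [Matrix.mul_assoc]
          _ = _ := by rw [h2, ← hFJ]; simp only [Matrix.mul_assoc]
      rw [e1, Matrix.mul_sub, Matrix.trace_sub, Complex.sub_re, sub_nonneg, Matrix.mul_smul,
        Matrix.trace_smul, smul_eq_mul, Complex.re_ofReal_mul] at t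
      refine le_trans (le_of_eq ?_) t
      have : bk ω y y * (F y * (J P * E x * (J P)ᴴ) * (F y)ᴴ) =
          (bk ω y y * F y * (J P * E x * (J P)ᴴ)) * (F y)ᴴ := by
        simp only [Matrix.mul_assoc]
      rw [this, Matrix.trace_mul_comm _ (F y)ᴴ]
      simp only [Matrix.mul_assoc]
    refine (Finset.sum_le_sum fun y _ => step y).trans ?_
    rw [← Finset.mul_sum, Finset.sum_comm]
    refine mul_le_mul_of_nonneg_left ?_ hk
    simp only [hσ]
    rw [bk_trace, Complex.re_sum]
    refine Finset.sum_le_sum fun x _ => ?_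
    rw [bk_mul, Matrix.trace_sum, Complex.re_sum]
    have hb : ∀ u, bk (Zᴴ * ((1 : Matrix X X ℂ) ⊗ₖ σ)) x u = (bk Z u x)ᴴ * σ := by
      intro u
      rw [bk_mul, Finset.sum_eq_single u]
      · simp [hσbk, bk_conjTranspose]
      · intro v _ hv; simp [hσbk, hv]
      · simp
    simp only [hb]
    refine le_trans (le_of_eq ?_) (Finset.single_le_sum (f := fun u =>
      (((bk Z u x)ᴴ * σ * bk Z u x).trace.re)) (fun u _ => ?_) (Finset.mem_univ x))
    · try dsimp only
      rw [Matrix.mul_assoc, Matrix.trace_mul_comm (bk Z x x)ᴴ, Matrix.mul_assoc]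
    · exact (Complex.le_def.1 (hσp.conjTranspose_mul_mul_same _).trace_nonneg).1
end Meas
/-! ### The concrete tripartite construction -/
set_option linter.unusedSectionVars false
set_option linter.unusedSimpArgs false

section Conc
variable {A B C D X Y : Type*} [Fintype A] [DecidableEq A] [Fintype B] [DecidableEq B]
  [Fintype C] [DecidableEq C] [Fintype D] [DecidableEq D]
  [Fintype X] [DecidableEq X] [Fintype Y] [DecidableEq Y]

/-- The purification viewed as a map from `C`. -/
def Gm (R : Matrix D (A × B × C) ℂ) : Matrix (A × B × D) C ℂ :=
  Matrix.of fun k c => R k.2.2 (k.1, k.2.1, c)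

/-- The purification viewed as a map from `B`. -/
def Gb (R : Matrix D (A × B × C) ℂ) : Matrix (A × C × D) B ℂ :=
  Matrix.of fun k b => R k.2.2 (k.1, b, k.2.1)

lemma Gm_entry (R : Matrix D (A × B × C) ℂ) (S : Matrix A A ℂ) (T : Matrix B B ℂ) (c c' : C) :
    ((Gm R)ᴴ * (Sᵀ ⊗ₖ (T ⊗ₖ (1 : Matrix D D ℂ))) * Gm R) c c' =
      ∑ a, ∑ b, ∑ a', ∑ b', S a' a * T b b' * (Rᴴ * R) (a, b, c) (a', b', c') := by
  have h0 : ((Gm R)ᴴ * (Sᵀ ⊗ₖ (T ⊗ₖ (1 : Matrix D D ℂ))) * Gm R) c c' =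
      ∑ a, ∑ b, ∑ d, ∑ a', ∑ b', S a' a * T b b' *
        (star (R d (a, b, c)) * R d (a', b', c')) := by
    rw [Matrix.mul_assoc]
    simp only [Matrix.mul_apply, Gm, Matrix.conjTranspose_apply, Matrix.of_apply,
      Matrix.kroneckerMap_apply, Matrix.transpose_apply, Fintype.sum_prod_type, Matrix.one_apply,
      mul_ite, mul_one, mul_zero, ite_mul, zero_mul, Finset.sum_ite_eq, Finset.mem_univ, if_true,
      Finset.mul_sum]
    refine Finset.sum_congr rfl fun a _ => Finset.sum_congr rfl fun b _ =>
      Finset.sum_congr rfl fun d _ => Finset.sum_congr rfl fun a' _ =>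
      Finset.sum_congr rfl fun b' _ => ?_
    ring
  rw [h0]
  refine Finset.sum_congr rfl fun a _ => Finset.sum_congr rfl fun b _ => ?_
  rw [Finset.sum_comm]
  refine Finset.sum_congr rfl fun a' _ => ?_
  rw [Finset.sum_comm]
  refine Finset.sum_congr rfl fun b' _ => ?_
  simp only [Matrix.mul_apply, Matrix.conjTranspose_apply, Finset.mul_sum]

lemma Gb_entry (R : Matrix D (A × B × C) ℂ) (S : Matrix A A ℂ) (b b' : B) :
    ((Gb R)ᴴ * (Sᵀ ⊗ₖ (1 : Matrix (C × D) (C × D) ℂ)) * Gb R) b b' =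
      ∑ a, ∑ c, ∑ a', S a' a * (Rᴴ * R) (a, b, c) (a', b', c) := by
  have h0 : Gb R = Gm (R.submatrix id (fun p : A × C × B => (p.1, p.2.2, p.2.1))) := rfl
  rw [h0]
  have h1 := Gm_entry (R.submatrix id (fun p : A × C × B => (p.1, p.2.2, p.2.1))) S 1 b b'
  rw [Matrix.one_kronecker_one] at h1
  rw [h1]
  refine Finset.sum_congr rfl fun a _ => Finset.sum_congr rfl fun c _ =>
    Finset.sum_congr rfl fun a' _ => ?_
  simp only [Matrix.one_apply, mul_ite, mul_one, mul_zero, ite_mul, zero_mul, Finset.sum_ite_eq,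
    Finset.mem_univ, if_true]
  rfl

lemma sum5 {α β γ δ ε : Type*} [Fintype α] [Fintype β] [Fintype γ] [Fintype δ] [Fintype ε]
    (f : α → β → γ → δ → ε → ℂ) : ∑ c, ∑ a, ∑ b, ∑ a', ∑ b', f c a b a' b' =
      ∑ b', ∑ b, ∑ a, ∑ c, ∑ a', f c a b a' b' := by
  simp only [Finset.sum_comm (s := (Finset.univ : Finset δ)) (t := (Finset.univ : Finset ε)),
    Finset.sum_comm (s := (Finset.univ : Finset γ)) (t := (Finset.univ : Finset ε)),
    Finset.sum_comm (s := (Finset.univ : Finset β)) (t := (Finset.univ : Finset ε)),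
    Finset.sum_comm (s := (Finset.univ : Finset α)) (t := (Finset.univ : Finset ε)),
    Finset.sum_comm (s := (Finset.univ : Finset β)) (t := (Finset.univ : Finset γ)),
    Finset.sum_comm (s := (Finset.univ : Finset α)) (t := (Finset.univ : Finset γ)),
    Finset.sum_comm (s := (Finset.univ : Finset α)) (t := (Finset.univ : Finset β))]

lemma trFstSnd_entry (S : Matrix A A ℂ) (ρ : Matrix (A × B × C) (A × B × C) ℂ) (c c' : C) :
    trFstSnd ((S ⊗ₖ (1 : Matrix (B × C) (B × C) ℂ)) * ρ) c c' =
      ∑ a, ∑ b, ∑ a', S a' a * ρ (a, b, c) (a', b, c') := by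
  have : trFstSnd ((S ⊗ₖ (1 : Matrix (B × C) (B × C) ℂ)) * ρ) c c' =
      ∑ a', ∑ b, ∑ a, S a' a * ρ (a, b, c) (a', b, c') := by
    simp only [trFstSnd, Matrix.of_apply, Matrix.mul_apply, Matrix.kroneckerMap_apply]
    refine Finset.sum_congr rfl fun a' _ => Finset.sum_congr rfl fun b _ => ?_
    rw [Fintype.sum_prod_type]
    refine Finset.sum_congr rfl fun a _ => ?_
    simp [Matrix.one_apply]
  rw [this]
  simp only [Finset.sum_comm (s := (Finset.univ : Finset B)) (t := (Finset.univ : Finset A))]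
  rw [Finset.sum_comm]

lemma trFstThird_entry (S : Matrix A A ℂ) (ρ : Matrix (A × B × C) (A × B × C) ℂ) (b b' : B) :
    trFstThird ((S ⊗ₖ (1 : Matrix (B × C) (B × C) ℂ)) * ρ) b b' =
      ∑ a, ∑ c, ∑ a', S a' a * ρ (a, b, c) (a', b', c) := by
  have : trFstThird ((S ⊗ₖ (1 : Matrix (B × C) (B × C) ℂ)) * ρ) b b' =
      ∑ a', ∑ c, ∑ a, S a' a * ρ (a, b, c) (a', b', c) := by
    simp only [trFstThird, Matrix.of_apply, Matrix.mul_apply, Matrix.kroneckerMap_apply]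
    refine Finset.sum_congr rfl fun a' _ => Finset.sum_congr rfl fun c _ => ?_
    rw [Fintype.sum_prod_type]
    refine Finset.sum_congr rfl fun a _ => ?_
    simp [Matrix.one_apply]
  rw [this]
  simp only [Finset.sum_comm (s := (Finset.univ : Finset C)) (t := (Finset.univ : Finset A))]
  rw [Finset.sum_comm]

lemma trFstThird_gram (R : Matrix D (A × B × C) ℂ) (S : Matrix A A ℂ) :
    trFstThird ((S ⊗ₖ (1 : Matrix (B × C) (B × C) ℂ)) * (Rᴴ * R)) =
      (Gb R)ᴴ * (Sᵀ ⊗ₖ (1 : Matrix (C × D) (C × D) ℂ)) * Gb R := by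
  ext b b'
  rw [Gb_entry, trFstThird_entry]

lemma trFstSnd_gram (R : Matrix D (A × B × C) ℂ) (S : Matrix A A ℂ) :
    trFstSnd ((S ⊗ₖ (1 : Matrix (B × C) (B × C) ℂ)) * (Rᴴ * R)) =
      (Gm R)ᴴ * (Sᵀ ⊗ₖ (1 : Matrix (B × D) (B × D) ℂ)) * Gm R := by
  ext c c'
  have h1 := Gm_entry R S 1 c c'
  rw [Matrix.one_kronecker_one] at h1
  rw [h1, trFstSnd_entry]
  refine Finset.sum_congr rfl fun a _ => Finset.sum_congr rfl fun b _ =>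
    Finset.sum_congr rfl fun a' _ => ?_
  simp [Matrix.one_apply]

/-- The conjugate representation of operators on `B`. -/
def Jm (A D : Type*) [DecidableEq A] [DecidableEq D] (P : Matrix B B ℂ) :
    Matrix (A × B × D) (A × B × D) ℂ :=
  (1 : Matrix A A ℂ) ⊗ₖ (Pᴴᵀ ⊗ₖ (1 : Matrix D D ℂ))

lemma Jm_mul (P Q : Matrix B B ℂ) : Jm A D (P * Q) = Jm A D P * Jm A D Q := by
  simp only [Jm, ← Matrix.mul_kronecker_mul, Matrix.conjTranspose_mul, Matrix.transpose_mul,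
    Matrix.mul_one]

lemma Jm_star (P : Matrix B B ℂ) : Jm A D Pᴴ = (Jm A D P)ᴴ := by
  simp only [Jm, Matrix.conjTranspose_kronecker, Matrix.conjTranspose_one]
  rfl

lemma Jm_comm (S : Matrix A A ℂ) (P : Matrix B B ℂ) :
    (S ⊗ₖ (1 : Matrix (B × D) (B × D) ℂ)) * Jm A D P = S ⊗ₖ (Pᴴᵀ ⊗ₖ (1 : Matrix D D ℂ)) ∧
    Jm A D P * (S ⊗ₖ (1 : Matrix (B × D) (B × D) ℂ)) = S ⊗ₖ (Pᴴᵀ ⊗ₖ (1 : Matrix D D ℂ)) := by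
  simp only [Jm, ← Matrix.mul_kronecker_mul, Matrix.mul_one, Matrix.one_mul, and_self]

lemma Gm_trace (R : Matrix D (A × B × C) ℂ) (S : Matrix A A ℂ) (P : Matrix B B ℂ)
    (hS : S.IsHermitian) :
    ((Gm R)ᴴ * ((Sᵀ ⊗ₖ (1 : Matrix (B × D) (B × D) ℂ)) * Jm A D P) * Gm R).trace.re =
    (trFstThird ((S ⊗ₖ (1 : Matrix (B × C) (B × C) ℂ)) * (Rᴴ * R)) * P).trace.re := by
  rw [(Jm_comm _ _).1]
  have h : (trFstThird ((S ⊗ₖ (1 : Matrix (B × C) (B × C) ℂ)) * (Rᴴ * R)) * P).trace.re =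
     ((trFstThird ((S ⊗ₖ (1 : Matrix (B × C) (B × C) ℂ)) * (Rᴴ * R)))ᴴ * P).trace.re := by
    congr 3
    rw [trFstThird_gram]
    simp only [Matrix.conjTranspose_mul, Matrix.conjTranspose_conjTranspose,
      Matrix.conjTranspose_kronecker, Matrix.conjTranspose_one, Matrix.mul_assoc]
    rw [hS.transpose.eq]
  have h2 : ∀ z : ℂ, z.re = (star z).re := fun z => by simp
  rw [h]
  refine Eq.trans ?_ (h2 _).symm
  rw [← Matrix.trace_conjTranspose]
  congr 1
  rw [Matrix.conjTranspose_mul, Matrix.conjTranspose_conjTranspose]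
  have h3 : (Pᴴ * trFstThird ((S ⊗ₖ (1 : Matrix (B × C) (B × C) ℂ)) * (Rᴴ * R))).trace =
      ∑ b', ∑ b, ∑ a, ∑ c, ∑ a', S a' a * Pᴴᵀ b b' * (Rᴴ * R) (a, b, c) (a', b', c) := by
    simp only [Matrix.trace, Matrix.diag_apply, Matrix.mul_apply (M := Pᴴ), trFstThird_entry,
      Matrix.transpose_apply, Finset.mul_sum]
    refine Finset.sum_congr rfl fun b' _ => Finset.sum_congr rfl fun b _ =>
      Finset.sum_congr rfl fun a _ => Finset.sum_congr rfl fun c _ =>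
      Finset.sum_congr rfl fun a' _ => ?_
    ring
  rw [h3, ← sum5 (fun c a b a' b' => S a' a * Pᴴᵀ b b' * (Rᴴ * R) (a, b, c) (a', b', c))]
  simp only [Matrix.trace, Matrix.diag_apply, Gm_entry]

/-- The transposed marginal. -/
def sgm (ω : Matrix (Y × A × B × D) (Y × A × B × D) ℂ) : Matrix B B ℂ :=
  ∑ y, ∑ a, ∑ d, (ω.submatrix (fun b => (y, a, b, d)) (fun b => (y, a, b, d)))ᵀ

lemma sgm_psd {ω : Matrix (Y × A × B × D) (Y × A × B × D) ℂ} (hω : ω.PosSemidef) :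
    (sgm ω).PosSemidef :=
  Matrix.posSemidef_sum _ fun y _ => Matrix.posSemidef_sum _ fun a _ =>
    Matrix.posSemidef_sum _ fun d _ => (hω.submatrix _).transpose

lemma sgm_trace (ω : Matrix (Y × A × B × D) (Y × A × B × D) ℂ) : (sgm ω).trace = ω.trace := by
  simp only [sgm, Matrix.trace_sum, Matrix.trace_transpose]
  simp only [Matrix.trace, Matrix.diag_apply, Matrix.submatrix_apply, Fintype.sum_prod_type]
  refine Finset.sum_congr rfl fun y _ => Finset.sum_congr rfl fun a _ => ?_
  rw [Finset.sum_comm]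

lemma sgm_spec {ω : Matrix (Y × A × B × D) (Y × A × B × D) ℂ} (hω : ω.IsHermitian)
    (P : Matrix B B ℂ) :
    ∑ y, (bk ω y y * Jm A D P).trace.re = (sgm ω * P).trace.re := by
  simp only [sgm, Matrix.sum_mul, Matrix.trace_sum, Complex.re_sum]
  refine Finset.sum_congr rfl fun y _ => ?_
  have h : (bk ω y y * Jm A D P).trace =
      ∑ a, ∑ d, ∑ b, ∑ b', ω (y, a, b, d) (y, a, b', d) * star (P b' b) := by
    simp only [Matrix.trace, Matrix.diag_apply, Matrix.mul_apply, bk, Jm, Matrix.of_apply,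
      Matrix.kroneckerMap_apply, Matrix.transpose_apply, Matrix.conjTranspose_apply,
      Fintype.sum_prod_type, Matrix.one_apply]
    refine Finset.sum_congr rfl fun a _ => ?_
    rw [Finset.sum_comm]
    refine Finset.sum_congr rfl fun d _ => Finset.sum_congr rfl fun b _ => ?_
    rw [Finset.sum_eq_single a (fun a' _ h => by simp [h]) (by simp)]
    refine Finset.sum_congr rfl fun b' _ => ?_
    rw [Finset.sum_eq_single d (fun a' _ h => by simp [h]) (by simp)]
    simp
  rw [h]
  simp only [Complex.re_sum]
  refine Finset.sum_congr rfl fun a _ => Finset.sum_congr rfl fun d _ => ?_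
  simp only [Matrix.trace, Matrix.diag_apply, Matrix.mul_apply, Matrix.transpose_apply,
    Matrix.submatrix_apply, Complex.re_sum]
  refine Finset.sum_congr rfl fun b _ => Finset.sum_congr rfl fun b' _ => ?_
  rw [← hω.apply (y, a, b, d)]
  simp

end Conc
/-! ### Core estimate -/
set_option linter.unusedSectionVars false
set_option linter.unusedSimpArgs false

section Core
variable {A B C X Y : Type*} [Fintype A] [DecidableEq A] [Fintype B] [DecidableEq B]
  [Fintype C] [DecidableEq C]
  [Fintype X] [DecidableEq X] [Fintype Y] [DecidableEq Y]

lemma sum_kron_one {m n Z : Type*} [Fintype m] [DecidableEq m] [Fintype n] [DecidableEq n]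
    [Fintype Z] (S : Z → Matrix m m ℂ) (hS : ∑ z, S z = 1) :
    ∑ z, S z ⊗ₖ (1 : Matrix n n ℂ) = 1 := by
  have h1 : (∑ z, S z) ⊗ₖ (1 : Matrix n n ℂ) = 1 := by rw [hS, Matrix.one_kronecker_one]
  rw [← h1]
  ext p q
  rw [Matrix.kroneckerMap_apply, Matrix.sum_apply, Matrix.sum_apply, Finset.sum_mul]
  rfl

lemma smul_sub_kron {m n : Type*} [Fintype m] [DecidableEq m] [Fintype n] [DecidableEq n]
    (k : ℂ) (S : Matrix m m ℂ) : (k • (1 : Matrix m m ℂ) - S) ⊗ₖ (1 : Matrix n n ℂ) =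
      k • (1 : Matrix (m × n) (m × n) ℂ) - S ⊗ₖ (1 : Matrix n n ℂ) := by
  have h1 : (1 : Matrix m m ℂ) ⊗ₖ (1 : Matrix n n ℂ) = 1 := Matrix.one_kronecker_one
  rw [← h1]
  ext p q
  simp only [Matrix.kroneckerMap_apply, Matrix.sub_apply, Matrix.smul_apply, smul_eq_mul]
  ring

lemma norm_psd (T : Matrix A A ℂ) (c : ℝ) (h : ‖Matrix.toEuclideanCLM (𝕜 := ℂ) T‖ ≤ c) :
    (((c ^ 2 : ℝ) : ℂ) • (1 : Matrix A A ℂ) - Tᴴ * T).PosSemidef := by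
  have hH : (((c ^ 2 : ℝ) : ℂ) • (1 : Matrix A A ℂ) - Tᴴ * T).IsHermitian := by
    unfold Matrix.IsHermitian
    simp only [Matrix.conjTranspose_sub, Matrix.conjTranspose_smul, Matrix.conjTranspose_mul,
      Matrix.conjTranspose_conjTranspose, Matrix.conjTranspose_one]
    simp
  refine Matrix.PosSemidef.of_dotProduct_mulVec_nonneg hH fun v => ?_
  have h1 := ContinuousLinearMap.le_opNorm (Matrix.toEuclideanCLM (𝕜 := ℂ) T) (WithLp.toLp 2 v)
  have h2 : ‖Matrix.toEuclideanCLM (𝕜 := ℂ) T (WithLp.toLp 2 v)‖ ≤ c * ‖WithLp.toLp 2 v‖ :=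
    h1.trans (mul_le_mul_of_nonneg_right h (norm_nonneg _))
  have h3 := pow_le_pow_left₀ (norm_nonneg _) h2 2
  have hn : ∀ w : A → ℂ, star w ⬝ᵥ w = ((‖WithLp.toLp 2 w‖ ^ 2 : ℝ) : ℂ) := by
    intro w
    rw [EuclideanSpace.norm_sq_eq]
    simp [dotProduct, Complex.conj_mul']
  have e : star v ⬝ᵥ ((((c ^ 2 : ℝ) : ℂ) • (1 : Matrix A A ℂ) - Tᴴ * T) *ᵥ v) =
      (((c * ‖WithLp.toLp 2 v‖) ^ 2 - ‖WithLp.toLp 2 (T *ᵥ v)‖ ^ 2 : ℝ) : ℂ) := by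
    rw [Matrix.sub_mulVec, dotProduct_sub, Matrix.smul_mulVec, Matrix.one_mulVec,
      dotProduct_smul, hn, ← Matrix.mulVec_mulVec, Matrix.dotProduct_mulVec,
      ← Matrix.star_mulVec, hn]
    push_cast
    simp only [smul_eq_mul]
    ring
  rw [e]
  have : Matrix.toEuclideanCLM (𝕜 := ℂ) T (WithLp.toLp 2 v) = WithLp.toLp 2 (T *ᵥ v) := by
    simp
  rw [this] at h3
  exact_mod_cast sub_nonneg.2 h3

lemma blockdiag_psd (r : X → Matrix B B ℂ) (hr : ∀ x, (r x).PosSemidef)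
    (Z : Matrix (X × B) (X × B) ℂ) (hZ : ∀ x x', bk Z x x' = if x = x' then r x else 0) :
    Z.PosSemidef := by
  have e : Z = ∑ x, Matrix.diagonal (Pi.single x (1 : ℂ)) ⊗ₖ r x := by
    ext ⟨x, b⟩ ⟨x', b'⟩
    have := congrFun (congrFun (hZ x x') b) b'
    simp only [bk, Matrix.of_apply] at this
    rw [this]
    simp only [Matrix.sum_apply, Matrix.kroneckerMap_apply, Matrix.diagonal_apply]
    by_cases h : x = x'
    · subst h
      simp [Pi.single_apply]
    · simp [h]
  rw [e]
  refine Matrix.posSemidef_sum _ fun x _ => Matrix.PosSemidef.kronecker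
    (Matrix.PosSemidef.diagonal fun u => ?_) (hr x)
  by_cases h : u = x
  · subst h; simp
  · simp [h]

/-- post-measurement state on `X B` -/
noncomputable def rXB (M : X → Matrix A A ℂ) (ρ : Matrix (A × B × C) (A × B × C) ℂ) :
    Matrix (X × B) (X × B) ℂ :=
  Matrix.of fun p p' => if p.1 = p'.1 then
    trFstThird ((M p.1 ⊗ₖ (1 : Matrix (B × C) (B × C) ℂ)) * ρ) p.2 p'.2 else 0

/-- post-measurement state on `Y C` -/
noncomputable def rYC (N : Y → Matrix A A ℂ) (ρ : Matrix (A × B × C) (A × B × C) ℂ) :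
    Matrix (Y × C) (Y × C) ℂ :=
  Matrix.of fun p p' => if p.1 = p'.1 then
    trFstSnd ((N p.1 ⊗ₖ (1 : Matrix (B × C) (B × C) ℂ)) * ρ) p.2 p'.2 else 0

lemma bk_rXB (M : X → Matrix A A ℂ) (ρ : Matrix (A × B × C) (A × B × C) ℂ) (x x' : X) :
    bk (rXB M ρ) x x' = if x = x' then
      trFstThird ((M x ⊗ₖ (1 : Matrix (B × C) (B × C) ℂ)) * ρ) else 0 := by
  ext b b'
  by_cases h : x = x' <;> simp [bk, rXB, h]

lemma bk_psd_meas {ρ : Matrix (A × B × C) (A × B × C) ℂ} (hρ : ρ.PosSemidef) {S : Matrix A A ℂ}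
    (hS : S.PosSemidef) :
    (trFstThird ((S ⊗ₖ (1 : Matrix (B × C) (B × C) ℂ)) * ρ)).PosSemidef := by
  obtain ⟨R, rfl⟩ := psd_factor hρ
  rw [trFstThird_gram]
  exact (Matrix.PosSemidef.kronecker hS.transpose Matrix.PosSemidef.one).conjTranspose_mul_mul_same _

lemma rXB_psd {ρ : Matrix (A × B × C) (A × B × C) ℂ} (hρ : ρ.PosSemidef)
    {M : X → Matrix A A ℂ} (hM : ∀ x, (M x).PosSemidef) : (rXB M ρ).PosSemidef :=
  blockdiag_psd _ (fun x => bk_psd_meas hρ (hM x)) _ (bk_rXB M ρ)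

lemma rXB_trace {ρ : Matrix (A × B × C) (A × B × C) ℂ} (hρ1 : ρ.trace = 1)
    {M : X → Matrix A A ℂ} (hMsum : ∑ x, M x = 1) : (rXB M ρ).trace = 1 := by
  rw [bk_trace]
  have h : ∀ x, (bk (rXB M ρ) x x).trace =
      ((M x ⊗ₖ (1 : Matrix (B × C) (B × C) ℂ)) * ρ).trace := by
    intro x
    rw [bk_rXB, if_pos rfl]
    simp only [Matrix.trace, Matrix.diag_apply, trFstThird, Matrix.of_apply,
      Fintype.sum_prod_type]
    rw [Finset.sum_comm]
  simp only [h]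
  rw [← Matrix.trace_sum, ← Matrix.sum_mul]
  rw [sum_kron_one M hMsum, Matrix.one_mul, hρ1]

theorem core_estimate
    (ρ : Matrix (A × B × C) (A × B × C) ℂ) (hρ : ρ.PosSemidef) (hρ1 : ρ.trace = 1)
    (M : X → Matrix A A ℂ) (N : Y → Matrix A A ℂ)
    (hM : ∀ x, (M x).PosSemidef) (hMsum : ∑ x, M x = 1)
    (hN : ∀ y, (N y).PosSemidef) (hNsum : ∑ y, N y = 1) (k : ℝ) (hk : 0 < k)
    (hkMN : ∀ x y, ((k : ℂ) • (1 : Matrix A A ℂ) -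
      mfun (fpow (1 / 2)) (N y) * M x * mfun (fpow (1 / 2)) (N y)).PosSemidef)
    {α β : ℝ} (hα : α ∈ Set.Ioo (0 : ℝ) 2) (hab : α * β = 1) :
    ∃ Q : ℝ, 0 < Q ∧ (mfun (fpow β) (mfun (fpow ((α - 1) / 2)) ((1 : Matrix Y Y ℂ) ⊗ₖ
        trFst (rYC N ρ)) * rYC N ρ * mfun (fpow ((α - 1) / 2)) ((1 : Matrix Y Y ℂ) ⊗ₖ
        trFst (rYC N ρ)))).trace.re = Q ∧
      ∃ σ : Matrix B B ℂ, σ.PosSemidef ∧ σ.trace = 1 ∧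
        (∀ v, ((1 : Matrix X X ℂ) ⊗ₖ σ) *ᵥ v = 0 → rXB M ρ *ᵥ v = 0) ∧
        (α < 1 → Q ^ α ≤ k ^ (1 - α) * (mfun (fpow α) (rXB M ρ) *
          mfun (fpow (1 - α)) ((1 : Matrix X X ℂ) ⊗ₖ σ)).trace.re) ∧
        (1 < α → k ^ (1 - α) * (mfun (fpow α) (rXB M ρ) *
          mfun (fpow (1 - α)) ((1 : Matrix X X ℂ) ⊗ₖ σ)).trace.re ≤ Q ^ α) := by
  obtain ⟨R, hR⟩ := psd_factor hρ
  set I : Matrix (B × A × B × C) (B × A × B × C) ℂ := 1 with hI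
  set E : X → Matrix (A × B × A × B × C) (A × B × A × B × C) ℂ := fun x => (M x)ᵀ ⊗ₖ I with hEd
  set F : Y → Matrix (A × B × A × B × C) (A × B × A × B × C) ℂ :=
    fun y => (mfun (fpow (1 / 2)) (N y))ᵀ ⊗ₖ I with hFd
  have hE : ∀ x, (E x).PosSemidef := fun x =>
    Matrix.PosSemidef.kronecker (hM x).transpose Matrix.PosSemidef.one
  have hMT : ∑ z, (M z)ᵀ = 1 := by rw [← Matrix.transpose_sum, hMsum, Matrix.transpose_one]
  have hNT : ∑ z, (N z)ᵀ = 1 := by rw [← Matrix.transpose_sum, hNsum, Matrix.transpose_one]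
  have hEs : ∑ x, E x = 1 := sum_kron_one _ hMT
  have hFH : ∀ y, (F y)ᴴ = F y := fun y =>
    (Matrix.PosSemidef.kronecker (mfun_psd' (hN y) (fun x hx => fpow_nonneg hx)).transpose
      Matrix.PosSemidef.one).1.eq
  have hFF : ∀ y, (F y)ᴴ * F y = (N y)ᵀ ⊗ₖ I := by
    intro y
    rw [hFH]
    simp only [hFd, ← Matrix.mul_kronecker_mul, hI, Matrix.mul_one, ← Matrix.transpose_mul,
      half_sq (hN y)]
  have hF : ∑ y, (F y)ᴴ * F y = 1 := by
    simp only [hFF]; exact sum_kron_one _ hNT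
  have hFE : ∀ x y, ((k : ℂ) • (1 : Matrix (A × B × A × B × C) (A × B × A × B × C) ℂ) -
      F y * E x * (F y)ᴴ).PosSemidef := by
    intro x y
    have := Matrix.PosSemidef.kronecker (hkMN x y).transpose
      (Matrix.PosSemidef.one (n := B × A × B × C) (R := ℂ))
    have e : (k : ℂ) • (1 : Matrix (A × B × A × B × C) (A × B × A × B × C) ℂ) -
      F y * E x * (F y)ᴴ = ((k : ℂ) • (1 : Matrix A A ℂ) -
      mfun (fpow (1 / 2)) (N y) * M x * mfun (fpow (1 / 2)) (N y))ᵀ ⊗ₖ I := by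
      rw [hFH]
      simp only [hFd, hEd, ← Matrix.mul_kronecker_mul, hI, Matrix.mul_one,
        ← Matrix.transpose_mul, Matrix.transpose_sub, Matrix.transpose_smul, Matrix.transpose_one,
        Matrix.mul_assoc]
      rw [smul_sub_kron]
    rw [e]; exact this
  set G := Gm R with hGd
  set L := stk F * G with hLd
  have hLL : Lᴴ * L = Gᴴ * G := by
    rw [hLd, Matrix.conjTranspose_mul, Matrix.mul_assoc, ← Matrix.mul_assoc (stk F)ᴴ, stk_isom, hF,
      Matrix.one_mul]
  have hYCe : ∀ y, trFstSnd ((N y ⊗ₖ (1 : Matrix (B × C) (B × C) ℂ)) * ρ) =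
      Gᴴ * ((F y)ᴴ * F y) * G := by
    intro y
    rw [hR, trFstSnd_gram, hFF]
  have hC : trFst (rYC N ρ) = Lᴴ * L := by
    have : trFst (rYC N ρ) = ∑ y, trFstSnd ((N y ⊗ₖ (1 : Matrix (B × C) (B × C) ℂ)) * ρ) := by
      ext c c'
      simp [trFst, rYC, Matrix.sum_apply]
    rw [this, hLL]
    simp only [hYCe]
    rw [← Matrix.sum_mul, ← Matrix.mul_sum, hF, Matrix.mul_one]
  have hblk : (blk L)ᴴ * blk L = rYC N ρ := by
    ext ⟨y, c⟩ ⟨y', c'⟩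
    simp only [rYC, Matrix.of_apply, Matrix.mul_apply, Matrix.conjTranspose_apply, blk,
      Fintype.sum_prod_type]
    rw [Finset.sum_eq_single y]
    · by_cases h : y = y'
      · subst h
        simp only [if_true, hYCe]
        have : Gᴴ * ((F y)ᴴ * F y) * G = (F y * G)ᴴ * (F y * G) := by
          rw [Matrix.conjTranspose_mul]; simp only [Matrix.mul_assoc]
        rw [this, Matrix.mul_apply, Fintype.sum_prod_type]
        simp only [Fintype.sum_prod_type]
        rfl
      · simp [h]
    · intro u _ hu
      simp [hu]
    · simp
  have hG : ∀ x P, (Gᴴ * (E x * Jm A (A × B × C) P) * G).trace.re =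
      (trFstThird ((M x ⊗ₖ (1 : Matrix (B × C) (B × C) ℂ)) * ρ) * P).trace.re := by
    intro x P
    rw [hR]
    exact Gm_trace R (M x) P (hM x).1
  have hJ1 : Jm A (A × B × C) (1 : Matrix B B ℂ) = 1 := by
    simp [Jm]
  have htr : (L * Lᴴ).trace.re = (rXB M ρ).trace.re := by
    rw [Matrix.trace_mul_comm, hLL, bk_trace, Complex.re_sum]
    have : Gᴴ * G = ∑ x, Gᴴ * (E x * Jm A (A × B × C) 1) * G := by
      rw [← Matrix.sum_mul, ← Matrix.mul_sum, ← Matrix.sum_mul, hEs, hJ1, Matrix.mul_one,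
        Matrix.mul_one]
    rw [this, Matrix.trace_sum, Complex.re_sum]
    refine Finset.sum_congr rfl fun x _ => ?_
    rw [hG, bk_rXB, if_pos rfl, Matrix.mul_one]
  have hL0 : L * Lᴴ ≠ 0 := by
    intro h
    rw [h, rXB_trace hρ1 hMsum] at htr
    simp at htr
  obtain ⟨Q, hQ, hQe, ω, hω, hω1, hωb, hωQ, hωk⟩ := dual_construction L hL0 hab
  refine ⟨Q, hQ, ?_, sgm ω, sgm_psd hω, (sgm_trace ω).trans hω1, ?_⟩
  · rw [hC, ← hblk]; exact hQe
  have hdom : Dominates (L * Lᴴ) ω (rXB M ρ) ((1 : Matrix X X ℂ) ⊗ₖ sgm ω) k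
      (fun Z => stk F * Xi E (Jm A (A × B × C)) Z * (stk F)ᴴ) :=
    meas_dominates E (Jm A (A × B × C)) F G ω _ (sgm ω) (rXB M ρ) k
      (fun x => bk_psd_meas hρ (hM x)) (sgm_psd hω) (bk_rXB M ρ) hE hEs Jm_mul Jm_star
      (fun x P => ((Jm_comm _ _).1.trans (Jm_comm _ _).2.symm))
      (fun x P => ((Jm_comm _ _).1.trans (Jm_comm _ _).2.symm)) hF hFE hω hωb hk.le hG
      (sgm_spec hω.1)
  have p1 := Matrix.posSemidef_self_mul_conjTranspose L
  have p2 := rXB_psd hρ hM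
  have p3 : ((1 : Matrix X X ℂ) ⊗ₖ sgm ω).PosSemidef := kron_psd (sgm_psd hω)
  refine ⟨hdom.ker p1 hω p2 hωk, fun h => ?_, fun h => ?_⟩
  · rw [← hωQ]
    exact Dominates.lt hk hdom p1 hω p2 p3 htr ⟨hα.1, h⟩
  · rw [← hωQ]
    exact Dominates.gt hk hdom p1 hω p2 p3 hωk ⟨h, hα.2⟩

end Core
/-! ### Boundedness and the overlap constant -/
set_option linter.unusedSectionVars false
set_option linter.unusedSimpArgs false

section Fin
variable {A B C X Y n : Type*} [Fintype A] [DecidableEq A] [Fintype B] [DecidableEq B]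
  [Fintype C] [DecidableEq C]
  [Fintype X] [DecidableEq X] [Fintype Y] [DecidableEq Y] [Fintype n] [DecidableEq n]

lemma eig_le_trace {τ : Matrix n n ℂ} (hτ : τ.PosSemidef) (j : n) :
    hτ.1.eigenvalues j ≤ τ.trace.re := by
  rw [hτ.1.trace_eq_sum_eigenvalues, Complex.re_sum]
  exact Finset.single_le_sum (f := fun j => ((hτ.1.eigenvalues j : ℝ) : ℂ).re)
    (fun i _ => by simpa using hτ.eigenvalues_nonneg i) (Finset.mem_univ j)

lemma trace_kron_one {σ : Matrix B B ℂ} (h1 : σ.trace = 1) :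
    ((1 : Matrix X X ℂ) ⊗ₖ σ).trace.re = (Fintype.card X : ℝ) := by
  rw [Matrix.trace_kronecker, h1, Matrix.trace_one]; simp

lemma trace_eq_ovl' {ρ τ : Matrix n n ℂ} (hρ : ρ.IsHermitian) (hτ : τ.IsHermitian) (f : ℝ → ℝ) :
    (mfun f ρ).trace.re =
      ∑ i : n × n, f (hρ.eigenvalues i.1) * Complex.normSq (ovl hρ hτ i.1 i.2) := by
  have := trace_mfun_mul hρ hτ f (fun _ => 1)
  rw [mfun_const_one hτ, Matrix.mul_one] at this
  simpa using this

lemma bound_lt {ρ τ : Matrix n n ℂ} (hρ : ρ.PosSemidef) (hτ : τ.PosSemidef) {a N : ℝ}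
    (ha : a < 1) (hN : τ.trace.re ≤ N) :
    (mfun (fpow a) ρ * mfun (fpow (1 - a)) τ).trace.re ≤
      N ^ (1 - a) * (mfun (fpow a) ρ).trace.re := by
  rw [trace_mfun_mul hρ.1 hτ.1, trace_eq_ovl' hρ.1 hτ.1, Finset.mul_sum]
  refine Finset.sum_le_sum fun i _ => ?_
  have h0 := hτ.eigenvalues_nonneg i.2
  have h1 : fpow (1 - a) (hτ.1.eigenvalues i.2) ≤ N ^ (1 - a) := by
    have := (eig_le_trace hτ i.2).trans hN
    unfold fpow
    split_ifs with h
    · exact Real.rpow_nonneg (h0.trans this) _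
    · exact Real.rpow_le_rpow h0 this (by linarith)
  have h2 : 0 ≤ fpow a (hρ.1.eigenvalues i.1) * Complex.normSq (ovl hρ.1 hτ.1 i.1 i.2) :=
    mul_nonneg (fpow_nonneg (hρ.eigenvalues_nonneg _)) (Complex.normSq_nonneg _)
  nlinarith [mul_le_mul_of_nonneg_left h1 h2]

lemma bound_gt {ρ τ : Matrix n n ℂ} (hρ : ρ.PosSemidef) (hτ : τ.PosSemidef) {a N : ℝ}
    (ha : 1 < a) (hN : τ.trace.re ≤ N) (hker : ∀ v : n → ℂ, τ *ᵥ v = 0 → ρ *ᵥ v = 0) :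
    N ^ (1 - a) * (mfun (fpow a) ρ).trace.re ≤
      (mfun (fpow a) ρ * mfun (fpow (1 - a)) τ).trace.re := by
  rw [trace_mfun_mul hρ.1 hτ.1, trace_eq_ovl' hρ.1 hτ.1, Finset.mul_sum]
  refine Finset.sum_le_sum fun i _ => ?_
  by_cases h : hτ.1.eigenvalues i.2 = 0
  · rcases ovl_zero hρ.1 hτ.1 hker i.1 i.2 h with h' | h' <;> simp [h']
  have h0 := lt_of_le_of_ne (hτ.eigenvalues_nonneg i.2) (Ne.symm h)
  have h1 : N ^ (1 - a) ≤ fpow (1 - a) (hτ.1.eigenvalues i.2) := by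
    have := (eig_le_trace hτ i.2).trans hN
    unfold fpow
    rw [if_neg h]
    exact Real.rpow_le_rpow_of_nonpos h0 this (by linarith)
  have h2 : 0 ≤ fpow a (hρ.1.eigenvalues i.1) * Complex.normSq (ovl hρ.1 hτ.1 i.1 i.2) :=
    mul_nonneg (fpow_nonneg (hρ.eigenvalues_nonneg _)) (Complex.normSq_nonneg _)
  nlinarith [mul_le_mul_of_nonneg_left h1 h2]

lemma bd_mulVec {r : X → Matrix B B ℂ} {Z : Matrix (X × B) (X × B) ℂ}
    (hZ : ∀ x x', bk Z x x' = if x = x' then r x else 0) (v : X × B → ℂ) (x : X) (b : B) :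
    (Z *ᵥ v) (x, b) = (r x *ᵥ fun b => v (x, b)) b := by
  have h : ∀ x' b', Z (x, b) (x', b') = if x = x' then r x b b' else 0 := by
    intro x' b'
    have := congrFun (congrFun (hZ x x') b) b'
    simp only [bk, Matrix.of_apply] at this
    rw [this]; split_ifs <;> rfl
  simp only [Matrix.mulVec, dotProduct, Fintype.sum_prod_type, h]
  rw [Finset.sum_eq_single x]
  · simp
  · intro u _ hu; simp [Ne.symm hu]
  · simp

lemma bk_one_kron (σ : Matrix B B ℂ) (x x' : X) :
    bk ((1 : Matrix X X ℂ) ⊗ₖ σ) x x' = if x = x' then (fun _ : X => σ) x else 0 := by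
  ext b b'
  by_cases h : x = x' <;> simp [bk, Matrix.kroneckerMap_apply, h]

lemma trFst_bd {r : X → Matrix B B ℂ} {Z : Matrix (X × B) (X × B) ℂ}
    (hZ : ∀ x x', bk Z x x' = if x = x' then r x else 0) : trFst Z = ∑ x, r x := by
  ext b b'
  simp only [trFst, Matrix.of_apply, Matrix.sum_apply]
  refine Finset.sum_congr rfl fun x _ => ?_
  have := congrFun (congrFun (hZ x x) b) b'
  simpa [bk] using this

lemma ker_up {r : X → Matrix B B ℂ} (hr : ∀ x, (r x).PosSemidef) {Z : Matrix (X × B) (X × B) ℂ}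
    (hZ : ∀ x x', bk Z x x' = if x = x' then r x else 0) (σ : Matrix B B ℂ)
    (h : LinearMap.ker σ.mulVecLin ≤ LinearMap.ker (trFst Z).mulVecLin) (v : X × B → ℂ)
    (hv : ((1 : Matrix X X ℂ) ⊗ₖ σ) *ᵥ v = 0) : Z *ᵥ v = 0 := by
  ext ⟨x, b⟩
  rw [bd_mulVec hZ]
  have h1 : σ *ᵥ (fun b => v (x, b)) = 0 := by
    ext b
    rw [← bd_mulVec (bk_one_kron (X := X) σ) v x b, hv]; rfl
  have h2 : trFst Z *ᵥ (fun b => v (x, b)) = 0 := by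
    have : (fun b => v (x, b)) ∈ LinearMap.ker σ.mulVecLin := by simpa using h1
    simpa using h this
  rw [trFst_bd hZ, Matrix.sum_mulVec] at h2
  have h3 : r x *ᵥ (fun b => v (x, b)) = 0 := by
    apply psd_mulVec_zero (hr x)
    set w := fun b => v (x, b) with hw
    have h4 : ∑ u, (star w ⬝ᵥ (r u *ᵥ w)).re = 0 := by
      rw [← Complex.re_sum, ← dotProduct_sum, h2]; simp
    rw [← h4]
    exact Finset.single_le_sum (f := fun u => (star w ⬝ᵥ (r u *ᵥ w)).re)
      (fun u _ => (Complex.le_def.1 ((hr u).dotProduct_mulVec_nonneg w)).1) (Finset.mem_univ x)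
  rw [h3]; rfl

lemma ker_down {r : X → Matrix B B ℂ} {Z : Matrix (X × B) (X × B) ℂ}
    (hZ : ∀ x x', bk Z x x' = if x = x' then r x else 0) (σ : Matrix B B ℂ)
    (h : ∀ v, ((1 : Matrix X X ℂ) ⊗ₖ σ) *ᵥ v = 0 → Z *ᵥ v = 0) :
    LinearMap.ker σ.mulVecLin ≤ LinearMap.ker (trFst Z).mulVecLin := by
  intro w hw
  have hw' : σ *ᵥ w = 0 := by simpa using hw
  have h1 := h (fun p => w p.2) (by
    ext ⟨x, b⟩
    rw [bd_mulVec (bk_one_kron (X := X) σ)]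
    exact congrFun hw' b)
  have h2 : trFst Z *ᵥ w = 0 := by
    rw [trFst_bd hZ, Matrix.sum_mulVec]
    refine Finset.sum_eq_zero fun x _ => ?_
    ext b
    rw [← bd_mulVec hZ (fun p => w p.2) x b, h1]; rfl
  simpa using h2

lemma condUp_bdd [Nonempty X] {r : X → Matrix B B ℂ} (hr : ∀ x, (r x).PosSemidef)
    {Z : Matrix (X × B) (X × B) ℂ}
    (hZ : ∀ x x', bk Z x x' = if x = x' then r x else 0) (hZ1 : Z.trace = 1) {α : ℝ}
    (hα : α ≠ 1) : BddAbove {x : ℝ | ∃ σ : Matrix B B ℂ, σ.PosSemidef ∧ σ.trace = 1 ∧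
    (1 < α → LinearMap.ker σ.mulVecLin ≤ LinearMap.ker (trFst Z).mulVecLin) ∧
    x = -renyiDiv α Z ((1 : Matrix X X ℂ) ⊗ₖ σ)} := by
  have hZp : Z.PosSemidef := blockdiag_psd r hr Z hZ
  have hZ0 : Z ≠ 0 := by rintro rfl; simp at hZ1
  have hc : (0 : ℝ) < Fintype.card X := by exact_mod_cast Fintype.card_pos
  rcases lt_or_gt_of_ne hα with ha | ha
  · refine ⟨(1 - α)⁻¹ * ((Fintype.card X : ℝ) ^ (1 - α) * (mfun (fpow α) Z).trace.re), ?_⟩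
    rintro _ ⟨σ, hσ, hσ1, -, rfl⟩
    have hp : ((1 : Matrix X X ℂ) ⊗ₖ σ).PosSemidef := kron_psd hσ
    have h1 := bound_lt hZp hp ha (trace_kron_one (X := X) hσ1).le
    have h0 := trace_mul_psd (mfun_psd' hZp (fun x hx => fpow_nonneg (t := α) hx))
      (mfun_psd' hp (fun x hx => fpow_nonneg (t := 1 - α) hx))
    have h2 := Real.log_le_self h0
    have e : -renyiDiv α Z ((1 : Matrix X X ℂ) ⊗ₖ σ) = (1 - α)⁻¹ * Real.log
      (mfun (fpow α) Z * mfun (fpow (1 - α)) ((1 : Matrix X X ℂ) ⊗ₖ σ)).trace.re := by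
      have : (α - 1)⁻¹ = - (1 - α)⁻¹ := by rw [← neg_sub, inv_neg]
      rw [renyiDiv, matRpow_eq, matRpow_eq, this, neg_mul, neg_neg]
    rw [e]
    exact mul_le_mul_of_nonneg_left (h2.trans h1) (inv_nonneg.2 (by linarith))
  · refine ⟨-((α - 1)⁻¹ * Real.log
      ((Fintype.card X : ℝ) ^ (1 - α) * (mfun (fpow α) Z).trace.re)), ?_⟩
    rintro _ ⟨σ, hσ, hσ1, hk, rfl⟩
    have hp : ((1 : Matrix X X ℂ) ⊗ₖ σ).PosSemidef := kron_psd hσ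
    have h1 := bound_gt hZp hp ha (trace_kron_one (X := X) hσ1).le (ker_up hr hZ σ (hk ha))
    have h0 : 0 < (Fintype.card X : ℝ) ^ (1 - α) * (mfun (fpow α) Z).trace.re :=
      mul_pos (Real.rpow_pos_of_pos hc _) (trace_pow_pos hZp hZ0 _)
    rw [renyiDiv, matRpow_eq, matRpow_eq]
    exact neg_le_neg (mul_le_mul_of_nonneg_left (Real.log_le_log h0 h1)
      (inv_nonneg.2 (by linarith)))

lemma norm_le_one_of_psd (T : Matrix A A ℂ) (h : ((1 : Matrix A A ℂ) - Tᴴ * T).PosSemidef) :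
    ‖Matrix.toEuclideanCLM (𝕜 := ℂ) T‖ ≤ 1 := by
  refine ContinuousLinearMap.opNorm_le_bound _ zero_le_one fun v => ?_
  rw [one_mul]
  obtain ⟨v, rfl⟩ : ∃ w : A → ℂ, v = WithLp.toLp 2 w := ⟨v.ofLp, rfl⟩
  have : Matrix.toEuclideanCLM (𝕜 := ℂ) T (WithLp.toLp 2 v) = WithLp.toLp 2 (T *ᵥ v) := by
    simp
  rw [this]
  have hn : ∀ w : A → ℂ, star w ⬝ᵥ w = ((‖WithLp.toLp 2 w‖ ^ 2 : ℝ) : ℂ) := by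
    intro w
    rw [EuclideanSpace.norm_sq_eq]
    simp [dotProduct, Complex.conj_mul']
  have h1 := h.dotProduct_mulVec_nonneg v
  rw [Matrix.sub_mulVec, dotProduct_sub, Matrix.one_mulVec, hn, ← Matrix.mulVec_mulVec,
    Matrix.dotProduct_mulVec, ← Matrix.star_mulVec, hn, ← Complex.ofReal_sub,
    Complex.zero_le_real, sub_nonneg] at h1
  exact (sq_le_sq₀ (norm_nonneg _) (norm_nonneg _)).1 h1

lemma one_sub_psd {M : X → Matrix A A ℂ} (hM : ∀ x, (M x).PosSemidef) (hs : ∑ x, M x = 1) (x : X) :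
    ((1 : Matrix A A ℂ) - M x).PosSemidef := by
  rw [← hs, ← Finset.sum_erase_eq_sub (Finset.mem_univ x)]
  exact Matrix.posSemidef_sum _ fun u _ => hM u

/-- Properties of the overlap constant. -/
lemma overlap_facts [Nonempty X] [Nonempty Y] [Nonempty A]
    (M : X → Matrix A A ℂ) (N : Y → Matrix A A ℂ)
    (hM : ∀ x, (M x).PosSemidef) (hMsum : ∑ x, M x = 1)
    (hN : ∀ y, (N y).PosSemidef) (hNsum : ∑ y, N y = 1)
    (c : ℝ)
    (hc : c = ⨆ x : X, ⨆ y : Y, ‖Matrix.toEuclideanCLM (𝕜 := ℂ)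
      (matRpow (M x) (1 / 2) * matRpow (N y) (1 / 2))‖) :
    0 < c ∧ c ≤ 1 ∧ ∀ x y, (((c ^ 2 : ℝ) : ℂ) • (1 : Matrix A A ℂ) -
      mfun (fpow (1 / 2)) (N y) * M x * mfun (fpow (1 / 2)) (N y)).PosSemidef := by
  set T : X → Y → Matrix A A ℂ := fun x y =>
    mfun (fpow (1 / 2)) (M x) * mfun (fpow (1 / 2)) (N y) with hT
  have hc' : c = ⨆ x : X, ⨆ y : Y, ‖Matrix.toEuclideanCLM (𝕜 := ℂ) (T x y)‖ := hc
  have hTT : ∀ x y, (T x y)ᴴ * T x y =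
      mfun (fpow (1 / 2)) (N y) * M x * mfun (fpow (1 / 2)) (N y) := by
    intro x y
    simp only [hT]
    rw [Matrix.conjTranspose_mul, (mfun_herm _ _).eq, (mfun_herm _ _).eq]
    conv_rhs => rw [← half_sq (hM x)]
    simp only [Matrix.mul_assoc]
  have hle : ∀ x y, ‖Matrix.toEuclideanCLM (𝕜 := ℂ) (T x y)‖ ≤ c := by
    intro x y
    rw [hc']
    refine le_trans ?_ (le_ciSup (f := fun x => ⨆ y : Y, ‖Matrix.toEuclideanCLM (𝕜 := ℂ) (T x y)‖)
      (Set.finite_range _).bddAbove x)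
    exact le_ciSup (f := fun y => ‖Matrix.toEuclideanCLM (𝕜 := ℂ) (T x y)‖)
      (Set.finite_range _).bddAbove y
  refine ⟨?_, ?_, ?_⟩
  · by_contra hneg
    have h0 : ∀ x y, M x * N y = 0 := by
      intro x y
      have h1 : T x y = 0 := by
        have : Matrix.toEuclideanCLM (𝕜 := ℂ) (T x y) = 0 :=
          norm_le_zero_iff.1 ((hle x y).trans (not_lt.1 hneg))
        simpa using this
      have h2 : M x * N y =
          mfun (fpow (1 / 2)) (M x) * T x y * mfun (fpow (1 / 2)) (N y) := by
        conv_lhs => rw [← half_sq (hM x), ← half_sq (hN y)]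
        simp only [hT, Matrix.mul_assoc]
      rw [h2, h1]; simp
    have h3 : (1 : Matrix A A ℂ) = 0 := by
      calc (1 : Matrix A A ℂ) = (∑ x, M x) * (∑ y, N y) := by rw [hMsum, hNsum, Matrix.one_mul]
        _ = 0 := by
          rw [Matrix.sum_mul]
          refine Finset.sum_eq_zero fun x _ => ?_
          rw [Matrix.mul_sum]
          exact Finset.sum_eq_zero fun y _ => h0 x y
    exact one_ne_zero h3
  · rw [hc']
    refine ciSup_le fun x => ciSup_le fun y => norm_le_one_of_psd _ ?_
    rw [hTT]
    have h1 := (one_sub_psd hM hMsum x).mul_mul_conjTranspose_same (mfun (fpow (1 / 2)) (N y))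
    have h2 := h1.add (one_sub_psd hN hNsum y)
    rw [(mfun_herm _ _).eq, Matrix.mul_sub, Matrix.sub_mul, Matrix.mul_one, half_sq (hN y)] at h2
    convert h2 using 1
    abel
  · intro x y
    rw [← hTT]
    exact norm_psd _ _ (hle x y)

end Fin
theorem uncertainty_up_sandwiched_down {A B C X Y : Type*}
    [Fintype A] [DecidableEq A] [Fintype B] [DecidableEq B] [Fintype C] [DecidableEq C]
    [Fintype X] [DecidableEq X] [Nonempty X] [Fintype Y] [DecidableEq Y] [Nonempty Y]
    (ρ : Matrix (A × B × C) (A × B × C) ℂ) (hρ : ρ.PosSemidef) (hρ1 : ρ.trace = 1)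
    (M : X → Matrix A A ℂ) (N : Y → Matrix A A ℂ)
    (hM : ∀ x, (M x).PosSemidef) (hMsum : ∑ x, M x = 1)
    (hN : ∀ y, (N y).PosSemidef) (hNsum : ∑ y, N y = 1)
    (c : ℝ)
    (hc : c = ⨆ x : X, ⨆ y : Y, ‖Matrix.toEuclideanCLM (𝕜 := ℂ)
      (matRpow (M x) (1 / 2) * matRpow (N y) (1 / 2))‖)
    (α β : ℝ) (hα : α ∈ Set.Ioo (0 : ℝ) 2) (hβ : (1 : ℝ) / 2 < β)
    (hab : α * β = 1) (hα1 : α ≠ 1) :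
    let ρXB : Matrix (X × B) (X × B) ℂ := Matrix.of fun p p' =>
      if p.1 = p'.1 then
        trFstThird ((M p.1 ⊗ₖ (1 : Matrix (B × C) (B × C) ℂ)) * ρ) p.2 p'.2 else 0;
    let ρYC : Matrix (Y × C) (Y × C) ℂ := Matrix.of fun p p' =>
      if p.1 = p'.1 then
        trFstSnd ((N p.1 ⊗ₖ (1 : Matrix (B × C) (B × C) ℂ)) * ρ) p.2 p'.2 else 0;
    condRenyiUp α ρXB +
      -(sandwichedRenyiDiv β ρYC ((1 : Matrix Y Y ℂ) ⊗ₖ trFst ρYC)) ≥ Real.log (1 / c) := by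

  intro ρXB ρYC
  have hA : Nonempty A := by
    by_contra hA
    rw [not_nonempty_iff] at hA
    simp [Matrix.trace] at hρ1
  obtain ⟨hc0, hc1, hcp⟩ := overlap_facts M N hM hMsum hN hNsum c hc
  obtain ⟨Q, hQ, hQe, σ, hσ, hσ1, hker, hlt, hgt⟩ := core_estimate ρ hρ hρ1 M N hM hMsum hN hNsum
    (c ^ 2) (by positivity) hcp hα hab
  have eXB : ρXB = rXB M ρ := rfl
  have eYC : ρYC = rYC N ρ := rfl
  rw [eXB, eYC]
  have hZ := bk_rXB (X := X) M ρ
  have hr : ∀ x, (trFstThird ((M x ⊗ₖ (1 : Matrix (B × C) (B × C) ℂ)) * ρ)).PosSemidef :=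
    fun x => bk_psd_meas hρ (hM x)
  have hZ1 := rXB_trace hρ1 hMsum
  have hup : -renyiDiv α (rXB M ρ) ((1 : Matrix X X ℂ) ⊗ₖ σ) ≤ condRenyiUp α (rXB M ρ) :=
    le_csSup (condUp_bdd hr hZ hZ1 hα1) ⟨σ, hσ, hσ1, fun _ => ker_down hZ σ hker, rfl⟩
  set P := (mfun (fpow α) (rXB M ρ) *
    mfun (fpow (1 - α)) ((1 : Matrix X X ℂ) ⊗ₖ σ)).trace.re with hP
  have eP : -renyiDiv α (rXB M ρ) ((1 : Matrix X X ℂ) ⊗ₖ σ) = -((α - 1)⁻¹ * Real.log P) := by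
    rw [renyiDiv, matRpow_eq, matRpow_eq]
  have hα0 : α ≠ 0 := hα.1.ne'
  have hβe : β = α⁻¹ := eq_inv_of_mul_eq_one_right hab
  have hexp : (1 - β) / (2 * β) = (α - 1) / 2 := by
    rw [hβe]; field_simp
  have hα1' : α - 1 ≠ 0 := sub_ne_zero.2 hα1
  have eQ : -sandwichedRenyiDiv β (rYC N ρ) ((1 : Matrix Y Y ℂ) ⊗ₖ trFst (rYC N ρ)) =
      (α - 1)⁻¹ * (α * Real.log Q) := by
    rw [sandwichedRenyiDiv, hexp, matRpow_eq, matRpow_eq, hQe]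
    have : (β - 1)⁻¹ = -((α - 1)⁻¹ * α) := by
      rw [hβe]
      have h1 : α⁻¹ - 1 = -((α - 1) / α) := by field_simp; ring
      rw [h1, inv_neg, inv_div]
      field_simp
    rw [this]; ring
  rw [eP] at hup
  rw [eQ]
  have hlc : Real.log c ≤ 0 := Real.log_nonpos hc0.le hc1
  have hk0 : (0 : ℝ) < c ^ 2 := by positivity
  have hkp : (0 : ℝ) < (c ^ 2) ^ (1 - α) := Real.rpow_pos_of_pos hk0 _
  have hQp : 0 < Q ^ α := Real.rpow_pos_of_pos hQ _
  have hlk : Real.log (c ^ 2) = 2 * Real.log c := by rw [Real.log_pow]; norm_num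
  have key : -Real.log (c ^ 2) ≤ (α - 1)⁻¹ * (α * Real.log Q - Real.log P) := by
    rcases lt_or_gt_of_ne hα1 with ha | ha
    · have h1 := hlt ha
      have hPp : 0 < P := by
        by_contra hn
        exact absurd (hQp.trans_le h1) (not_lt.2 (mul_nonpos_of_nonneg_of_nonpos hkp.le
          (not_lt.1 hn)))
      have h2 := Real.log_le_log hQp h1
      rw [Real.log_mul hkp.ne' hPp.ne', Real.log_rpow hQ, Real.log_rpow hk0] at h2
      rw [inv_mul_eq_div, le_div_iff_of_neg (by linarith)]
      linarith
    · have h1 := hgt ha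
      have hXp := rXB_psd hρ hM (X := X)
      have hZ0 : rXB M ρ ≠ 0 := by
        intro h
        rw [h] at hZ1
        simp at hZ1
      have hPp : 0 < P := by
        refine lt_of_lt_of_le ?_ (bound_gt hXp (kron_psd hσ) ha
          (trace_kron_one (X := X) hσ1).le hker)
        have hcard : (0 : ℝ) < Fintype.card X := by exact_mod_cast Fintype.card_pos
        exact mul_pos (Real.rpow_pos_of_pos hcard _) (trace_pow_pos hXp hZ0 _)
      have h2 := Real.log_le_log (mul_pos hkp hPp) h1
      rw [Real.log_mul hkp.ne' hPp.ne', Real.log_rpow hQ, Real.log_rpow hk0] at h2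
      rw [inv_mul_eq_div, le_div_iff₀ (by linarith)]
      linarith
  rw [one_div, Real.log_inv]
  rw [mul_sub] at key
  linarith
end

section
/- Ordering of the two Rényi divergences: Let ρ be a density matrix and σ a positive semidefinite matrix of the same size with ker σ ⊆ ker ρ, and let α ∈ (0,1)∪(1,∞). Then D_α(ρ‖σ) ≥ D̃_α(ρ‖σ); equivalently, tr( (σ^{(1−α)/(2α)} ρ σ^{(1−α)/(2α)})^α ) ≤ tr(ρ^α σ^{1−α}) for α > 1, and tr( (σ^{(1−α)/(2α)} ρ σ^{(1−α)/(2α)})^α ) ≥ tr(ρ^α σ^{1−α}) for α ∈ (0,1). -/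
open scoped Kronecker ComplexOrder
open Matrix

namespace RenyiAux

variable {n : Type*} [Fintype n] [DecidableEq n]

lemma spec {A : Matrix n n ℂ} (hA : A.IsHermitian) :
    ∃ U : Matrix n n ℂ, Uᴴ * U = 1 ∧ U * Uᴴ = 1 ∧
      A = U * diagonal (fun i => (hA.eigenvalues i : ℂ)) * Uᴴ := by
  refine ⟨hA.eigenvectorUnitary, ?_, ?_, ?_⟩
  · exact Unitary.coe_star_mul_self hA.eigenvectorUnitary
  · exact Unitary.coe_mul_star_self hA.eigenvectorUnitary
  · conv_lhs => rw [hA.spectral_theorem, Unitary.conjStarAlgAut_apply]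
    rfl

lemma det_le_one {C : Matrix n n ℂ} (hC : C.PosSemidef) (hC1 : (1 - C).PosSemidef) :
    C.det.re ≤ 1 := by
  obtain ⟨U, h1, h2, hU⟩ := spec hC.1
  have h := hC1.conjTranspose_mul_mul_same U
  have e : Uᴴ * (1 - C) * U = diagonal (fun i => (1 - (hC.1.eigenvalues i : ℂ))) := by
    have : Uᴴ * C * U = diagonal (fun i => (hC.1.eigenvalues i : ℂ)) := by
      conv_lhs => rw [hU]
      calc _ = (Uᴴ * U) * diagonal (fun i => (hC.1.eigenvalues i : ℂ)) * (Uᴴ * U) := by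
            simp only [Matrix.mul_assoc]
        _ = _ := by rw [h1]; simp
    rw [Matrix.mul_sub, Matrix.sub_mul, this, Matrix.mul_one, h1, ← diagonal_one, diagonal_sub]
  rw [e, posSemidef_diagonal_iff] at h
  have hle : ∀ i, hC.1.eigenvalues i ≤ 1 := by
    intro i
    have := h i
    rw [sub_nonneg] at this
    exact_mod_cast this
  rw [hC.1.det_eq_prod_eigenvalues]
  have : (∏ i, ((hC.1.eigenvalues i : ℝ) : ℂ)) = ((∏ i, hC.1.eigenvalues i : ℝ) : ℂ) := by
    push_cast; rfl
  erw [this]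
  rw [Complex.ofReal_re]
  exact Finset.prod_le_one (fun i _ => hC.eigenvalues_nonneg i) (fun i _ => hle i)

lemma det_mono {X Y : Matrix n n ℂ} (hX : X.PosSemidef) (hY : Y.PosDef)
    (h : (Y - X).PosSemidef) : X.det.re ≤ Y.det.re := by
  obtain ⟨U, h1, h2, hU⟩ := spec hY.1
  set d := hY.1.eigenvalues with hd
  have dpos : ∀ i, 0 < d i := fun i => hY.eigenvalues_pos i
  set S : Matrix n n ℂ := U * diagonal (fun i => (((Real.sqrt (d i))⁻¹ : ℝ) : ℂ)) with hS
  have hSY : Sᴴ * Y * S = 1 := by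
    rw [hU, hS, conjTranspose_mul, diagonal_conjTranspose]
    calc _ = diagonal (star fun i => (((Real.sqrt (d i))⁻¹ : ℝ) : ℂ)) * ((Uᴴ * U) *
          diagonal (fun i => (d i : ℂ)) * (Uᴴ * U)) *
            diagonal (fun i => (((Real.sqrt (d i))⁻¹ : ℝ) : ℂ)) := by
            simp only [Matrix.mul_assoc]
      _ = 1 := by
        rw [h1, Matrix.one_mul, Matrix.mul_one, diagonal_mul_diagonal, diagonal_mul_diagonal,
          ← diagonal_one]
        congr 1
        ext i
        simp only [Pi.star_apply, RCLike.star_def, Complex.conj_ofReal]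
        rw [← Complex.ofReal_mul, ← Complex.ofReal_mul, ← Complex.ofReal_one]
        congr 1
        have := Real.sqrt_pos.2 (dpos i)
        have h3 := Real.mul_self_sqrt (dpos i).le
        field_simp
        nlinarith
  have hC := hX.conjTranspose_mul_mul_same S
  have hC1 : (1 - Sᴴ * X * S).PosSemidef := by
    rw [← hSY, ← Matrix.sub_mul, ← Matrix.mul_sub]
    exact h.conjTranspose_mul_mul_same S
  have key := det_le_one hC hC1
  have hdet : ∀ Z : Matrix n n ℂ, (Sᴴ * Z * S).det = (Complex.normSq S.det : ℂ) * Z.det := by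
    intro Z
    rw [det_mul, det_mul, det_conjTranspose, Complex.normSq_eq_conj_mul_self]
    simp only [RCLike.star_def]; ring
  have hYd := hdet Y
  rw [hSY, det_one] at hYd
  rw [hdet X, Complex.re_ofReal_mul] at key
  have hYr : Complex.normSq S.det * Y.det.re = 1 := by
    rw [← Complex.re_ofReal_mul, ← hYd]; simp
  have hp : 0 < Complex.normSq S.det := by
    rcases (Complex.normSq_nonneg S.det).lt_or_eq with h | h
    · exact h
    · rw [← h] at hYr; simp at hYr
  nlinarith

/-- `R` is a contraction, `e` an indicator, `V` a coisometry. -/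
lemma det_bound {R N V : Matrix n n ℂ} {e : n → ℂ} (he : ∀ i, e i = 0 ∨ e i = 1)
    (hR : (1 - Rᴴ * R).PosSemidef) (hV : V * Vᴴ = 1)
    {Q : Matrix n n ℂ} {hh : n → ℝ} (h1 : Qᴴ * Q = 1)
    (hQ : Nᴴ * N = Q * diagonal (fun i => (hh i : ℂ)) * Qᴴ) :
    ‖(diagonal e * R * N * V * diagonal e + (1 - diagonal e)).det‖ ^ 2 ≤
      ∏ i, max (hh i) 1 := by
  have h2 : Q * Qᴴ = 1 := mul_eq_one_comm.1 h1
  set E : Matrix n n ℂ := diagonal e with hE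
  have hEE : E * E = E := by
    rw [hE, diagonal_mul_diagonal]; congr 1; ext i; rcases he i with h | h <;> simp [h]
  have hEs : Eᴴ = E := by
    rw [hE, diagonal_conjTranspose]; congr 1; ext i; rcases he i with h | h <;> simp [h]
  have hE1 : (1 - E).PosSemidef := by
    have : (1 - E) = (1 - E)ᴴ * (1 - E) := by
      rw [conjTranspose_sub, hEs, conjTranspose_one]
      simp [Matrix.mul_sub, Matrix.sub_mul, hEE]
    rw [this]; exact posSemidef_conjTranspose_mul_self _
  set G : Matrix n n ℂ := Q * diagonal (fun i => ((Real.sqrt (max (hh i) 1 - 1) : ℝ) : ℂ)) * Qᴴ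
    with hG
  have hGs : Gᴴ = G := by
    rw [hG]
    simp only [conjTranspose_mul, diagonal_conjTranspose, conjTranspose_conjTranspose,
      Matrix.mul_assoc]
    congr 3
    ext i; simp
  have hGG : 1 + G * G = Q * diagonal (fun i => ((max (hh i) 1 : ℝ) : ℂ)) * Qᴴ := by
    have : G * G = Q * diagonal (fun i => ((max (hh i) 1 - 1 : ℝ) : ℂ)) * Qᴴ := by
      calc G * G = Q * (diagonal (fun i => ((Real.sqrt (max (hh i) 1 - 1) : ℝ) : ℂ)) * (Qᴴ * Q) *
            diagonal (fun i => ((Real.sqrt (max (hh i) 1 - 1) : ℝ) : ℂ))) * Qᴴ := by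
              rw [hG]; simp only [Matrix.mul_assoc]
        _ = _ := by
          rw [h1, Matrix.mul_one, diagonal_mul_diagonal]
          congr 3
          ext i
          rw [← Complex.ofReal_mul, Real.mul_self_sqrt]
          have := le_max_right (hh i) 1
          linarith
    have h3 : (1 : Matrix n n ℂ) = Q * diagonal (fun _ => 1) * Qᴴ := by
      rw [diagonal_one, Matrix.mul_one, h2]
    rw [this]
    conv_lhs => rw [h3]
    rw [← Matrix.add_mul, ← Matrix.mul_add, diagonal_add]
    congr 3; ext i; push_cast; ring
  have hle : (1 + G * G - Nᴴ * N).PosSemidef := by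
    rw [hGG, hQ, ← Matrix.sub_mul, ← Matrix.mul_sub, diagonal_sub]
    apply PosSemidef.mul_mul_conjTranspose_same
    rw [posSemidef_diagonal_iff]
    intro i
    rw [sub_nonneg]
    exact_mod_cast le_max_left _ _
  have hdetGG : (1 + G * G).det.re = ∏ i, max (hh i) 1 := by
    rw [hGG, det_mul_right_comm, h2, Matrix.one_mul, det_diagonal, ← Complex.ofReal_prod,
      Complex.ofReal_re]
  have hGGp : (1 + G * G).PosDef := by
    apply PosDef.one.add_posSemidef
    nth_rewrite 1 [← hGs]
    exact posSemidef_conjTranspose_mul_self _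
  set M := E * R * N * V * E + (1 - E) with hM
  -- step 1
  have hMM : Mᴴ * M = E * Vᴴ * Nᴴ * Rᴴ * E * R * N * V * E + (1 - E) := by
    have e1 : Mᴴ = E * Vᴴ * Nᴴ * Rᴴ * E + (1 - E) := by
      rw [hM]
      simp only [conjTranspose_add, conjTranspose_mul, conjTranspose_sub, hEs, conjTranspose_one,
        Matrix.mul_assoc]
    have z1 : E * (1 - E) = 0 := by rw [Matrix.mul_sub, hEE, Matrix.mul_one, sub_self]
    have z2 : (1 - E) * E = 0 := by rw [Matrix.sub_mul, hEE, Matrix.one_mul, sub_self]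
    have z3 : (1 - E) * (1 - E) = 1 - E := by
      rw [Matrix.sub_mul, z1, Matrix.one_mul, sub_zero]
    rw [e1, hM, Matrix.add_mul, Matrix.mul_add, Matrix.mul_add, z3]
    have a1 : E * Vᴴ * Nᴴ * Rᴴ * E * (E * R * N * V * E) =
        E * Vᴴ * Nᴴ * Rᴴ * (E * E) * R * N * V * E := by simp only [Matrix.mul_assoc]
    have a2 : E * Vᴴ * Nᴴ * Rᴴ * E * (1 - E) = 0 := by rw [Matrix.mul_assoc, z1, Matrix.mul_zero]
    have a3 : (1 - E) * (E * R * N * V * E) = ((1 - E) * E) * (R * N * V * E) := by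
      simp only [Matrix.mul_assoc]
    rw [a1, a2, a3, z2, hEE]; simp
  set Y := 1 + (E * Vᴴ * G) * (G * V * E) with hY
  have hYpd : Y.PosDef := by
    apply PosDef.one.add_posSemidef
    have : E * Vᴴ * G = (G * V * E)ᴴ := by
      simp only [conjTranspose_mul, hEs, hGs, Matrix.mul_assoc]
    rw [this]
    exact posSemidef_conjTranspose_mul_self _
  have hYM : (Y - Mᴴ * M).PosSemidef := by
    have hEVE : E * Vᴴ * V * E = E := by
      rw [Matrix.mul_assoc E, mul_eq_one_comm.1 hV, Matrix.mul_one, hEE]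
    have b1 : Y = E * Vᴴ * (1 + G * G) * V * E + (1 - E) := by
      rw [hY, Matrix.mul_add, Matrix.add_mul, Matrix.add_mul, Matrix.mul_one, hEVE]
      simp only [Matrix.mul_assoc]; abel
    have b2 : Y - Mᴴ * M = (V * E)ᴴ * (1 + G * G - Nᴴ * N) * (V * E) +
        (N * V * E)ᴴ * (1 - Rᴴ * R) * (N * V * E) +
        (R * N * V * E)ᴴ * (1 - E) * (R * N * V * E) := by
      rw [b1, hMM]
      simp only [conjTranspose_mul, hEs, Matrix.mul_add, Matrix.add_mul, Matrix.mul_sub,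
        Matrix.sub_mul, Matrix.mul_one, Matrix.mul_assoc]
      abel
    rw [b2]
    exact ((hle.conjTranspose_mul_mul_same _).add (hR.conjTranspose_mul_mul_same _)).add
      (hE1.conjTranspose_mul_mul_same _)
  have k1 := det_mono (posSemidef_conjTranspose_mul_self M) hYpd hYM
  have k2 : Y.det = (1 + (G * V * E) * (E * Vᴴ * G)).det := by
    rw [hY, det_one_add_mul_comm]
  have k3 : (1 + (G * V * E) * (E * Vᴴ * G)).det.re ≤ (1 + G * G).det.re := by
    apply det_mono _ hGGp
    · have : (1 + G * G) - (1 + (G * V * E) * (E * Vᴴ * G)) =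
          (Vᴴ * G)ᴴ * (1 - E) * (Vᴴ * G) := by
        have c1 : (G * V * E) * (E * Vᴴ * G) = G * V * (E * E) * Vᴴ * G := by
          simp only [Matrix.mul_assoc]
        have c2 : G * G = G * (V * Vᴴ) * G := by rw [hV, Matrix.mul_one]
        rw [c1, c2, hEE]
        simp only [conjTranspose_mul, hGs, conjTranspose_conjTranspose, Matrix.mul_sub,
          Matrix.sub_mul, Matrix.mul_one, Matrix.mul_assoc]
        abel
      rw [this]
      exact hE1.conjTranspose_mul_mul_same _
    · apply PosSemidef.one.add
      have : E * Vᴴ * G = (G * V * E)ᴴ := by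
        simp only [conjTranspose_mul, hEs, hGs, Matrix.mul_assoc]
      rw [this]
      exact posSemidef_self_mul_conjTranspose _
  rw [hdetGG] at k3
  have k4 : ‖M.det‖ ^ 2 = (Mᴴ * M).det.re := by
    rw [det_mul, det_conjTranspose, RCLike.star_def, ← Complex.normSq_eq_conj_mul_self,
      Complex.ofReal_re, Complex.normSq_eq_norm_sq]
  rw [k4]
  rw [k2] at k1
  exact k1.trans k3

/-- Bounded on the closed unit strip and entire. -/
def Good (f : ℂ → ℂ) : Prop :=
  Differentiable ℂ f ∧ ∃ C : ℝ, ∀ z : ℂ, 0 ≤ z.re → z.re ≤ 1 → ‖f z‖ ≤ C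

lemma Good.const (c : ℂ) : Good (fun _ => c) :=
  ⟨differentiable_const c, ‖c‖, fun _ _ _ => le_rfl⟩

lemma Good.add {f g : ℂ → ℂ} (hf : Good f) (hg : Good g) : Good (fun z => f z + g z) := by
  obtain ⟨h1, C, hC⟩ := hf
  obtain ⟨h2, D, hD⟩ := hg
  exact ⟨h1.add h2, C + D, fun z a b => (norm_add_le _ _).trans (add_le_add (hC z a b) (hD z a b))⟩

lemma Good.mul {f g : ℂ → ℂ} (hf : Good f) (hg : Good g) : Good (fun z => f z * g z) := by
  obtain ⟨h1, C, hC⟩ := hf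
  obtain ⟨h2, D, hD⟩ := hg
  refine ⟨h1.mul h2, C * D, fun z a b => ?_⟩
  rw [norm_mul]
  exact mul_le_mul (hC z a b) (hD z a b) (norm_nonneg _) ((norm_nonneg _).trans (hC z a b))

lemma Good.sum {ι : Type*} (s : Finset ι) {f : ι → ℂ → ℂ} (hf : ∀ i, Good (f i)) :
    Good (fun z => ∑ i ∈ s, f i z) := by
  classical
  induction s using Finset.induction_on with
  | empty => simpa using Good.const 0
  | insert i s hi ih => simp only [Finset.sum_insert hi]; exact (hf i).add ih

lemma Good.prod {ι : Type*} (s : Finset ι) {f : ι → ℂ → ℂ} (hf : ∀ i, Good (f i)) :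
    Good (fun z => ∏ i ∈ s, f i z) := by
  classical
  induction s using Finset.induction_on with
  | empty => simpa using Good.const 1
  | insert i s hi ih => simp only [Finset.prod_insert hi]; exact (hf i).mul ih

/-- Matrix-valued version. -/
def GoodM (F : ℂ → Matrix n n ℂ) : Prop := ∀ i j, Good (fun z => F z i j)

lemma GoodM.const (A : Matrix n n ℂ) : GoodM (fun _ => A) := fun _ _ => Good.const _

lemma GoodM.add {F G : ℂ → Matrix n n ℂ} (hF : GoodM F) (hG : GoodM G) :
    GoodM (fun z => F z + G z) := fun i j => (hF i j).add (hG i j)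

lemma GoodM.mul {F G : ℂ → Matrix n n ℂ} (hF : GoodM F) (hG : GoodM G) :
    GoodM (fun z => F z * G z) := fun i j => by
  simp only [Matrix.mul_apply]
  exact Good.sum _ fun k => (hF i k).mul (hG k j)

lemma GoodM.det {F : ℂ → Matrix n n ℂ} (hF : GoodM F) : Good (fun z => (F z).det) := by
  simp only [Matrix.det_apply']
  exact Good.sum _ fun s => (Good.const _).mul (Good.prod _ fun i => hF _ _)

/-- Complex powers on the support. -/
noncomputable def pz (z : ℂ) (a : ℝ) : ℂ := if a = 0 then 0 else Complex.exp (z * Real.log a)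

lemma good_pz (a : ℝ) : Good (fun z => pz z a) := by
  unfold pz
  by_cases h : a = 0
  · simpa [h] using Good.const 0
  · simp only [h, if_false]
    refine ⟨by fun_prop, Real.exp |Real.log a|, fun z h0 h1 => ?_⟩
    rw [Complex.norm_exp, Real.exp_le_exp, Complex.re_mul_ofReal]
    calc z.re * Real.log a ≤ z.re * |Real.log a| :=
          mul_le_mul_of_nonneg_left (le_abs_self _) h0
      _ ≤ 1 * |Real.log a| := mul_le_mul_of_nonneg_right h1 (abs_nonneg _)
      _ = _ := one_mul _

lemma goodM_pz (a : n → ℝ) : GoodM (fun z => diagonal (fun i => pz z (a i))) := by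
  intro i j
  by_cases h : i = j
  · subst h; simpa using good_pz (a i)
  · simpa [h] using Good.const 0

lemma contr_mul {R S : Matrix n n ℂ} (hR : (1 - Rᴴ * R).PosSemidef)
    (hS : (1 - Sᴴ * S).PosSemidef) : (1 - (R * S)ᴴ * (R * S)).PosSemidef := by
  have : 1 - (R * S)ᴴ * (R * S) = Sᴴ * (1 - Rᴴ * R) * S + (1 - Sᴴ * S) := by
    simp only [conjTranspose_mul, Matrix.mul_sub, Matrix.sub_mul, Matrix.mul_one, Matrix.mul_assoc]
    abel
  rw [this]
  exact (hR.conjTranspose_mul_mul_same S).add hS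

lemma contr_unit {U : Matrix n n ℂ} (h : Uᴴ * U = 1) : (1 - Uᴴ * U).PosSemidef := by
  rw [h, sub_self]; exact PosSemidef.zero

lemma contr_diag {d : n → ℂ} (h : ∀ i, ‖d i‖ ≤ 1) :
    (1 - (diagonal d)ᴴ * diagonal d).PosSemidef := by
  rw [diagonal_conjTranspose, diagonal_mul_diagonal, ← diagonal_one, diagonal_sub,
    posSemidef_diagonal_iff]
  intro i
  rw [sub_nonneg, Pi.star_apply, RCLike.star_def, ← Complex.normSq_eq_conj_mul_self,
    Complex.normSq_eq_norm_sq]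
  have : ‖d i‖ ^ 2 ≤ 1 := pow_le_one₀ (norm_nonneg _) (h i)
  exact_mod_cast this

/-- The analytic family. -/
noncomputable def fam (U O W : Matrix n n ℂ) (a b : n → ℝ) (z : ℂ) : Matrix n n ℂ :=
  U * diagonal (fun i => pz z (a i)) * O * diagonal (fun i => pz z (b i)) * W

lemma norm_pz_zero {z : ℂ} (hz : z.re = 0) (a : ℝ) : ‖pz z a‖ ≤ 1 := by
  unfold pz
  split_ifs
  · simp
  · rw [Complex.norm_exp, Complex.re_mul_ofReal, hz]; simp

lemma pz_one_add {z : ℂ} (a : ℝ) :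
    pz z a = Complex.exp ((z - 1) * Real.log a) * pz 1 a := by
  unfold pz
  split_ifs
  · simp
  · rw [← Complex.exp_add]; ring_nf

lemma three {U O W : Matrix n n ℂ} (hU : Uᴴ * U = 1) (hO : Oᴴ * O = 1) (hW : Wᴴ * W = 1)
    (a b : n → ℝ) {t : ℝ} (ht0 : 0 < t) (ht1 : t ≤ 1)
    {P Q : Matrix n n ℂ} {μ ν : n → ℝ} (hP : Pᴴ * P = 1) (hQ : Qᴴ * Q = 1)
    (hμ : (fam U O W a b t)ᴴ * fam U O W a b t = P * diagonal (fun i => (μ i : ℂ)) * Pᴴ)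
    (hν : (fam U O W a b 1)ᴴ * fam U O W a b 1 = Q * diagonal (fun i => (ν i : ℂ)) * Qᴴ) :
    ∏ i, max (μ i) 1 ≤ (∏ i, max (ν i) 1) ^ t := by
  have hP' := mul_eq_one_comm.1 hP
  have hW' := mul_eq_one_comm.1 hW
  set N := fam U O W a b with hN
  set e : n → ℂ := fun i => if 1 < μ i then 1 else 0 with he
  have he01 : ∀ i, e i = 0 ∨ e i = 1 := by
    intro i; simp only [he]; split_ifs <;> simp
  set g : n → ℂ := fun i => if 1 < μ i then (((Real.sqrt (μ i))⁻¹ : ℝ) : ℂ) else 0 with hg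
  set S : Matrix n n ℂ := N t * P * diagonal g with hS
  have hgs : star g = g := by
    ext i; simp only [hg, Pi.star_apply]; split_ifs <;> simp
  have hNP : Pᴴ * ((N t)ᴴ * N t) * P = diagonal (fun i => (μ i : ℂ)) := by
    rw [hμ]
    calc _ = (Pᴴ * P) * diagonal (fun i => (μ i : ℂ)) * (Pᴴ * P) := by
          simp only [Matrix.mul_assoc]
      _ = _ := by rw [hP]; simp
  have hSs : Sᴴ = diagonal g * (Pᴴ * (N t)ᴴ) := by
    rw [hS, conjTranspose_mul, conjTranspose_mul, diagonal_conjTranspose, hgs]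
  have hSNP : Sᴴ * N t * P = diagonal (fun i => g i * μ i) := by
    rw [hSs]
    calc _ = diagonal g * (Pᴴ * ((N t)ᴴ * N t) * P) := by simp only [Matrix.mul_assoc]
      _ = _ := by rw [hNP, diagonal_mul_diagonal]
  have hSS : Sᴴ * S = diagonal e := by
    calc Sᴴ * S = (Sᴴ * N t * P) * diagonal g := by rw [hS]; simp only [Matrix.mul_assoc]
      _ = _ := by
        rw [hSNP, diagonal_mul_diagonal]
        congr 1; ext i
        simp only [hg, he]
        split_ifs with h
        · rw [← Complex.ofReal_mul, ← Complex.ofReal_mul, ← Complex.ofReal_one]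
          congr 1
          have h0 : 0 < μ i := by linarith
          have := Real.sqrt_pos.2 h0
          have h3 := Real.mul_self_sqrt h0.le
          field_simp
          nlinarith
        · simp
  have hSe : S * diagonal e = S := by
    rw [hS, Matrix.mul_assoc, diagonal_mul_diagonal]
    congr 2; ext i; simp only [hg, he]; split_ifs <;> simp
  have hR : (1 - Sᴴᴴ * Sᴴ).PosSemidef := by
    rw [conjTranspose_conjTranspose]
    have h1 : (S * Sᴴ) * (S * Sᴴ) = S * Sᴴ := by
      calc _ = S * (Sᴴ * S) * Sᴴ := by simp only [Matrix.mul_assoc]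
        _ = _ := by rw [hSS, hSe]
    have : 1 - S * Sᴴ = (1 - S * Sᴴ)ᴴ * (1 - S * Sᴴ) := by
      have hc : (S * Sᴴ)ᴴ = S * Sᴴ := (isHermitian_mul_conjTranspose_self S).eq
      rw [conjTranspose_sub, hc, conjTranspose_one]
      simp only [Matrix.mul_sub, Matrix.sub_mul, Matrix.one_mul, Matrix.mul_one, h1]
      abel
    rw [this]
    exact posSemidef_conjTranspose_mul_self _
  set f : ℂ → ℂ := fun z =>
    (diagonal e * Sᴴ * N z * P * diagonal e + (1 - diagonal e)).det with hf
  have hgood : Good f := by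
    apply GoodM.det
    apply GoodM.add _ (GoodM.const _)
    apply GoodM.mul _ (GoodM.const _)
    apply GoodM.mul _ (GoodM.const _)
    apply GoodM.mul (GoodM.const _)
    rw [hN]
    unfold fam
    exact (((((GoodM.const _).mul (goodM_pz a)).mul (GoodM.const _)).mul (goodM_pz b)).mul
      (GoodM.const _))
  -- left boundary
  have hl : ∀ z ∈ Complex.re ⁻¹' {(0 : ℝ)}, ‖f z‖ ≤ 1 := by
    intro z hz
    have hz0 : z.re = 0 := hz
    have := det_bound (N := (1 : Matrix n n ℂ)) (V := W * P) (Q := 1) (hh := fun _ => 1)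
      (R := Sᴴ * U * diagonal (fun i => pz z (a i)) * O * diagonal (fun i => pz z (b i))) he01
      (contr_mul (contr_mul (contr_mul (contr_mul hR (contr_unit hU))
        (contr_diag fun i => norm_pz_zero hz0 _)) (contr_unit hO))
        (contr_diag fun i => norm_pz_zero hz0 _))
      (by rw [conjTranspose_mul, Matrix.mul_assoc, ← Matrix.mul_assoc P, hP', Matrix.one_mul, hW'])
      (by simp) (by simp)
    have e1 : diagonal e * (Sᴴ * U * diagonal (fun i => pz z (a i)) * O *
        diagonal (fun i => pz z (b i))) * 1 * (W * P) * diagonal e =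
        diagonal e * Sᴴ * N z * P * diagonal e := by
      rw [hN]; unfold fam; simp only [Matrix.mul_assoc, Matrix.one_mul]
    rw [e1] at this
    have h2 : ‖f z‖ ^ 2 ≤ 1 := by simpa using this
    exact (sq_le_one_iff₀ (norm_nonneg _)).1 h2
  have hprod : 0 ≤ ∏ i, max (ν i) 1 :=
    Finset.prod_nonneg fun i _ => zero_le_one.trans (le_max_right _ _)
  have hr : ∀ z ∈ Complex.re ⁻¹' {(1 : ℝ)}, ‖f z‖ ≤ Real.sqrt (∏ i, max (ν i) 1) := by
    intro z hz
    have hz1 : z.re = 1 := hz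
    set u : ℝ → ℂ := fun x => Complex.exp ((z - 1) * Real.log x) with hu
    have hun : ∀ x, star (u x) * u x = 1 := by
      intro x
      rw [RCLike.star_def, ← Complex.normSq_eq_conj_mul_self, Complex.normSq_eq_norm_sq, hu,
        Complex.norm_exp, Complex.re_mul_ofReal]
      simp [hz1]
    have hud : ∀ c : n → ℝ, (diagonal (fun i => u (c i)))ᴴ * diagonal (fun i => u (c i)) = 1 := by
      intro c
      rw [diagonal_conjTranspose, diagonal_mul_diagonal, ← diagonal_one]
      congr 1; ext i; exact hun _
    have hud' : ∀ c : n → ℝ, diagonal (fun i => u (c i)) * (diagonal (fun i => u (c i)))ᴴ = 1 :=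
      fun c => mul_eq_one_comm.1 (hud c)
    have hUs : Uᴴᴴ * Uᴴ = 1 := by rw [conjTranspose_conjTranspose]; exact mul_eq_one_comm.1 hU
    have := det_bound (N := N 1) (V := Wᴴ * diagonal (fun i => u (b i)) * W * P)
      (R := Sᴴ * U * diagonal (fun i => u (a i)) * Uᴴ) he01
      (contr_mul (contr_mul (contr_mul hR (contr_unit hU))
        (contr_unit (hud a))) (contr_unit hUs))
      (by
        rw [← mul_eq_one_comm]
        simp only [conjTranspose_mul, conjTranspose_conjTranspose]
        calc _ = Pᴴ * (Wᴴ * ((diagonal (fun i => u (b i)))ᴴ * (W * Wᴴ) *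
              (diagonal (fun i => u (b i)))) * W) * P := by simp only [Matrix.mul_assoc]
          _ = 1 := by rw [hW', Matrix.mul_one, hud, Matrix.mul_one, hW, Matrix.mul_one, hP])
      hQ hν
    have e1 : diagonal e * (Sᴴ * U * diagonal (fun i => u (a i)) * Uᴴ) * N 1 *
        (Wᴴ * diagonal (fun i => u (b i)) * W * P) * diagonal e =
        diagonal e * Sᴴ * N z * P * diagonal e := by
      rw [hN]; unfold fam
      have ea : diagonal (fun i => pz z (a i)) =
          diagonal (fun i => u (a i)) * diagonal (fun i => pz 1 (a i)) := by
        rw [diagonal_mul_diagonal]; congr 1; ext i; exact pz_one_add _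
      have eb : diagonal (fun i => pz z (b i)) =
          diagonal (fun i => pz 1 (b i)) * diagonal (fun i => u (b i)) := by
        rw [diagonal_mul_diagonal]; congr 1; ext i; rw [mul_comm]; exact pz_one_add _
      rw [ea, eb]
      calc _ = diagonal e * (Sᴴ * U * diagonal (fun i => u (a i))) * (Uᴴ * U) *
            diagonal (fun i => pz 1 (a i)) * O * diagonal (fun i => pz 1 (b i)) * (W * Wᴴ) *
            diagonal (fun i => u (b i)) * W * P * diagonal e := by simp only [Matrix.mul_assoc]
        _ = _ := by rw [hU, hW']; simp only [Matrix.mul_assoc, Matrix.one_mul]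
    rw [e1] at this
    exact Real.le_sqrt_of_sq_le this
  have hH := Complex.HadamardThreeLines.norm_le_interp_of_mem_verticalClosedStrip₀₁' f
    (z := (t : ℂ)) (a := 1) (b := Real.sqrt (∏ i, max (ν i) 1))
    ⟨by simpa using ht0.le, by simpa using ht1⟩ hgood.1.diffContOnCl
    (by
      obtain ⟨C, hC⟩ := hgood.2
      refine ⟨C, ?_⟩
      rintro _ ⟨z, hz, rfl⟩
      exact hC z hz.1 hz.2) hl hr
  simp only [Complex.ofReal_re, Real.one_rpow, one_mul] at hH
  have hft : ‖f t‖ ^ 2 = ∏ i, max (μ i) 1 := by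
    have e2 : diagonal e * Sᴴ * N t * P * diagonal e + (1 - diagonal e) =
        diagonal (fun i => ((Real.sqrt (max (μ i) 1) : ℝ) : ℂ)) := by
      have : diagonal e * Sᴴ * N t * P * diagonal e = diagonal e * (Sᴴ * N t * P) * diagonal e := by
        simp only [Matrix.mul_assoc]
      rw [this, hSNP, diagonal_mul_diagonal, diagonal_mul_diagonal, ← diagonal_one, diagonal_sub,
        diagonal_add]
      congr 1; ext i
      simp only [he, hg]
      split_ifs with h
      · rw [max_eq_left h.le, one_mul, mul_one, sub_self, add_zero, ← Complex.ofReal_mul]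
        congr 1
        have h0 : 0 < μ i := by linarith
        have := Real.sqrt_pos.2 h0
        have h3 := Real.mul_self_sqrt h0.le
        field_simp
        nlinarith
      · rw [max_eq_right (not_lt.1 h)]; simp
    simp only [hf]
    rw [e2, det_diagonal, norm_prod, ← Finset.prod_pow]
    apply Finset.prod_congr rfl
    intro i _
    rw [Complex.norm_real, Real.norm_eq_abs, sq_abs, Real.sq_sqrt]
    exact zero_le_one.trans (le_max_right _ _)
  rw [← hft]
  calc ‖f t‖ ^ 2 ≤ (Real.sqrt (∏ i, max (ν i) 1) ^ t) ^ 2 :=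
        pow_le_pow_left₀ (norm_nonneg _) hH 2
    _ = _ := by
      rw [← Real.rpow_natCast, ← Real.rpow_mul (Real.sqrt_nonneg _), mul_comm,
        Real.rpow_mul (Real.sqrt_nonneg _), Real.rpow_natCast, Real.sq_sqrt hprod]

open intervalIntegral MeasureTheory in
lemma integral_logmax {x K : ℝ} (hx : 0 ≤ x) (hK : x ≤ K) :
    IntervalIntegrable (fun c => Real.log (max (x / c) 1)) volume 0 K ∧
      ∫ c in (0:ℝ)..K, Real.log (max (x / c) 1) = x := by
  have c1 : Set.EqOn (fun c => Real.log x - Real.log c) (fun c => Real.log (max (x / c) 1))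
      (Set.uIoc 0 x) := by
    intro c hc
    rw [Set.uIoc_of_le hx] at hc
    have hxp : 0 < x := lt_of_lt_of_le hc.1 hc.2
    simp only
    rw [max_eq_left ((one_le_div hc.1).2 hc.2), Real.log_div hxp.ne' hc.1.ne']
  have c2 : Set.EqOn (fun _ => (0 : ℝ)) (fun c => Real.log (max (x / c) 1))
      (Set.uIoc x K) := by
    intro c hc
    rw [Set.uIoc_of_le hK] at hc
    have hc0 : 0 < c := lt_of_le_of_lt hx hc.1
    simp only
    rw [max_eq_right ((div_le_one hc0).2 hc.1.le), Real.log_one]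
  have i1' : IntervalIntegrable (fun c => Real.log x - Real.log c) volume 0 x :=
    intervalIntegrable_const.sub intervalIntegrable_log'
  have i1 := i1'.congr c1
  have i2' : IntervalIntegrable (fun _ => (0 : ℝ)) volume x K := intervalIntegrable_const
  have i2 := i2'.congr c2
  refine ⟨i1.trans i2, ?_⟩
  rw [← integral_add_adjacent_intervals i1 i2]
  have v1 : ∫ c in (0:ℝ)..x, Real.log (max (x / c) 1) = ∫ c in (0:ℝ)..x, (Real.log x - Real.log c) :=
    (integral_congr_ae (Filter.Eventually.of_forall fun c hc => c1 hc)).symm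
  have v2 : ∫ c in x..K, Real.log (max (x / c) 1) = ∫ c in x..K, (0 : ℝ) :=
    (integral_congr_ae (Filter.Eventually.of_forall fun c hc => c2 hc)).symm
  rw [v1, v2, integral_sub intervalIntegrable_const intervalIntegrable_log', integral_log]
  simp

lemma weak {μ ν : n → ℝ} (hμ : ∀ i, 0 ≤ μ i) (hν : ∀ i, 0 ≤ ν i)
    (h : ∀ c : ℝ, 0 < c → ∏ i, max (μ i / c) 1 ≤ ∏ i, max (ν i / c) 1) :
    ∑ i, μ i ≤ ∑ i, ν i := by
  set K := ∑ i, (μ i + ν i) with hKd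
  have hμK : ∀ i, μ i ≤ K := fun i => by
    have := Finset.single_le_sum (f := fun i => μ i + ν i)
      (fun j _ => add_nonneg (hμ j) (hν j)) (Finset.mem_univ i)
    have := hν i
    linarith
  have hνK : ∀ i, ν i ≤ K := fun i => by
    have := Finset.single_le_sum (f := fun i => μ i + ν i)
      (fun j _ => add_nonneg (hμ j) (hν j)) (Finset.mem_univ i)
    have := hμ i
    linarith
  have hK : 0 ≤ K := Finset.sum_nonneg fun j _ => add_nonneg (hμ j) (hν j)
  have a1 : ∑ i, μ i = ∫ c in (0:ℝ)..K, ∑ i, Real.log (max (μ i / c) 1) := by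
    rw [intervalIntegral.integral_finsetSum fun i _ => (integral_logmax (hμ i) (hμK i)).1]
    exact Finset.sum_congr rfl fun i _ => (integral_logmax (hμ i) (hμK i)).2.symm
  have a2 : ∑ i, ν i = ∫ c in (0:ℝ)..K, ∑ i, Real.log (max (ν i / c) 1) := by
    rw [intervalIntegral.integral_finsetSum fun i _ => (integral_logmax (hν i) (hνK i)).1]
    exact Finset.sum_congr rfl fun i _ => (integral_logmax (hν i) (hνK i)).2.symm
  rw [a1, a2]
  have p : ∀ x : ℝ, 0 < max x 1 := fun x => lt_of_lt_of_le one_pos (le_max_right _ _)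
  have s1 : IntervalIntegrable (fun c => ∑ i, Real.log (max (μ i / c) 1)) MeasureTheory.volume 0 K := by
    have e : (fun c => ∑ i, Real.log (max (μ i / c) 1)) =
        ∑ i, fun c => Real.log (max (μ i / c) 1) := by
      ext c; simp
    rw [e]
    exact IntervalIntegrable.sum Finset.univ
      (f := fun i c => Real.log (max (μ i / c) 1)) fun i _ => (integral_logmax (hμ i) (hμK i)).1
  have s2 : IntervalIntegrable (fun c => ∑ i, Real.log (max (ν i / c) 1)) MeasureTheory.volume 0 K := by
    have e : (fun c => ∑ i, Real.log (max (ν i / c) 1)) =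
        ∑ i, fun c => Real.log (max (ν i / c) 1) := by
      ext c; simp
    rw [e]
    exact IntervalIntegrable.sum Finset.univ
      (f := fun i c => Real.log (max (ν i / c) 1)) fun i _ => (integral_logmax (hν i) (hνK i)).1
  apply intervalIntegral.integral_mono_on_of_le_Ioo hK s1 s2
  intro c hc
  rw [← Real.log_prod (fun i _ => (p _).ne'), ← Real.log_prod (fun i _ => (p _).ne')]
  exact Real.log_le_log (Finset.prod_pos fun i _ => p _) (h c hc.1)

lemma max_rpow {x c p : ℝ} (hx : 0 ≤ x) (hc : 0 < c) (hp : 0 < p) :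
    max (x ^ p / c) 1 = (max (x / c ^ (1 / p)) 1) ^ p := by
  have hc' : 0 < c ^ (1 / p) := Real.rpow_pos_of_pos hc _
  have h0 : 0 ≤ x / c ^ (1 / p) := div_nonneg hx hc'.le
  have e : (x / c ^ (1 / p)) ^ p = x ^ p / c := by
    rw [Real.div_rpow hx hc'.le, ← Real.rpow_mul hc.le, one_div_mul_cancel hp.ne', Real.rpow_one]
  rcases le_total (x / c ^ (1 / p)) 1 with h | h
  · rw [max_eq_right h, Real.one_rpow, max_eq_right]
    rw [← e]; exact Real.rpow_le_one h0 h hp.le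
  · rw [max_eq_left h, max_eq_left, e]
    rw [← e]; exact Real.one_le_rpow h hp.le

lemma pz_scale {t k a : ℝ} (hk : 0 < k) (ha : 0 ≤ a) :
    pz t (k * a) = ((k ^ t : ℝ) : ℂ) * pz t a := by
  unfold pz
  by_cases h : a = 0
  · simp [h]
  · have ha' : 0 < a := lt_of_le_of_ne ha (Ne.symm h)
    rw [if_neg (mul_pos hk ha').ne', if_neg h, Real.log_mul hk.ne' h, Real.rpow_def_of_pos hk]
    push_cast
    rw [← Complex.exp_add]; ring_nf

lemma fam_scale {U O W : Matrix n n ℂ} {a b : n → ℝ} (ha : ∀ i, 0 ≤ a i) {t k : ℝ} (hk : 0 < k) :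
    fam U O W (fun i => k * a i) b t = ((k ^ t : ℝ) : ℂ) • fam U O W a b t := by
  unfold fam
  have : diagonal (fun i => pz t (k * a i)) = ((k ^ t : ℝ) : ℂ) • diagonal (fun i => pz t (a i)) := by
    rw [← diagonal_smul]; congr 1; ext i; simp [pz_scale hk (ha i)]
  rw [this]
  simp

lemma fam_scale_spec {U O W : Matrix n n ℂ} {a b : n → ℝ} (ha : ∀ i, 0 ≤ a i) {t c : ℝ}
    (hc : 0 < c) {P : Matrix n n ℂ} {μ : n → ℝ}
    (hμ : (fam U O W a b t)ᴴ * fam U O W a b t = P * diagonal (fun i => (μ i : ℂ)) * Pᴴ) :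
    (fam U O W (fun i => c ^ (-(1/2) : ℝ) * a i) b t)ᴴ *
      fam U O W (fun i => c ^ (-(1/2) : ℝ) * a i) b t =
      P * diagonal (fun i => ((μ i / c ^ t : ℝ) : ℂ)) * Pᴴ := by
  have hk : 0 < c ^ (-(1/2) : ℝ) := Real.rpow_pos_of_pos hc _
  rw [fam_scale ha hk, conjTranspose_smul, Matrix.smul_mul, Matrix.mul_smul, hμ, smul_smul]
  have : diagonal (fun i => ((μ i / c ^ t : ℝ) : ℂ)) =
      (((c ^ t)⁻¹ : ℝ) : ℂ) • diagonal (fun i => (μ i : ℂ)) := by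
    rw [← diagonal_smul]; congr 1; ext i; simp [div_eq_inv_mul]
  rw [this, Matrix.mul_smul, Matrix.smul_mul]
  congr 1
  rw [RCLike.star_def, Complex.conj_ofReal, ← Complex.ofReal_mul]
  congr 1
  rw [← Real.rpow_mul hc.le, ← Real.rpow_add hc, ← Real.rpow_neg hc.le]
  congr 1; ring

lemma main {U O W : Matrix n n ℂ} (hU : Uᴴ * U = 1) (hO : Oᴴ * O = 1) (hW : Wᴴ * W = 1)
    {a b : n → ℝ} (ha : ∀ i, 0 ≤ a i) {t q : ℝ} (ht0 : 0 < t) (ht1 : t ≤ 1) (hq : 0 < q)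
    {P Q : Matrix n n ℂ} {μ ν : n → ℝ} (hP : Pᴴ * P = 1) (hQ : Qᴴ * Q = 1)
    (hμ0 : ∀ i, 0 ≤ μ i) (hν0 : ∀ i, 0 ≤ ν i)
    (hμ : (fam U O W a b t)ᴴ * fam U O W a b t = P * diagonal (fun i => (μ i : ℂ)) * Pᴴ)
    (hν : (fam U O W a b 1)ᴴ * fam U O W a b 1 = Q * diagonal (fun i => (ν i : ℂ)) * Qᴴ) :
    ∑ i, μ i ^ q ≤ ∑ i, ν i ^ (t * q) := by
  apply weak (fun i => Real.rpow_nonneg (hμ0 i) _) (fun i => Real.rpow_nonneg (hν0 i) _)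
  intro c hc
  have htq : 0 < t * q := mul_pos ht0 hq
  simp only [max_rpow (hμ0 _) hc hq, max_rpow (hν0 _) hc htq]
  have p : ∀ x : ℝ, 0 ≤ max x 1 := fun x => zero_le_one.trans (le_max_right _ _)
  rw [Real.finsetProd_rpow _ _ fun i _ => p _, Real.finsetProd_rpow _ _ fun i _ => p _,
    Real.rpow_mul (Finset.prod_nonneg fun i _ => p _)]
  apply Real.rpow_le_rpow (Finset.prod_nonneg fun i _ => p _) _ hq.le
  set d := c ^ (1 / (t * q)) with hd
  have hdp : 0 < d := Real.rpow_pos_of_pos hc _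
  have hdt : c ^ (1 / q) = d ^ t := by
    rw [hd, ← Real.rpow_mul hc.le]; congr 1; field_simp
  rw [hdt]
  have h1 := fam_scale_spec (t := 1) ha hdp (by simpa using hν)
  rw [Real.rpow_one] at h1
  exact three hU hO hW (fun i => d ^ (-(1/2) : ℝ) * a i) b ht0 ht1 hP hQ
    (fam_scale_spec ha hdp hμ) (by simpa using h1)

/-- scalar power on the support -/
noncomputable def rp (x t : ℝ) : ℝ := if x = 0 then 0 else x ^ t

lemma rp_nonneg {x : ℝ} (hx : 0 ≤ x) (t : ℝ) : 0 ≤ rp x t := by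
  unfold rp; split_ifs
  · exact le_rfl
  · exact Real.rpow_nonneg hx _

lemma rp_mul {x : ℝ} (hx : 0 ≤ x) (s t : ℝ) : rp x s * rp x t = rp x (s + t) := by
  unfold rp; split_ifs with h
  · simp
  · rw [Real.rpow_add (lt_of_le_of_ne hx (Ne.symm h))]

lemma pz_rp {x : ℝ} (hx : 0 ≤ x) (s t : ℝ) : pz t (rp x s) = (rp x (s * t) : ℂ) := by
  unfold pz rp
  by_cases h : x = 0
  · simp [h]
  · have hx' : 0 < x := lt_of_le_of_ne hx (Ne.symm h)
    simp only [h, if_false, (Real.rpow_pos_of_pos hx' s).ne']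
    rw [Real.log_rpow hx', Real.rpow_def_of_pos hx']
    push_cast; ring_nf

lemma matRpow_spec {A : Matrix n n ℂ} (hA : A.IsHermitian) :
    ∃ U : Matrix n n ℂ, Uᴴ * U = 1 ∧
      A = U * diagonal (fun i => (hA.eigenvalues i : ℂ)) * Uᴴ ∧
      ∀ t, matRpow A t = U * diagonal (fun i => (rp (hA.eigenvalues i) t : ℂ)) * Uᴴ := by
  refine ⟨hA.eigenvectorUnitary, ?_, ?_, ?_⟩
  · exact Unitary.coe_star_mul_self hA.eigenvectorUnitary
  · conv_lhs => rw [hA.spectral_theorem, Unitary.conjStarAlgAut_apply]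
    rfl
  · intro t
    unfold matRpow rp
    rw [dif_pos hA]; rfl

lemma matRpow_mul {A : Matrix n n ℂ} (hA : A.PosSemidef) (s t : ℝ) :
    matRpow A s * matRpow A t = matRpow A (s + t) := by
  obtain ⟨U, hU, -, h⟩ := matRpow_spec hA.1
  rw [h, h, h]
  calc _ = U * (diagonal (fun i => (rp (hA.1.eigenvalues i) s : ℂ)) * (Uᴴ * U) *
        diagonal (fun i => (rp (hA.1.eigenvalues i) t : ℂ))) * Uᴴ := by
          simp only [Matrix.mul_assoc]
    _ = _ := by
      rw [hU, Matrix.mul_one, diagonal_mul_diagonal]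
      congr 3; ext i
      rw [← Complex.ofReal_mul, rp_mul (hA.eigenvalues_nonneg i)]

lemma matRpow_one {A : Matrix n n ℂ} (hA : A.PosSemidef) : matRpow A 1 = A := by
  obtain ⟨U, hU, hs, h⟩ := matRpow_spec hA.1
  rw [h]
  conv_rhs => rw [hs]
  congr 3; ext i; unfold rp; split_ifs with h0 <;> simp [h0]

lemma matRpow_herm {A : Matrix n n ℂ} (hA : A.PosSemidef) (s : ℝ) :
    (matRpow A s)ᴴ = matRpow A s := by
  obtain ⟨U, hU, hs, h⟩ := matRpow_spec hA.1
  rw [h]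
  simp only [conjTranspose_mul, diagonal_conjTranspose, conjTranspose_conjTranspose,
      Matrix.mul_assoc]
  congr 3
  ext i; simp

lemma trace_matRpow {A : Matrix n n ℂ} (hA : A.PosSemidef) {s : ℝ} (hs : 0 < s) :
    (matRpow A s).trace.re = ∑ i, (hA.1.eigenvalues i) ^ s := by
  obtain ⟨U, hU, -, h⟩ := matRpow_spec hA.1
  rw [h, trace_mul_comm, ← Matrix.mul_assoc, hU, Matrix.one_mul, trace_diagonal, Complex.re_sum]
  apply Finset.sum_congr rfl
  intro i _
  rw [Complex.ofReal_re]; unfold rp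
  split_ifs with h0
  · rw [h0, Real.zero_rpow hs.ne']
  · rfl

lemma prod_ne_zero {ρ σ : Matrix n n ℂ} (hρ : ρ.PosSemidef) (hρ1 : ρ.trace = 1)
    (hσ : σ.PosSemidef) (hker : LinearMap.ker σ.mulVecLin ≤ LinearMap.ker ρ.mulVecLin)
    (x y : ℝ) : matRpow ρ x * matRpow σ y ≠ 0 := by
  intro h0
  have h1 : ρ * σ = 0 := by
    have : ρ * σ = matRpow ρ (1 - x) * (matRpow ρ x * matRpow σ y) * matRpow σ (1 - y) := by
      calc ρ * σ = matRpow ρ (1 - x + x) * matRpow σ (y + (1 - y)) := by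
            rw [sub_add_cancel, add_sub_cancel, matRpow_one hρ, matRpow_one hσ]
        _ = _ := by rw [← matRpow_mul hρ, ← matRpow_mul hσ]; simp only [Matrix.mul_assoc]
    rw [this, h0]; simp
  have h2 : σ * ρ = 0 := by
    have := congrArg conjTranspose h1
    rwa [conjTranspose_mul, hρ.1.eq, hσ.1.eq, conjTranspose_zero] at this
  have h3 : ρ * ρ = 0 := by
    apply Matrix.mulVec_injective.eq_iff.1
    ext v i
    have hv : ρ *ᵥ v ∈ LinearMap.ker σ.mulVecLin := by
      rw [LinearMap.mem_ker, mulVecLin_apply, mulVec_mulVec, h2, zero_mulVec]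
    have := hker hv
    rw [LinearMap.mem_ker, mulVecLin_apply, mulVec_mulVec] at this
    rw [this, zero_mulVec]
  have h4 : ρ = 0 := by
    rw [← conjTranspose_mul_self_eq_zero, hρ.1.eq, h3]
  rw [h4] at hρ1
  simp at hρ1

/-- trace of the Petz quantity as eigenvalue sum -/
lemma petz_trace {ρ σ : Matrix n n ℂ} (hρ : ρ.PosSemidef) (hσ : σ.PosSemidef) (α : ℝ) :
    (matRpow ρ α * matRpow σ (1 - α)).trace =
      ((matRpow ρ (α / 2) * matRpow σ ((1 - α) / 2))ᴴ *
        (matRpow ρ (α / 2) * matRpow σ ((1 - α) / 2))).trace := by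
  rw [conjTranspose_mul, matRpow_herm hρ, matRpow_herm hσ]
  have e1 : matRpow ρ α = matRpow ρ (α / 2) * matRpow ρ (α / 2) := by
    rw [matRpow_mul hρ, add_halves]
  have e2 : matRpow σ (1 - α) = matRpow σ ((1 - α) / 2) * matRpow σ ((1 - α) / 2) := by
    rw [matRpow_mul hσ, add_halves]
  rw [e1, e2, ← Matrix.mul_assoc, trace_mul_comm]
  simp only [Matrix.mul_assoc]

lemma sand_eq {ρ σ : Matrix n n ℂ} (hρ : ρ.PosSemidef) (hσ : σ.PosSemidef) (s : ℝ) :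
    matRpow σ s * ρ * matRpow σ s =
      (matRpow ρ (1 / 2) * matRpow σ s)ᴴ * (matRpow ρ (1 / 2) * matRpow σ s) := by
  rw [conjTranspose_mul, matRpow_herm hρ, matRpow_herm hσ]
  have e1 : ρ = matRpow ρ (1 / 2) * matRpow ρ (1 / 2) := by
    rw [matRpow_mul hρ, add_halves, matRpow_one hρ]
  conv_lhs => rw [e1]
  simp only [Matrix.mul_assoc]

/-- Generic comparison: log-majorization between two power products. -/
lemma compare {ρ σ : Matrix n n ℂ} (hρ : ρ.PosSemidef) (hσ : σ.PosSemidef) (x y : ℝ)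
    {t q : ℝ} (ht0 : 0 < t) (ht1 : t ≤ 1) (hq : 0 < q)
    {A B : Matrix n n ℂ} (hA : A.PosSemidef) (hB : B.PosSemidef)
    (hAe : A = (matRpow ρ (x * t) * matRpow σ (y * t))ᴴ * (matRpow ρ (x * t) * matRpow σ (y * t)))
    (hBe : B = (matRpow ρ x * matRpow σ y)ᴴ * (matRpow ρ x * matRpow σ y)) :
    ∑ i, hA.1.eigenvalues i ^ q ≤ ∑ i, hB.1.eigenvalues i ^ (t * q) := by
  obtain ⟨U, hU, -, hr⟩ := matRpow_spec hρ.1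
  obtain ⟨W, hW, -, hs⟩ := matRpow_spec hσ.1
  obtain ⟨P, hP, -, hPA⟩ := spec hA.1
  obtain ⟨Q, hQ, -, hQB⟩ := spec hB.1
  have hU' := mul_eq_one_comm.1 hU
  have hW' := mul_eq_one_comm.1 hW
  have hfam : ∀ u : ℝ, fam U (Uᴴ * W) Wᴴ (fun i => rp (hρ.1.eigenvalues i) x)
      (fun i => rp (hσ.1.eigenvalues i) y) u = matRpow ρ (x * u) * matRpow σ (y * u) := by
    intro u
    unfold fam
    simp only [pz_rp (hρ.eigenvalues_nonneg _), pz_rp (hσ.eigenvalues_nonneg _)]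
    rw [hr, hs]
    simp only [Matrix.mul_assoc]
  have hf1 := hfam 1
  rw [mul_one, mul_one, Complex.ofReal_one] at hf1
  refine main (U := U) (O := Uᴴ * W) (W := Wᴴ) (P := P) (Q := Q)
    (a := fun i => rp (hρ.1.eigenvalues i) x)
    (b := fun i => rp (hσ.1.eigenvalues i) y) hU ?_ ?_ ?_ ht0 ht1 hq hP hQ
    hA.eigenvalues_nonneg hB.eigenvalues_nonneg ?_ ?_
  · rw [conjTranspose_mul, conjTranspose_conjTranspose, Matrix.mul_assoc, ← Matrix.mul_assoc U,
      hU', Matrix.one_mul, hW]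
  · rw [conjTranspose_conjTranspose]; exact hW'
  · intro i; exact rp_nonneg (hρ.eigenvalues_nonneg i) _
  · rw [hfam, ← hAe]; exact hPA
  · rw [hf1, ← hBe]; exact hQB

end RenyiAux

open RenyiAux

theorem renyiDiv_ge_sandwichedRenyiDiv {n : Type*} [Fintype n] [DecidableEq n]
    (ρ σ : Matrix n n ℂ) (hρ : ρ.PosSemidef) (hρ1 : ρ.trace = 1) (hσ : σ.PosSemidef)
    (hker : LinearMap.ker σ.mulVecLin ≤ LinearMap.ker ρ.mulVecLin)
    (α : ℝ) (hα : 0 < α) (hα1 : α ≠ 1) :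
    renyiDiv α ρ σ ≥ sandwichedRenyiDiv α ρ σ ∧
      (1 < α →
        (matRpow (matRpow σ ((1 - α) / (2 * α)) * ρ * matRpow σ ((1 - α) / (2 * α))) α).trace.re ≤
          (matRpow ρ α * matRpow σ (1 - α)).trace.re) ∧
      (α < 1 →
        (matRpow (matRpow σ ((1 - α) / (2 * α)) * ρ * matRpow σ ((1 - α) / (2 * α))) α).trace.re ≥
          (matRpow ρ α * matRpow σ (1 - α)).trace.re) := by
  unfold renyiDiv sandwichedRenyiDiv
  rw [sand_eq hρ hσ, petz_trace hρ hσ]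
  have hA := posSemidef_conjTranspose_mul_self
    (matRpow ρ (1 / 2) * matRpow σ ((1 - α) / (2 * α)))
  have hB := posSemidef_conjTranspose_mul_self
    (matRpow ρ (α / 2) * matRpow σ ((1 - α) / 2))
  have n1 := prod_ne_zero hρ hρ1 hσ hker (1 / 2) ((1 - α) / (2 * α))
  have n2 := prod_ne_zero hρ hρ1 hσ hker (α / 2) ((1 - α) / 2)
  have hAe := trace_matRpow hA hα
  have hBe : ((matRpow ρ (α / 2) * matRpow σ ((1 - α) / 2))ᴴ *
      (matRpow ρ (α / 2) * matRpow σ ((1 - α) / 2))).trace.re = ∑ i, hB.1.eigenvalues i := by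
    rw [hB.1.trace_eq_sum_eigenvalues, Complex.re_sum]
    rfl
  have pA : 0 < ∑ i, hA.1.eigenvalues i ^ α := by
    rcases (Finset.sum_nonneg fun i _ =>
      Real.rpow_nonneg (hA.eigenvalues_nonneg i) α).lt_or_eq with h | h
    · exact h
    · exfalso
      have h' := (Finset.sum_eq_zero_iff_of_nonneg fun i _ =>
        Real.rpow_nonneg (hA.eigenvalues_nonneg i) α).1 h.symm
      have h2 : hA.1.eigenvalues = 0 := by
        ext i
        exact (Real.rpow_eq_zero (hA.eigenvalues_nonneg i) hα.ne').1 (h' i (Finset.mem_univ i))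
      rw [hA.1.eigenvalues_eq_zero_iff, conjTranspose_mul_self_eq_zero] at h2
      exact n1 h2
  have pB : 0 < ∑ i, hB.1.eigenvalues i := by
    rcases (Finset.sum_nonneg fun i _ => hB.eigenvalues_nonneg i).lt_or_eq with h | h
    · exact h
    · exfalso
      have h' := (Finset.sum_eq_zero_iff_of_nonneg fun i _ => hB.eigenvalues_nonneg i).1 h.symm
      have h2 : hB.1.eigenvalues = 0 := by
        ext i
        exact h' i (Finset.mem_univ i)
      rw [hB.1.eigenvalues_eq_zero_iff, conjTranspose_mul_self_eq_zero] at h2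
      exact n2 h2
  have c1 : 1 < α → ∑ i, hA.1.eigenvalues i ^ α ≤ ∑ i, hB.1.eigenvalues i := by
    intro h
    have := compare hρ hσ (α / 2) ((1 - α) / 2) (t := 1 / α) (q := α) (by positivity)
      ((div_le_one hα).2 h.le) hα hA hB
      (by
        have e1 : α / 2 * (1 / α) = 1 / 2 := by field_simp
        have e2 : (1 - α) / 2 * (1 / α) = (1 - α) / (2 * α) := by field_simp
        rw [e1, e2]) rfl
    rw [one_div_mul_cancel hα.ne'] at this
    simpa using this
  have c2 : α < 1 → ∑ i, hB.1.eigenvalues i ≤ ∑ i, hA.1.eigenvalues i ^ α := by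
    intro h
    have := compare hρ hσ (1 / 2) ((1 - α) / (2 * α)) (t := α) (q := 1) hα h.le one_pos hB hA
      (by
        have e1 : 1 / 2 * α = α / 2 := by ring
        have e2 : (1 - α) / (2 * α) * α = (1 - α) / 2 := by field_simp
        rw [e1, e2]) rfl
    simpa using this
  rw [hAe, hBe]
  refine ⟨?_, c1, c2⟩
  rcases lt_or_gt_of_ne hα1 with h | h
  · exact mul_le_mul_of_nonpos_left (Real.log_le_log pB (c2 h))
      (inv_nonpos.2 (by linarith))
  · exact mul_le_mul_of_nonneg_left (Real.log_le_log pA (c1 h))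
      (inv_nonneg.2 (by linarith))
end
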